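/- arXiv:2312.17364 — 9 statements merged into one kernel-verified Lean document; each statement's English description precedes it below -/
import Mathlib

section
/- There exists a constant c > 0 such that for every n ≥ 1 and all payoff matrices A, B ∈ ℤ^{n×n}: C₁(A,B) ≤ max(1, max_{i,j}|B_{i,j}|)^n · 2^{c·n·log n} and C₂(A,B) ≤ max(1, max_{i,j}|A_{i,j}|)^n · 2^{c·n·log n}. In particular, the game (A,B) has a Nash equilibrium with rational entries whose complexities obey these bounds. -/
/-!
A Nash equilibrium `(x, y)` is determined by best-response conditions on the two supports `I`, `J`.
For fixed `I` and `J` these conditions decouple: `x` ranges over a polytope cut out by `B` alone,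
`y` over one cut out by `A` alone, and any two points of these polytopes form an equilibrium again.
Hence, once some real equilibrium is known, `x` and `y` may be replaced by extreme points.

*Complexity of an extreme point* (`exists_rational_vertex`). Its nonzero coordinates, together with
the payoff of the opponent, are the unique solution of a linear system: the coordinates sum to `1`,
and every tight column of `B` has the common payoff. A nonsingular square subsystem has at most
`n + 1` unknowns, all of whose columns have entries bounded by `max |B i j|` except the payoff
column, with entries `0, -1`. By Cramer's rule the denominators divide its determinant, which is at
most `(n + 1)! * max |B i j| ^ n` by the Leibniz formula, and `(n + 1)! ≤ 2 ^ (8 n log n)` for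
`n ≥ 2`. For `n = 1` the only strategy has complexity `1`.

*Existence of a real equilibrium* (`exists_real_equilibrium`). Adding constants makes `A` and `B`
positive; normalizing the two halves of a symmetric equilibrium of the block matrix
`[[0, A], [Bᵀ, 0]]` gives an equilibrium of `(A, B)`. A symmetric equilibrium of a square matrix
`M` is a point `z` of the simplex whose support lies in the argmax of `M z`
(`exists_symmetric_equilibrium`). It comes from a Sperner-type lemma of Scarf (`scarf`), proved by
double counting: colour each point `t` of a fine grid on the simplex by an index maximizing `M t`,
and add one vertex at infinity for each index. The lemma provides a cluster of nearby grid points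
such that each index is either the colour of a point in it, or a coordinate that nearly vanishes
on it (`grid_cell`). Refining the grid and using compactness gives `z`.
-/

noncomputable section

/-- `x` is a mixed strategy: nonnegative entries summing to 1. -/
def IsMixed {n : ℕ} (x : Fin n → ℝ) : Prop :=
  (∀ i, 0 ≤ x i) ∧ (∑ i, x i = 1)

/-- Expected payoff `xᵀ M y`. -/
def payoff {n : ℕ} (M : Matrix (Fin n) (Fin n) ℤ) (x y : Fin n → ℝ) : ℝ :=
  ∑ i, ∑ j, x i * (M i j : ℝ) * y j

/-- `(x, y)` is a Nash equilibrium of the bimatrix game `(A, B)`. -/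
def IsNash {n : ℕ} (A B : Matrix (Fin n) (Fin n) ℤ) (x y : Fin n → ℝ) : Prop :=
  IsMixed x ∧ IsMixed y ∧
    (∀ x', IsMixed x' → payoff A x' y ≤ payoff A x y) ∧
    (∀ y', IsMixed y' → payoff B x y' ≤ payoff B x y)

/-- The real mixed strategy corresponding to a rational one. -/
def ratStrat {n : ℕ} (x : Fin n → ℚ) : Fin n → ℝ := fun i => (x i : ℝ)

/-- The complexity `C(x)` of a rational mixed strategy: writing
`x = (p₁/q, …, pₙ/q)` with `gcd(p₁, …, pₙ) = 1`, the value `q` is the lcm of the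
denominators of the reduced fractions `x i`. -/
def Cx {n : ℕ} (x : Fin n → ℚ) : ℕ := Finset.univ.lcm fun i => (x i).den

/-- `C₁(A,B)`: minimum complexity of player 1's strategy over rational Nash equilibria. -/
def C1 {n : ℕ} (A B : Matrix (Fin n) (Fin n) ℤ) : ℕ :=
  sInf {q | ∃ x y : Fin n → ℚ, IsNash A B (ratStrat x) (ratStrat y) ∧ Cx x = q}

/-- `C₂(A,B)`: minimum complexity of player 2's strategy over rational Nash equilibria. -/
def C2 {n : ℕ} (A B : Matrix (Fin n) (Fin n) ℤ) : ℕ :=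
  sInf {q | ∃ x y : Fin n → ℚ, IsNash A B (ratStrat x) (ratStrat y) ∧ Cx y = q}


/-! ### Scarf's combinatorial lemma -/

/-- `S` is dominant for the family of orders on `V` given by the ranks `r i`: no element of `V`
lies, in every order `i`, strictly above the `i`-least element of `S`. -/
def Dom {V I : Type*} (r : I → V → ℕ) (S : Finset V) : Prop :=
  ∀ y, ∃ i, ∀ x ∈ S, r i y ≤ r i x

section
variable {V I : Type*} [Fintype V] [DecidableEq V] [Fintype I] [DecidableEq I]

omit [Fintype V] [DecidableEq V] [Fintype I] [DecidableEq I] in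
lemma Dom.mono {r : I → V → ℕ} {S T : Finset V} (h : Dom r T) (hST : S ⊆ T) : Dom r S :=
  fun y => (h y).imp fun _ hi x hx => hi x (hST hx)

omit [DecidableEq V] in
lemma exists_max_of {p : V → Prop} (f : V → ℕ) (h : ∃ v, p v) :
    ∃ v, p v ∧ ∀ y, p y → f y ≤ f v := by
  classical
  obtain ⟨w, hw⟩ := h
  obtain ⟨v, hv, hmax⟩ := Finset.exists_max_image (Finset.univ.filter p) f ⟨w, by simpa using hw⟩
  exact ⟨v, by simpa using hv, fun y hy => hmax y (by simpa using hy)⟩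

open Classical in
/-- A dominant set `S` with one element fewer than there are indices, not made of slack vertices
`s j` only, extends to a dominant set with as many elements as indices in exactly two ways.
Exactly one pair `i ≠ j` of orders has the same least element in `S`; an extension chooses which of
`i` and `j` gets the new element as its least one, and the new element is then forced. -/
lemma card_exchange_eq_two (r : I → V → ℕ) (hr : ∀ i, Function.Injective (r i)) (s : I → V)
    (hs : ∀ i j, j ≠ i → ∀ v, v ∉ Set.range s → r i v < r i (s j))
    (S : Finset V) (hS : Dom r S) (hcard : S.card + 1 = Fintype.card I)
    (x₀ : V) (hx₀ : x₀ ∈ S) (hx₀s : x₀ ∉ Set.range s) :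
    (Finset.univ.filter fun v => v ∉ S ∧ Dom r (insert v S)).card = 2 := by
  have hm : ∀ l, ∃ x ∈ S, ∀ y ∈ S, r l x ≤ r l y := fun l =>
    Finset.exists_min_image S (r l) ⟨x₀, hx₀⟩
  choose m hmS hmin using hm
  have hsurj : ∀ x ∈ S, ∃ l, m l = x := fun x hx => by
    obtain ⟨l, hl⟩ := hS x
    exact ⟨l, hr l (le_antisymm (hmin l x hx) (hl _ (hmS l)))⟩
  obtain ⟨i, -, j, -, hij, hmij⟩ := Finset.exists_ne_map_eq_of_card_lt_of_maps_to
    (s := (Finset.univ : Finset I)) (t := S) (f := m) (by simp; omega) (fun l _ => hmS l)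
  have hinj : ∀ k, (∀ x ∈ S, ∃ l, l ≠ k ∧ m l = x) →
      ∀ a b, a ≠ k → b ≠ k → m a = m b → a = b := by
    intro k hk a b ha hb hab
    have himg : (Finset.univ.erase k).image m = S := by
      ext x
      simp only [Finset.mem_image, Finset.mem_erase, Finset.mem_univ, and_true]
      exact ⟨fun ⟨l, _, h⟩ => h ▸ hmS l, fun h => hk x h⟩
    have : Set.InjOn m (Finset.univ.erase k : Finset I) := by
      apply Finset.injOn_of_card_image_eq
      rw [himg, Finset.card_erase_of_mem (Finset.mem_univ _), Finset.card_univ]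
      omega
    exact this (by simpa using ha) (by simpa using hb) hab
  have hsi : ∀ x ∈ S, ∃ l, l ≠ i ∧ m l = x := fun x hx => by
    obtain ⟨l, hl⟩ := hsurj x hx
    by_cases h : l = i
    · exact ⟨j, hij.symm, by rw [← hmij, ← h, hl]⟩
    · exact ⟨l, h, hl⟩
  have hsj : ∀ x ∈ S, ∃ l, l ≠ j ∧ m l = x := fun x hx => by
    obtain ⟨l, hl⟩ := hsurj x hx
    by_cases h : l = j
    · exact ⟨i, hij, by rw [hmij, ← h, hl]⟩
    · exact ⟨l, h, hl⟩
  -- `v k` is the only candidate for a new element that becomes least in the order `k`; the slack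
  -- vertex `s k` shows that the set over which it is the maximum is nonempty
  have hmax : ∀ k, ∃ v, (∀ l, l ≠ k → r l (m l) < r l v) ∧
      ∀ y, (∀ l, l ≠ k → r l (m l) < r l y) → r k y ≤ r k v := fun k =>
    exists_max_of (r k) ⟨s k, fun l hl =>
      (hmin l x₀ hx₀).trans_lt (hs l k (Ne.symm hl) x₀ hx₀s)⟩
  choose v hv hvmax using hmax
  have hnot : ∀ k, (∀ x ∈ S, ∃ l, l ≠ k ∧ m l = x) → v k ∉ S := by
    intro k hk hmem
    obtain ⟨l, hl, hlx⟩ := hk _ hmem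
    have := hv k l hl
    rw [hlx] at this
    exact lt_irrefl _ this
  have hdom : ∀ k, Dom r (insert (v k) S) := by
    intro k y
    by_cases h : ∀ l, l ≠ k → r l (m l) < r l y
    · refine ⟨k, ?_⟩
      obtain ⟨l, hl⟩ := hS y
      have hlk : l = k := by
        by_contra hne
        exact absurd (hl _ (hmS l)) (not_le.2 (h l hne))
      subst hlk
      intro x hx
      rcases Finset.mem_insert.1 hx with rfl | hx
      · exact hvmax l y h
      · exact hl x hx
    · push Not at h
      obtain ⟨l, hl, hly⟩ := h
      refine ⟨l, fun x hx => ?_⟩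
      rcases Finset.mem_insert.1 hx with rfl | hx
      · exact hly.trans (hv k l hl).le
      · exact hly.trans (hmin l x hx)
  have hvij : v i ≠ v j := by
    intro h
    obtain ⟨l, hl⟩ := hS (v i)
    by_cases hli : l = i
    · subst hli
      have := hv j l hij
      rw [← h] at this
      exact absurd (hl _ (hmS l)) (not_le.2 this)
    · exact absurd (hl _ (hmS l)) (not_le.2 (hv i l hli))
  have huniq : ∀ w, w ∉ S → Dom r (insert w S) → w = v i ∨ w = v j := by
    intro w hw hd
    obtain ⟨k, hk⟩ := hd w
    have hlt : ∀ x ∈ S, r k w < r k x := fun x hx =>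
      lt_of_le_of_ne (hk x (Finset.mem_insert_of_mem hx)) fun h => hw (hr k h ▸ hx)
    have hL : ∀ x ∈ S, ∃ l, l ≠ k ∧ m l = x ∧ r l x < r l w := by
      intro x hx
      obtain ⟨l, hl⟩ := hd x
      have h1 : r l x ≤ r l w := hl _ (Finset.mem_insert_self _ _)
      refine ⟨l, ?_, hr l (le_antisymm (hmin l x hx) (hl _ (Finset.mem_insert_of_mem (hmS l)))),
        lt_of_le_of_ne h1 fun h => hw (hr l h ▸ hx)⟩
      rintro rfl
      exact absurd (hlt x hx) (not_lt.2 h1)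
    have hkinj := hinj k fun x hx => by
      obtain ⟨l, h1, h2, -⟩ := hL x hx
      exact ⟨l, h1, h2⟩
    have hkij : k = i ∨ k = j := by
      by_contra! h
      exact hij (hkinj i j (Ne.symm h.1) (Ne.symm h.2) hmij)
    have h1 : ∀ l, l ≠ k → r l (m l) < r l w := by
      intro l hl
      obtain ⟨l', h1, h2, h3⟩ := hL _ (hmS l)
      rwa [hkinj l' l h1 hl h2] at h3
    have h2 : ∀ y, (∀ l, l ≠ k → r l (m l) < r l y) → r k y ≤ r k w := by
      intro y hy
      obtain ⟨l, hl⟩ := hd y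
      have hlk : l = k := by
        by_contra hne
        exact absurd (hl _ (Finset.mem_insert_of_mem (hmS l))) (not_le.2 (hy l hne))
      exact hlk ▸ hl w (Finset.mem_insert_self _ _)
    have hwk : w = v k := hr k (le_antisymm (hvmax k w h1) (h2 _ (hv k)))
    rcases hkij with rfl | rfl
    · exact Or.inl hwk
    · exact Or.inr hwk
  rw [Finset.card_eq_two]
  refine ⟨v i, v j, hvij, ?_⟩
  ext w
  simp only [Finset.mem_filter, Finset.mem_univ, true_and, Finset.mem_insert,
    Finset.mem_singleton]
  constructor
  · rintro ⟨h1, h2⟩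
    exact huniq w h1 h2
  · rintro (rfl | rfl)
    · exact ⟨hnot i hsi, hdom i⟩
    · exact ⟨hnot j hsj, hdom j⟩

open Classical in
/-- The boundary case: the set of all slack vertices but one extends to a dominant set in exactly
one way, by the `i₀`-greatest vertex that is not slack. -/
lemma card_exchange_eq_one (r : I → V → ℕ) (hr : ∀ i, Function.Injective (r i)) (s : I → V)
    (hs₀ : ∀ i v, r i (s i) ≤ r i v)
    (hs : ∀ i j, j ≠ i → ∀ v, v ∉ Set.range s → r i v < r i (s j))
    (hne : ∃ v, v ∉ Set.range s) (i₀ : I) (S : Finset V)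
    (hS : ∀ x, x ∈ S ↔ ∃ j, j ≠ i₀ ∧ s j = x) :
    (Finset.univ.filter fun v => v ∉ S ∧ Dom r (insert v S)).card = 1 := by
  obtain ⟨v, hv, hvmax⟩ := exists_max_of (r i₀) hne
  have key : ∀ i y, y ∉ Set.range s → ¬ r i y ≤ r i (s i) := fun i y hy h =>
    hy ⟨i, hr i (le_antisymm (hs₀ i y) h)⟩
  rw [Finset.card_eq_one]
  refine ⟨v, ?_⟩
  ext w
  simp only [Finset.mem_filter, Finset.mem_univ, true_and, Finset.mem_singleton]
  constructor
  · rintro ⟨hw, hd⟩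
    have hlast : ∀ y, y ∉ Set.range s → r i₀ y ≤ r i₀ w := by
      intro y hy
      obtain ⟨i, hi⟩ := hd y
      have : i = i₀ := by
        by_contra h
        exact key i y hy (hi _ (Finset.mem_insert_of_mem ((hS _).2 ⟨i, h, rfl⟩)))
      exact this ▸ hi w (Finset.mem_insert_self _ _)
    have hws : w ∉ Set.range s := by
      rintro ⟨j, rfl⟩
      by_cases hj : j = i₀
      · exact key i₀ v hv (hj ▸ hlast v hv)
      · exact hw ((hS _).2 ⟨j, hj, rfl⟩)
    exact hr i₀ (le_antisymm (hvmax w hws) (hlast v hv))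
  · rintro rfl
    refine ⟨fun h => ?_, fun y => ?_⟩
    · obtain ⟨j, -, hj⟩ := (hS _).1 h
      exact hv ⟨j, hj⟩
    · by_cases hy : y ∈ Set.range s
      · obtain ⟨i, rfl⟩ := hy
        exact ⟨i, fun x _ => hs₀ i x⟩
      · refine ⟨i₀, fun x hx => ?_⟩
        rcases Finset.mem_insert.1 hx with rfl | hx
        · exact hvmax y hy
        · obtain ⟨j, hj, rfl⟩ := (hS _).1 hx
          exact (hs i₀ j hj y hy).le

omit [Fintype V] in
open Classical in
/-- A set with as many elements as there are colours that misses some colour has either zero or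
two facets whose set of colours is everything but `i₀`. -/
lemma even_card_doors (c : V → I) (i₀ : I) (R : Finset V) (hR : R.card = Fintype.card I)
    (hc : R.image c ≠ Finset.univ) :
    Even (R.filter fun x => (R.erase x).image c = Finset.univ.erase i₀).card := by
  rcases Finset.eq_empty_or_nonempty
    (R.filter fun x => (R.erase x).image c = Finset.univ.erase i₀) with h | ⟨x, hx⟩
  · simp [h]
  obtain ⟨hxR, hximg⟩ := Finset.mem_filter.1 hx
  have hinj : Set.InjOn c (R.erase x : Finset V) := by
    apply Finset.injOn_of_card_image_eq
    rw [hximg, Finset.card_erase_of_mem (Finset.mem_univ _), Finset.card_erase_of_mem hxR,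
      Finset.card_univ, hR]
  have hRi : R.image c = insert (c x) (Finset.univ.erase i₀) := by
    rw [← hximg, ← Finset.image_insert, Finset.insert_erase hxR]
  have hcx : c x ≠ i₀ := by
    intro h
    apply hc
    rw [hRi, h, Finset.insert_erase (Finset.mem_univ _)]
  obtain ⟨x', hx', hcx'⟩ : ∃ x' ∈ R.erase x, c x' = c x := by
    have : c x ∈ (R.erase x).image c := by rw [hximg]; simpa using hcx
    simpa using Finset.mem_image.1 this
  have hne : x' ≠ x := (Finset.mem_erase.1 hx').1
  have hx'R : x' ∈ R := (Finset.mem_erase.1 hx').2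
  have : (R.filter fun x => (R.erase x).image c = Finset.univ.erase i₀) = {x, x'} := by
    ext z
    simp only [Finset.mem_filter, Finset.mem_insert, Finset.mem_singleton]
    constructor
    · rintro ⟨hz, hzi⟩
      by_contra! h
      have hzc : c z ∈ (R.erase x).image c :=
        Finset.mem_image_of_mem _ (Finset.mem_erase.2 ⟨h.1, hz⟩)
      rw [hximg, ← hzi] at hzc
      obtain ⟨w, hw, hwz⟩ := Finset.mem_image.1 hzc
      obtain ⟨hwz', hwR⟩ := Finset.mem_erase.1 hw
      have hzx : z ∈ (R.erase x : Finset V) := Finset.mem_erase.2 ⟨h.1, hz⟩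
      by_cases hwx : w = x
      · subst hwx
        exact h.2 (hinj hzx hx' (hwz.symm.trans hcx'.symm))
      · exact hwz' (hinj (Finset.mem_coe.2 (Finset.mem_erase.2 ⟨hwx, hwR⟩)) hzx hwz)
    · rintro (rfl | rfl)
      · exact ⟨hxR, hximg⟩
      · refine ⟨hx'R, ?_⟩
        rw [← hximg]
        ext k
        simp only [Finset.mem_image, Finset.mem_erase]
        constructor
        · rintro ⟨w, ⟨hw, hwR⟩, rfl⟩
          by_cases hwx : w = x
          · exact ⟨z, ⟨hne, hx'R⟩, by rw [hwx, hcx']⟩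
          · exact ⟨w, ⟨hwx, hwR⟩, rfl⟩
        · rintro ⟨w, ⟨hw, hwR⟩, rfl⟩
          by_cases hwx : w = z
          · exact ⟨x, ⟨hne.symm, hxR⟩, by rw [hwx, hcx']⟩
          · exact ⟨w, ⟨hwx, hwR⟩, rfl⟩
  rw [this, Finset.card_pair hne.symm]
  exact even_two

/-- Scarf's lemma. Each index `i` has a slack vertex `s i` of colour `i`, least in the order `i` and
above all non-slack vertices in the other orders. Then some dominant set carries all colours.
Otherwise, count pairs (dominant set with `card I` elements, element whose removal leaves exactly
the colours other than `i₀`): grouped by the set, the number is even, whereas grouped by the facet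
it is odd, the image of `{j | j ≠ i₀}` under `s` being the only one with a single extension. -/
theorem scarf [Nonempty I] (r : I → V → ℕ) (hr : ∀ i, Function.Injective (r i)) (s : I → V)
    (hs₀ : ∀ i v, r i (s i) ≤ r i v)
    (hs : ∀ i j, j ≠ i → ∀ v, v ∉ Set.range s → r i v < r i (s j))
    (hne : ∃ v, v ∉ Set.range s) (c : V → I) (hcs : ∀ i, c (s i) = i) :
    ∃ S : Finset V, Dom r S ∧ ∀ i, ∃ x ∈ S, c x = i := by
  classical
  by_contra hcon
  have hnc : ∀ R : Finset V, Dom r R → R.image c ≠ Finset.univ := by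
    intro R hR h
    refine hcon ⟨R, hR, fun i => ?_⟩
    have : i ∈ R.image c := h ▸ Finset.mem_univ i
    simpa using this
  have hsinj : Function.Injective s := fun a b h => by rw [← hcs a, h, hcs]
  obtain ⟨i₀⟩ := ‹Nonempty I›
  set Rooms : Finset (Finset V) :=
    Finset.univ.filter fun R => R.card = Fintype.card I ∧ Dom r R with hRooms
  set Doors : Finset (Finset V) :=
    Finset.univ.filter fun S => S.card + 1 = Fintype.card I ∧ Dom r S ∧
      S.image c = Finset.univ.erase i₀ with hDoors
  set A := Rooms.sigma fun R => R.filter fun x => (R.erase x).image c = Finset.univ.erase i₀ with hA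
  set B := Doors.sigma fun S => Finset.univ.filter fun v => v ∉ S ∧ Dom r (insert v S) with hB
  have hAB : A.card = B.card := by
    refine Finset.card_bij' (fun p _ => ⟨p.1.erase p.2, p.2⟩) (fun p _ => ⟨insert p.2 p.1, p.2⟩)
      ?_ ?_ ?_ ?_
    · rintro ⟨R, x⟩ h
      simp only [hA, hRooms, hB, hDoors, Finset.mem_sigma, Finset.mem_filter, Finset.mem_univ,
        true_and] at h ⊢
      obtain ⟨⟨h1, h2⟩, h3, h4⟩ := h
      refine ⟨⟨?_, h2.mono (Finset.erase_subset _ _), h4⟩, by simp, ?_⟩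
      · rw [Finset.card_erase_add_one h3, h1]
      · rwa [Finset.insert_erase h3]
    · rintro ⟨S, v⟩ h
      simp only [hA, hRooms, hB, hDoors, Finset.mem_sigma, Finset.mem_filter, Finset.mem_univ,
        true_and] at h ⊢
      obtain ⟨⟨h1, h2, h3⟩, h4, h5⟩ := h
      refine ⟨⟨?_, h5⟩, by simp, ?_⟩
      · rw [Finset.card_insert_of_notMem h4, h1]
      · rwa [Finset.erase_insert h4]
    · rintro ⟨R, x⟩ h
      simp only [hA, Finset.mem_sigma, Finset.mem_filter] at h
      simp [Finset.insert_erase h.2.1]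
    · rintro ⟨S, v⟩ h
      simp only [hB, Finset.mem_sigma, Finset.mem_filter] at h
      simp [Finset.erase_insert h.2.2.1]
  have hAeven : Even A.card := by
    rw [hA, Finset.card_sigma]
    refine Finset.even_sum _ fun R hR => ?_
    simp only [hRooms, Finset.mem_filter, Finset.mem_univ, true_and] at hR
    exact even_card_doors c i₀ R hR.1 (hnc R hR.2)
  set S₀ : Finset V := (Finset.univ.erase i₀).image s with hS₀
  have hS₀mem : ∀ x, x ∈ S₀ ↔ ∃ j, j ≠ i₀ ∧ s j = x := by simp [hS₀]
  have hone := card_exchange_eq_one r hr s hs₀ hs hne i₀ S₀ hS₀mem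
  have hS₀D : S₀ ∈ Doors := by
    obtain ⟨v, hv⟩ := Finset.card_eq_one.1 hone
    have hv' : v ∈ ({v} : Finset V) := Finset.mem_singleton_self v
    rw [← hv, Finset.mem_filter] at hv'
    simp only [hDoors, Finset.mem_filter, Finset.mem_univ, true_and]
    refine ⟨?_, hv'.2.2.mono (Finset.subset_insert _ _), ?_⟩
    · rw [hS₀, Finset.card_image_of_injective _ hsinj,
        Finset.card_erase_add_one (Finset.mem_univ _), Finset.card_univ]
    · ext k
      simp [hS₀, Finset.mem_image, hcs]
  have htwo : ∀ S ∈ Doors.erase S₀,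
      Even (Finset.univ.filter fun v => v ∉ S ∧ Dom r (insert v S)).card := by
    intro S hS
    obtain ⟨hne', hSD⟩ := Finset.mem_erase.1 hS
    simp only [hDoors, Finset.mem_filter, Finset.mem_univ, true_and] at hSD
    obtain ⟨h1, h2, h3⟩ := hSD
    have : ∃ x ∈ S, x ∉ Set.range s := by
      by_contra! h
      apply hne'
      ext x
      rw [hS₀mem]
      constructor
      · intro hx
        obtain ⟨j, rfl⟩ := h x hx
        refine ⟨j, ?_, rfl⟩
        have : c (s j) ∈ S.image c := Finset.mem_image_of_mem _ hx
        rw [h3, hcs] at this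
        simpa using this
      · rintro ⟨j, hj, rfl⟩
        have : j ∈ S.image c := by rw [h3]; simpa using hj
        obtain ⟨x, hx, hxj⟩ := Finset.mem_image.1 this
        obtain ⟨j', rfl⟩ := h x hx
        rw [hcs] at hxj
        exact hxj ▸ hx
    obtain ⟨x₀, hx₀, hx₀s⟩ := this
    rw [card_exchange_eq_two r hr s hs S h2 h1 x₀ hx₀ hx₀s]
    exact even_two
  have hBodd : Odd B.card := by
    rw [hB, Finset.card_sigma, ← Finset.add_sum_erase _ _ hS₀D, hone]
    exact Even.one_add (Finset.even_sum _ htwo)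
  rw [← hAB] at hBodd
  exact (Nat.not_even_iff_odd.2 hBodd) hAeven
end

/-! ### Symmetric equilibria by refinement of grids -/

section
variable {I : Type*} [Fintype I]

/-- The grid points of the standard simplex on `I` with denominator `N`, stored as numerators. -/
abbrev Grid (I : Type*) [Fintype I] (N : ℕ) : Type _ := {t : I → Fin (N + 1) // ∑ i, (t i : ℕ) = N}

/-- For every colouring of the grid there is a nonempty cluster `σ` of grid points, of diameter
at most `card I` in each coordinate, on which each index `i` occurs as a colour unless the `i`-th
coordinate is at most `card I` throughout `σ` (the case `w i = 0`). -/
lemma grid_cell [Nonempty I] (N : ℕ) (c : Grid I N → I) :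
    ∃ (w : I → ℕ) (σ : Finset (Grid I N)), σ.Nonempty ∧
      (∀ t ∈ σ, ∀ i, w i ≤ (t.1 i : ℕ) ∧ (t.1 i : ℕ) ≤ w i + Fintype.card I) ∧
      ∀ i, w i = 0 ∨ ∃ t ∈ σ, c t = i := by
  classical
  set K := Fintype.card (Grid I N) with hK
  let e : Grid I N ≃ Fin K := Fintype.equivFin _
  let g : I ≃ Fin (Fintype.card I) := Fintype.equivFin _
  -- the order `i` compares `i`-th coordinates, with ties broken by `e`; the slack vertex `i` comes
  -- first and the other slack vertices come last
  let r : I → Grid I N ⊕ I → ℕ := fun i v =>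
    Sum.elim (fun t => 1 + (t.1 i : ℕ) * K + e t) (fun j => if j = i then 0 else
      1 + (N + 1) * K + g j) v
  have hrl : ∀ i t, r i (Sum.inl t) = 1 + (t.1 i : ℕ) * K + e t := fun _ _ => rfl
  have hrr : ∀ i j, r i (Sum.inr j) = if j = i then 0 else 1 + (N + 1) * K + g j :=
    fun _ _ => rfl
  have hmono : ∀ i (t t' : Grid I N), r i (Sum.inl t) ≤ r i (Sum.inl t') →
      (t.1 i : ℕ) ≤ t'.1 i := by
    intro i t t' h
    by_contra! hlt
    rw [hrl, hrl] at h
    have h1 : ((t'.1 i : ℕ) + 1) * K ≤ (t.1 i : ℕ) * K := Nat.mul_le_mul_right _ hlt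
    have h2 := (e t').2
    nlinarith
  have hlt : ∀ i t, r i (Sum.inl t) < 1 + (N + 1) * K := by
    intro i t
    rw [hrl]
    have h1 : (t.1 i : ℕ) * K ≤ N * K := Nat.mul_le_mul_right _ (Nat.lt_succ_iff.1 (t.1 i).2)
    have h2 := (e t).2
    nlinarith
  have hr : ∀ i, Function.Injective (r i) := by
    rintro i (t | j) (t' | j') h
    · have h1 : (t.1 i : ℕ) = t'.1 i := le_antisymm (hmono i _ _ h.le) (hmono i _ _ h.ge)
      rw [hrl, hrl, h1] at h
      have : e t = e t' := Fin.ext (by omega)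
      rw [e.injective this]
    · have h1 := hlt i t
      have h2 := hrl i t
      rw [h, hrr] at h1 h2
      split_ifs at h1 h2 <;> omega
    · have h1 := hlt i t'
      have h2 := hrl i t'
      rw [← h, hrr] at h1 h2
      split_ifs at h1 h2 <;> omega
    · rw [hrr, hrr] at h
      split_ifs at h with h1 h2 h2
      · rw [h1, h2]
      · omega
      · omega
      · have : g j = g j' := Fin.ext (by omega)
        rw [g.injective this]
  obtain ⟨a⟩ := ‹Nonempty I›
  -- a vector of total at most `N` lies below some grid point: put the excess on the index `a`
  have hcorner : ∀ u : I → ℕ, ∑ i, u i ≤ N → ∃ t : Grid I N, ∀ i, u i ≤ t.1 i := by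
    intro u hu
    have hsum : ∑ i, (u i + if i = a then N - ∑ i, u i else 0) = N := by
      rw [Finset.sum_add_distrib, Finset.sum_ite_eq' Finset.univ a]
      simp
      omega
    refine ⟨⟨fun i => ⟨u i + if i = a then N - ∑ i, u i else 0, ?_⟩, hsum⟩, fun i => ?_⟩
    · have := Finset.single_le_sum (f := fun i => u i + if i = a then N - ∑ i, u i else 0)
        (fun _ _ => Nat.zero_le _) (Finset.mem_univ i)
      rw [hsum] at this
      exact Nat.lt_succ_of_le this
    · exact Nat.le_add_right _ _
  obtain ⟨t₀, -⟩ := hcorner 0 (by simp)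
  have : Nonempty I := ⟨a⟩
  obtain ⟨S, hS, hcol⟩ := scarf r hr (Sum.inr : I → Grid I N ⊕ I)
    (fun i v => by rw [hrr]; simp)
    (fun i j hj v hv => by
      rcases v with t | k
      · rw [hrr, if_neg hj]
        exact (hlt i t).trans_le (Nat.le_add_right _ _)
      · exact absurd ⟨k, rfl⟩ hv)
    ⟨Sum.inl t₀, by simp⟩ (Sum.elim c id) (fun _ => rfl)
  set σ : Finset (Grid I N) := Finset.univ.filter fun t => Sum.inl t ∈ S with hσ
  have hmem : ∀ t, t ∈ σ ↔ Sum.inl t ∈ S := by simp [hσ]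
  have hslack : ∀ (i : I) (t : Grid I N), Sum.inr i ∈ S →
      ¬ ∀ x ∈ S, r i (Sum.inl t) ≤ r i x := by
    intro i t hi h
    have := h _ hi
    rw [hrr, if_pos rfl, hrl] at this
    omega
  have hne : σ.Nonempty := by
    by_contra! h
    obtain ⟨i, hi⟩ := hS (Sum.inl t₀)
    obtain ⟨x, hx, hxi⟩ := hcol i
    rcases x with t | k
    · have := (hmem t).2 hx
      rw [h] at this
      simp at this
    · simp only [Sum.elim_inr, id] at hxi
      subst hxi
      exact hslack _ t₀ hx hi
  let w : I → ℕ := fun i => if Sum.inr i ∈ S then 0 else σ.inf' hne fun t => (t.1 i : ℕ)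
  have hw : ∀ t ∈ σ, ∀ i, w i ≤ (t.1 i : ℕ) := by
    intro t ht i
    by_cases h : Sum.inr i ∈ S
    · simp [w, h]
    · simp only [w, h, if_false]
      exact Finset.inf'_le (fun t : Grid I N => (t.1 i : ℕ)) ht
  refine ⟨w, σ, hne, ?_, ?_⟩
  · have hbig : N < ∑ i, (w i + 1) := by
      by_contra! h
      obtain ⟨y, hy⟩ := hcorner (fun i => w i + 1) h
      obtain ⟨i, hi⟩ := hS (Sum.inl y)
      by_cases hiS : Sum.inr i ∈ S
      · exact hslack i y hiS hi
      · obtain ⟨t, ht, htw⟩ := Finset.exists_mem_eq_inf' hne fun t : Grid I N => (t.1 i : ℕ)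
        have h1 := hmono i _ _ (hi _ ((hmem t).1 ht))
        have h2 := hy i
        have h3 : w i = (t.1 i : ℕ) := by simp only [w, hiS, if_false]; exact htw
        omega
    intro t ht i
    refine ⟨hw t ht i, ?_⟩
    have h1 : ∑ k, ((t.1 k : ℕ) - w k) + ∑ k, w k = N := by
      rw [← Finset.sum_add_distrib]
      conv_rhs => rw [← t.2]
      exact Finset.sum_congr rfl fun k _ => Nat.sub_add_cancel (hw t ht k)
    have h2 := Finset.single_le_sum (f := fun k => (t.1 k : ℕ) - w k)
        (fun _ _ => Nat.zero_le _) (Finset.mem_univ i)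
    rw [Finset.sum_add_distrib] at hbig
    simp at hbig h2
    omega
  · intro i
    by_cases hi : Sum.inr i ∈ S
    · left; simp [w, hi]
    · right
      obtain ⟨x, hx, hxi⟩ := hcol i
      rcases x with t | k
      · exact ⟨t, (hmem t).2 hx, hxi⟩
      · simp only [Sum.elim_inr, id] at hxi
        exact absurd (hxi ▸ hx) hi

/-- Every square matrix has a symmetric equilibrium. The sets `F N` consist of the approximate
equilibria with error `O(1 / (N + 1))`; they are compact, nested, and nonempty by `grid_cell`. -/
theorem exists_symmetric_equilibrium [Nonempty I] (M : I → I → ℝ) :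
    ∃ z ∈ stdSimplex ℝ I, ∀ k, 0 < z k → ∀ l, ∑ j, M l j * z j ≤ ∑ j, M k j * z j := by
  classical
  set m : ℝ := ((Fintype.card I : ℕ) : ℝ) with hm
  have hm0 : 0 ≤ m := Nat.cast_nonneg _
  set D : ℝ := ∑ k, ∑ j, |M k j| with hD
  have hD0 : 0 ≤ D := Finset.sum_nonneg fun _ _ => Finset.sum_nonneg fun _ _ => abs_nonneg _
  let A : ℕ → I → Set (I → ℝ) := fun N k =>
    {z | z k ≤ m / (N + 1)} ∪
      {z | ∀ l, ∑ j, M l j * z j ≤ ∑ j, M k j * z j + 2 * D * (m / (N + 1))}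
  let F : ℕ → Set (I → ℝ) := fun N => stdSimplex ℝ I ∩ ⋂ k, A N k
  have hstep : ∀ N : ℕ, m / ((N + 1 : ℕ) + 1) ≤ m / ((N : ℝ) + 1) := by
    intro N
    push_cast
    gcongr
    linarith
  have hAclosed : ∀ N k, IsClosed (A N k) := by
    intro N k
    refine IsClosed.union ?_ ?_
    · exact isClosed_le (by fun_prop) (by fun_prop)
    · rw [Set.ofPred_forall]
      exact isClosed_iInter fun l => isClosed_le (by fun_prop) (by fun_prop)
  have hFclosed : ∀ N, IsClosed (F N) := fun N =>
    (isClosed_stdSimplex ℝ I).inter (isClosed_iInter fun k => hAclosed N k)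
  have hF0 : IsCompact (F 0) :=
    (isCompact_stdSimplex ℝ I).of_isClosed_subset (hFclosed 0) Set.inter_subset_left
  have hFanti : ∀ N, F (N + 1) ⊆ F N := by
    rintro N z ⟨hz, hzA⟩
    refine ⟨hz, Set.mem_iInter.2 fun k => ?_⟩
    rcases Set.mem_iInter.1 hzA k with h | h
    · exact Or.inl (le_trans h (hstep N))
    · refine Or.inr fun l => (h l).trans ?_
      have := hstep N
      gcongr
  have hFne : ∀ N, (F N).Nonempty := by
    intro N
    let f : Grid I (N + 1) → I → ℝ := fun t i => (t.1 i : ℕ) / ((N : ℝ) + 1)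
    have hN : (0 : ℝ) < (N : ℝ) + 1 := by positivity
    have hf : ∀ t, f t ∈ stdSimplex ℝ I := by
      intro t
      refine ⟨fun i => by positivity, ?_⟩
      simp only [f]
      rw [← Finset.sum_div, ← Nat.cast_sum, t.2]
      push_cast
      exact div_self hN.ne'
    have hc : ∀ t, ∃ k, ∀ l, ∑ j, M l j * f t j ≤ ∑ j, M k j * f t j := fun t => by
      obtain ⟨k, -, hk⟩ := Finset.exists_max_image Finset.univ
        (fun l => ∑ j, M l j * f t j) Finset.univ_nonempty
      exact ⟨k, fun l => hk l (Finset.mem_univ l)⟩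
    choose c hc using hc
    obtain ⟨w, σ, ⟨z, hz⟩, hclose, hcol⟩ := grid_cell (N + 1) c
    have hdist : ∀ t ∈ σ, ∀ l, |∑ j, M l j * f z j - ∑ j, M l j * f t j| ≤ D * (m / (N + 1)) := by
      intro t ht l
      have h1 : ∀ j, |f z j - f t j| ≤ m / (N + 1) := by
        intro j
        simp only [f]
        rw [← sub_div, abs_div, abs_of_pos hN]
        gcongr
        obtain ⟨a1, a2⟩ := hclose z hz j
        obtain ⟨b1, b2⟩ := hclose t ht j
        have a1' : (w j : ℝ) ≤ (z.1 j : ℕ) := by exact_mod_cast a1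
        have a2' : ((z.1 j : ℕ) : ℝ) ≤ w j + m := by rw [hm]; exact_mod_cast a2
        have b1' : (w j : ℝ) ≤ (t.1 j : ℕ) := by exact_mod_cast b1
        have b2' : ((t.1 j : ℕ) : ℝ) ≤ w j + m := by rw [hm]; exact_mod_cast b2
        rw [abs_le]
        constructor <;> linarith
      rw [← Finset.sum_sub_distrib]
      calc |∑ j, (M l j * f z j - M l j * f t j)|
          ≤ ∑ j, |M l j * f z j - M l j * f t j| := Finset.abs_sum_le_sum_abs _ _
        _ ≤ ∑ j, |M l j| * (m / (N + 1)) := by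
            refine Finset.sum_le_sum fun j _ => ?_
            rw [← mul_sub, abs_mul]
            exact mul_le_mul_of_nonneg_left (h1 j) (abs_nonneg _)
        _ = (∑ j, |M l j|) * (m / (N + 1)) := by rw [Finset.sum_mul]
        _ ≤ D * (m / (N + 1)) := by
            gcongr
            exact Finset.single_le_sum (f := fun k => ∑ j, |M k j|)
              (fun k _ => Finset.sum_nonneg fun _ _ => abs_nonneg _) (Finset.mem_univ l)
    refine ⟨f z, hf z, Set.mem_iInter.2 fun k => ?_⟩
    rcases hcol k with h | ⟨t, ht, htk⟩
    · left
      have := (hclose z hz k).2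
      rw [h, zero_add] at this
      simp only [f, Set.mem_ofPred_eq]
      gcongr
      rw [hm]
      exact_mod_cast this
    · right
      intro l
      have h1 := abs_le.1 (hdist t ht l)
      have h2 := abs_le.1 (hdist t ht k)
      have h3 := hc t l
      rw [htk] at h3
      linarith [h1.2, h2.1]
  obtain ⟨z, hz⟩ := IsCompact.nonempty_iInter_of_sequence_nonempty_isCompact_isClosed F hFanti hFne
    hF0 hFclosed
  have hzF : ∀ N, z ∈ F N := fun N => Set.mem_iInter.1 hz N
  refine ⟨z, (hzF 0).1, fun k hk l => ?_⟩
  have hlim : Filter.Tendsto (fun N : ℕ => m / ((N : ℝ) + 1)) Filter.atTop (nhds 0) :=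
    tendsto_const_div_atTop_nhds_zero_nat m |>.comp (Filter.tendsto_add_atTop_nat 1) |>.congr
      fun N => by simp
  have hev : ∀ᶠ N : ℕ in Filter.atTop, m / ((N : ℝ) + 1) < z k := hlim.eventually_lt_const hk
  have hlim2 : Filter.Tendsto
      (fun N : ℕ => ∑ j, M k j * z j + 2 * D * (m / ((N : ℝ) + 1))) Filter.atTop
      (nhds (∑ j, M k j * z j)) := by
    simpa using (hlim.const_mul (2 * D)).const_add (∑ j, M k j * z j)
  refine ge_of_tendsto hlim2 ?_
  filter_upwards [hev] with N hN
  rcases Set.mem_iInter.1 (hzF N).2 k with h | h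
  · exact absurd h (not_le.2 hN)
  · exact h l
end

/-! ### Equilibria of bimatrix games over the reals -/

lemma sum_le_of_support {n : ℕ} {x x' g : Fin n → ℝ} (hx : IsMixed x) (hx' : IsMixed x')
    (h : ∀ i, x i ≠ 0 → ∀ i', g i' ≤ g i) : ∑ i, x' i * g i ≤ ∑ i, x i * g i := by
  obtain ⟨i₀, -, hi₀⟩ : ∃ i ∈ Finset.univ, x i ≠ 0 := by
    by_contra! h0
    have := hx.2
    rw [Finset.sum_eq_zero h0] at this
    exact zero_ne_one this
  have h1 : ∑ i, x i * g i = g i₀ := by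
    rw [← one_mul (g i₀), ← hx.2, Finset.sum_mul]
    refine Finset.sum_congr rfl fun i _ => ?_
    by_cases hi : x i = 0
    · simp [hi]
    · rw [le_antisymm (h i₀ hi₀ i) (h i hi i₀)]
  rw [h1, ← one_mul (g i₀), ← hx'.2, Finset.sum_mul]
  exact Finset.sum_le_sum fun i _ => mul_le_mul_of_nonneg_left (h i₀ hi₀ i) (hx'.1 i)

/-- The support characterization: it is enough that every pure strategy in the support is a best
response. -/
lemma isNash_of_support {n : ℕ} {A B : Matrix (Fin n) (Fin n) ℤ} {x y : Fin n → ℝ}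
    (hx : IsMixed x) (hy : IsMixed y)
    (hA : ∀ i, x i ≠ 0 → ∀ i', ∑ j, (A i' j : ℝ) * y j ≤ ∑ j, (A i j : ℝ) * y j)
    (hB : ∀ j, y j ≠ 0 → ∀ j', ∑ i, (B i j' : ℝ) * x i ≤ ∑ i, (B i j : ℝ) * x i) :
    IsNash A B x y := by
  have pA : ∀ x', payoff A x' y = ∑ i, x' i * ∑ j, (A i j : ℝ) * y j := fun x' =>
    Finset.sum_congr rfl fun i _ => by
      rw [Finset.mul_sum]
      exact Finset.sum_congr rfl fun j _ => by ring
  have pB : ∀ y', payoff B x y' = ∑ j, y' j * ∑ i, (B i j : ℝ) * x i := fun y' => by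
    rw [payoff, Finset.sum_comm]
    refine Finset.sum_congr rfl fun j _ => ?_
    rw [Finset.mul_sum]
    exact Finset.sum_congr rfl fun i _ => by ring
  refine ⟨hx, hy, fun x' hx' => ?_, fun y' hy' => ?_⟩
  · rw [pA, pA]
    exact sum_le_of_support hx hx' hA
  · rw [pB, pB]
    exact sum_le_of_support hy hy' hB

lemma exists_pos_shift {n : ℕ} (A : Matrix (Fin n) (Fin n) ℤ) :
    ∃ a : ℝ, ∀ i j, 0 < (A i j : ℝ) + a := by
  refine ⟨1 + ∑ i, ∑ j, |(A i j : ℝ)|, fun i j => ?_⟩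
  have h1 := Finset.single_le_sum (f := fun i => ∑ j, |(A i j : ℝ)|)
    (fun _ _ => Finset.sum_nonneg fun _ _ => abs_nonneg _) (Finset.mem_univ i)
  have h2 := Finset.single_le_sum (f := fun j => |(A i j : ℝ)|)
    (fun _ _ => abs_nonneg _) (Finset.mem_univ j)
  have h3 := neg_abs_le (A i j : ℝ)
  linarith

theorem exists_real_equilibrium {n : ℕ} (hn : 1 ≤ n) (A B : Matrix (Fin n) (Fin n) ℤ) :
    ∃ x y : Fin n → ℝ, IsMixed x ∧ IsMixed y ∧
      (∀ i, x i ≠ 0 → ∀ i', ∑ j, (A i' j : ℝ) * y j ≤ ∑ j, (A i j : ℝ) * y j) ∧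
      (∀ j, y j ≠ 0 → ∀ j', ∑ i, (B i j' : ℝ) * x i ≤ ∑ i, (B i j : ℝ) * x i) := by
  obtain ⟨a, ha⟩ := exists_pos_shift A
  obtain ⟨b, hb⟩ := exists_pos_shift B
  have i₀ : Fin n := ⟨0, hn⟩
  have : Nonempty (Fin n ⊕ Fin n) := ⟨Sum.inl i₀⟩
  obtain ⟨z, ⟨hz0, hz1⟩, hz⟩ := exists_symmetric_equilibrium (I := Fin n ⊕ Fin n)
    (fun k l => Sum.elim
      (fun i => Sum.elim (fun _ => 0) (fun j => (A i j : ℝ) + a) l)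
      (fun j => Sum.elim (fun i => (B i j : ℝ) + b) (fun _ => 0) l) k)
  rw [Fintype.sum_sum_type] at hz1
  simp only [Fintype.sum_sum_type, Sum.forall, Sum.elim_inl, Sum.elim_inr, zero_mul,
    Finset.sum_const_zero, zero_add, add_zero] at hz
  obtain ⟨hzl, hzr⟩ := hz
  set X := ∑ i, z (Sum.inl i) with hX
  set Y := ∑ j, z (Sum.inr j) with hY
  have hX0 : 0 ≤ X := Finset.sum_nonneg fun _ _ => hz0 _
  have hY0 : 0 ≤ Y := Finset.sum_nonneg fun _ _ => hz0 _
  have hpos : ∀ (f g : Fin n → ℝ), (∀ i, 0 ≤ f i) → (∀ i, 0 < g i) → 0 < ∑ i, f i →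
      (∃ i, 0 < f i) ∧ 0 < ∑ i, g i * f i := by
    intro f g hf hg hs
    obtain ⟨i, -, hi⟩ := Finset.exists_lt_of_sum_lt (s := Finset.univ) (f := fun _ => (0 : ℝ))
      (g := f) (by simpa using hs)
    exact ⟨⟨i, hi⟩, Finset.sum_pos' (fun k _ => mul_nonneg (hg k).le (hf k))
      ⟨i, Finset.mem_univ i, mul_pos (hg i) hi⟩⟩
  -- if player 1's half vanished, the support in player 2's half would have payoff `0`, while the
  -- rows of the positive matrix `A + a` have positive payoff
  have hXpos : 0 < X := by
    refine lt_of_le_of_ne hX0 fun h => ?_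
    have h0 : ∀ i, z (Sum.inl i) = 0 := fun i =>
      (Finset.sum_eq_zero_iff_of_nonneg fun i _ => hz0 (Sum.inl i)).1 h.symm i (Finset.mem_univ i)
    obtain ⟨⟨j, hj⟩, hs⟩ := hpos (fun j => z (Sum.inr j)) (fun j => (A i₀ j : ℝ) + a)
      (fun _ => hz0 _) (ha i₀) (by change 0 < Y; linarith)
    have := (hzr j hj).1 i₀
    simp only [h0, mul_zero, Finset.sum_const_zero] at this
    linarith
  have hYpos : 0 < Y := by
    refine lt_of_le_of_ne hY0 fun h => ?_
    have h0 : ∀ j, z (Sum.inr j) = 0 := fun j =>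
      (Finset.sum_eq_zero_iff_of_nonneg fun j _ => hz0 (Sum.inr j)).1 h.symm j (Finset.mem_univ j)
    obtain ⟨⟨i, hi⟩, hs⟩ := hpos (fun i => z (Sum.inl i)) (fun i => (B i i₀ : ℝ) + b)
      (fun _ => hz0 _) (fun i => hb i i₀) (by change 0 < X; linarith)
    have := (hzl i hi).2 i₀
    simp only [h0, mul_zero, Finset.sum_const_zero] at this
    linarith
  refine ⟨fun i => z (Sum.inl i) / X, fun j => z (Sum.inr j) / Y,
    ⟨fun i => div_nonneg (hz0 _) hX0, ?_⟩, ⟨fun i => div_nonneg (hz0 _) hY0, ?_⟩, ?_, ?_⟩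
  · rw [← Finset.sum_div, ← hX, div_self hXpos.ne']
  · rw [← Finset.sum_div, ← hY, div_self hYpos.ne']
  · intro i hi i'
    have hzi : 0 < z (Sum.inl i) :=
      lt_of_le_of_ne (hz0 _) fun h => hi (by simp [← h])
    have h := (hzl i hzi).1 i'
    simp only [add_mul, Finset.sum_add_distrib] at h
    simp only [← mul_div_assoc, ← Finset.sum_div]
    gcongr ?_ / _
    linarith
  · intro j hj j'
    have hzj : 0 < z (Sum.inr j) :=
      lt_of_le_of_ne (hz0 _) fun h => hj (by simp [← h])
    have h := (hzr j hzj).2 j'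
    simp only [add_mul, Finset.sum_add_distrib] at h
    simp only [← mul_div_assoc, ← Finset.sum_div]
    gcongr ?_ / _
    linarith

/-! ### Extreme points and their denominators -/

open Matrix in
/-- A matrix with trivial kernel has a nonsingular square submatrix using all its columns. -/
lemma exists_rows_det_ne_zero {R C : Type*} [Fintype R] [Fintype C] [DecidableEq C]
    (H : Matrix R C ℝ) (hH : ∀ d, H *ᵥ d = 0 → d = 0) :
    ∃ f : C → R, (H.submatrix f id).det ≠ 0 := by
  classical
  have hrank : H.rank = Fintype.card C := by
    rw [Matrix.rank, LinearMap.finrank_range_of_inj, Module.finrank_fintype_fun_eq_card]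
    exact (injective_iff_map_eq_zero _).2 hH
  obtain ⟨κ, a, ha, hspan, hli⟩ := exists_linearIndependent' ℝ H.row
  have : Finite κ := Finite.of_injective a ha
  have : Fintype κ := Fintype.ofFinite κ
  have hcard : Fintype.card C = Fintype.card κ := by
    rw [← hrank, Matrix.rank_eq_finrank_span_row, ← hspan, finrank_span_eq_card hli]
  let e : C ≃ κ := Fintype.equivOfCardEq hcard
  refine ⟨a ∘ e, ?_⟩
  have h : LinearIndependent ℝ (H.submatrix (a ∘ e) id).row := hli.comp e e.injective
  exact ((Matrix.isUnit_iff_isUnit_det _).1 (Matrix.linearIndependent_rows_iff_isUnit.1 h)).ne_zero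

/-- The Leibniz bound for the determinant in terms of bounds `β c` on the columns. -/
lemma natAbs_det_le {C : Type*} [Fintype C] [DecidableEq C] (G : Matrix C C ℤ) (β : C → ℕ)
    (h : ∀ r c, (G r c).natAbs ≤ β c) :
    G.det.natAbs ≤ (Fintype.card C).factorial * ∏ c, β c := by
  rw [Matrix.det_apply]
  refine (Int.natAbs_sum_le _ _).trans ?_
  calc ∑ σ : Equiv.Perm C, (Equiv.Perm.sign σ • ∏ i, G (σ i) i).natAbs
      ≤ ∑ _σ : Equiv.Perm C, ∏ c, β c := by
        refine Finset.sum_le_sum fun σ _ => ?_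
        rw [Units.smul_def, smul_eq_mul, Int.natAbs_mul, Int.units_natAbs, one_mul]
        rw [← Int.natAbsHom_apply, map_prod]
        exact Finset.prod_le_prod' fun c _ => h _ _
    _ = _ := by simp [Fintype.card_perm]

/-- At an extreme point `u` of the polytope `P` of mixed strategies that vanish on `Z` and against
which all columns in `J` are best responses, there is no nonzero direction `d` that keeps the zero
coordinates, the total mass, and the equalities between the tight columns: otherwise `u` would be
the midpoint of `u - ε d` and `u + ε d`, both in `P` for small `ε`. -/
lemma extreme_rigid {n : ℕ} (B : Matrix (Fin n) (Fin n) ℤ) (Z J : Set (Fin n)) (j₀ : Fin n)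
    (hj₀ : j₀ ∈ J) (P : Set (Fin n → ℝ))
    (hP : ∀ x, x ∈ P ↔ IsMixed x ∧ (∀ i ∈ Z, x i = 0) ∧
      ∀ j ∈ J, ∀ j', ∑ i, (B i j' : ℝ) * x i ≤ ∑ i, (B i j : ℝ) * x i)
    (u : Fin n → ℝ) (hu : u ∈ P.extremePoints ℝ) (d : Fin n → ℝ) (δ : ℝ)
    (hd0 : ∀ i, u i = 0 → d i = 0) (hd1 : ∑ i, d i = 0)
    (hdδ : ∀ j, ∑ i, (B i j : ℝ) * u i = ∑ i, (B i j₀ : ℝ) * u i → ∑ i, (B i j : ℝ) * d i = δ) :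
    d = 0 := by
  rw [mem_extremePoints] at hu
  obtain ⟨huP, hext⟩ := hu
  obtain ⟨⟨hu0, hu1⟩, huZ, huJ⟩ := (hP u).1 huP
  have htight : ∀ j ∈ J, ∑ i, (B i j : ℝ) * u i = ∑ i, (B i j₀ : ℝ) * u i := fun j hj =>
    le_antisymm (huJ j₀ hj₀ j) (huJ j hj j₀)
  have hlin : ∀ (ε : ℝ) j, ∑ i, (B i j : ℝ) * (u i + ε * d i) =
      ∑ i, (B i j : ℝ) * u i + ε * ∑ i, (B i j : ℝ) * d i := by
    intro ε j
    rw [Finset.mul_sum, ← Finset.sum_add_distrib]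
    exact Finset.sum_congr rfl fun i _ => by ring
  have hev : ∀ᶠ ε : ℝ in nhds 0, (fun i => u i + ε * d i) ∈ P := by
    have h1 : ∀ᶠ ε : ℝ in nhds 0, ∀ i, 0 ≤ u i + ε * d i := by
      rw [Filter.eventually_all]
      intro i
      by_cases hi : u i = 0
      · simp [hi, hd0 i hi]
      · have hpos : 0 < u i := lt_of_le_of_ne (hu0 i) (Ne.symm hi)
        have hc : Filter.Tendsto (fun ε : ℝ => u i + ε * d i) (nhds 0) (nhds (u i)) := by
          have : Continuous fun ε : ℝ => u i + ε * d i := by fun_prop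
          simpa using this.tendsto 0
        exact (hc.eventually_const_lt hpos).mono fun _ h => h.le
    have h2 : ∀ᶠ ε : ℝ in nhds 0, ∀ j', ∑ i, (B i j' : ℝ) * u i + ε * ∑ i, (B i j' : ℝ) * d i ≤
        ∑ i, (B i j₀ : ℝ) * u i + ε * δ := by
      rw [Filter.eventually_all]
      intro j'
      by_cases hj' : ∑ i, (B i j' : ℝ) * u i = ∑ i, (B i j₀ : ℝ) * u i
      · simp [hj', hdδ j' hj']
      · have hlt := lt_of_le_of_ne (huJ j₀ hj₀ j') hj'
        have hc1 : Filter.Tendsto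
            (fun ε : ℝ => ∑ i, (B i j' : ℝ) * u i + ε * ∑ i, (B i j' : ℝ) * d i)
            (nhds 0) (nhds (∑ i, (B i j' : ℝ) * u i)) := by
          have : Continuous fun ε : ℝ =>
            ∑ i, (B i j' : ℝ) * u i + ε * ∑ i, (B i j' : ℝ) * d i := by fun_prop
          simpa using this.tendsto 0
        have hc2 : Filter.Tendsto (fun ε : ℝ => ∑ i, (B i j₀ : ℝ) * u i + ε * δ)
            (nhds 0) (nhds (∑ i, (B i j₀ : ℝ) * u i)) := by
          have : Continuous fun ε : ℝ => ∑ i, (B i j₀ : ℝ) * u i + ε * δ := by fun_prop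
          simpa using this.tendsto 0
        exact (hc1.eventually_lt hc2 hlt).mono fun _ h => h.le
    filter_upwards [h1, h2] with ε h1 h2
    refine (hP _).2 ⟨⟨h1, ?_⟩, fun i hi => ?_, fun j hj j' => ?_⟩
    · rw [Finset.sum_add_distrib, ← Finset.mul_sum, hu1, hd1]
      ring
    · simp [huZ i hi, hd0 i (huZ i hi)]
    · rw [hlin, hlin, htight j hj, hdδ j (htight j hj)]
      exact h2 j'
  obtain ⟨ρ, hρ, hball⟩ := Metric.eventually_nhds_iff.1 hev
  have hp := hball (y := ρ / 2) (by rw [Real.dist_0_eq_abs, abs_of_pos] <;> linarith)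
  have hm := hball (y := -(ρ / 2)) (by rw [Real.dist_0_eq_abs, abs_neg, abs_of_pos] <;> linarith)
  have := (hext _ hp _ hm ⟨1 / 2, 1 / 2, by norm_num, by norm_num, by norm_num, by
    ext i
    simp only [Pi.add_apply, Pi.smul_apply, smul_eq_mul]
    ring⟩).1
  ext i
  have hi := congrFun this i
  have : ρ / 2 * d i = 0 := by linarith
  rcases mul_eq_zero.1 this with h | h
  · linarith
  · exact h

open Matrix in
/-- A mixed strategy against which all columns in `J` are best responses can be replaced by a
rational one of bounded complexity, without enlarging the support. -/
theorem exists_rational_vertex {n : ℕ} (B : Matrix (Fin n) (Fin n) ℤ) (μ : ℕ) (hμ : 1 ≤ μ)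
    (hB : ∀ i j, (B i j).natAbs ≤ μ) (x : Fin n → ℝ) (hx : IsMixed x) (J : Set (Fin n))
    (hJ : J.Nonempty)
    (hxJ : ∀ j ∈ J, ∀ j', ∑ i, (B i j' : ℝ) * x i ≤ ∑ i, (B i j : ℝ) * x i) :
    ∃ q : Fin n → ℚ, IsMixed (ratStrat q) ∧ (∀ i, x i = 0 → ratStrat q i = 0) ∧
      (∀ j ∈ J, ∀ j', ∑ i, (B i j' : ℝ) * ratStrat q i ≤ ∑ i, (B i j : ℝ) * ratStrat q i) ∧
      Cx q ≤ (n + 1).factorial * μ ^ n := by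
  classical
  obtain ⟨j₀, hj₀⟩ := hJ
  let P : Set (Fin n → ℝ) := stdSimplex ℝ (Fin n) ∩ ({y | ∀ i ∈ {i | x i = 0}, y i = 0} ∩
    {y | ∀ j ∈ J, ∀ j', ∑ i, (B i j' : ℝ) * y i ≤ ∑ i, (B i j : ℝ) * y i})
  have hP : ∀ y, y ∈ P ↔ IsMixed y ∧ (∀ i ∈ {i | x i = 0}, y i = 0) ∧
      ∀ j ∈ J, ∀ j', ∑ i, (B i j' : ℝ) * y i ≤ ∑ i, (B i j : ℝ) * y i := fun y => Iff.rfl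
  have hPc : IsCompact P := by
    refine (isCompact_stdSimplex ℝ (Fin n)).inter_right (IsClosed.inter ?_ ?_)
    · simp only [Set.ofPred_forall]
      exact isClosed_iInter fun i => isClosed_iInter fun _ =>
        isClosed_eq (by fun_prop) (by fun_prop)
    · simp only [Set.ofPred_forall]
      exact isClosed_iInter fun j => isClosed_iInter fun _ => isClosed_iInter fun j' =>
        isClosed_le (by fun_prop) (by fun_prop)
  obtain ⟨u, hu⟩ := hPc.extremePoints_nonempty ⟨x, (hP x).2 ⟨hx, fun _ h => h, hxJ⟩⟩
  obtain ⟨⟨hu0, hu1⟩, huZ, huJ⟩ := (hP u).1 hu.1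
  -- the linear system satisfied by `u`: the unknowns are the nonzero coordinates and the payoff
  -- (`none`), the equations are the total mass (`none`) and the tight columns
  let R := Option {j : Fin n // ∑ i, (B i j : ℝ) * u i = ∑ i, (B i j₀ : ℝ) * u i}
  let C := Option {i : Fin n // u i ≠ 0}
  let H : Matrix R C ℤ := fun r c => match r, c with
    | none, none => 0
    | none, some _ => 1
    | some _, none => -1
    | some j, some i => B i.1 j.1
  have hsub : ∀ g d : Fin n → ℝ, (∀ i, u i = 0 → d i = 0) →
      ∑ i : {i // u i ≠ 0}, g i * d i = ∑ i, g i * d i := by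
    intro g d hd
    rw [← Finset.sum_subtype (Finset.univ.filter fun i => u i ≠ 0) (by simp)
      (fun i => g i * d i), Finset.sum_filter_of_ne]
    intro i _ hne h
    exact hne (by rw [hd i h, mul_zero])
  have hHnone : ∀ d : C → ℝ, (H.map (Int.cast : ℤ → ℝ) *ᵥ d) none = ∑ i, d (some i) := by
    intro d
    refine (Fintype.sum_option fun c : C => (H none c : ℝ) * d c).trans ?_
    simp [H]
  have hHsome : ∀ (d : C → ℝ) j, (H.map (Int.cast : ℤ → ℝ) *ᵥ d) (some j) =
      -d none + ∑ i : {i // u i ≠ 0}, (B i.1 j.1 : ℝ) * d (some i) := by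
    intro d j
    refine (Fintype.sum_option fun c : C => (H (some j) c : ℝ) * d c).trans ?_
    simp [H]
  have hH : ∀ d : C → ℝ, H.map (Int.cast : ℤ → ℝ) *ᵥ d = 0 → d = 0 := by
    intro d hd
    let e : Fin n → ℝ := fun i => if h : u i ≠ 0 then d (some ⟨i, h⟩) else 0
    have he : ∀ i : {i // u i ≠ 0}, d (some i) = e i.1 := fun i => by
      simp only [e, dif_pos i.2]
    have he0 : ∀ i, u i = 0 → e i = 0 := fun i hi => by simp [e, hi]
    have h1 : ∑ i, e i = 0 := by
      have h := hHnone d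
      rw [hd] at h
      have h2 := hsub (fun _ => 1) e he0
      simp only [one_mul] at h2
      rw [← h2, ← Finset.sum_congr rfl fun i _ => he i, ← h]
      rfl
    have h2 : ∀ j, ∑ i, (B i j : ℝ) * u i = ∑ i, (B i j₀ : ℝ) * u i →
        ∑ i, (B i j : ℝ) * e i = d none := by
      intro j hj
      have h := hHsome d ⟨j, hj⟩
      simp only [hd, he] at h
      have h4 := hsub (fun i => (B i j : ℝ)) e he0
      simp only [Pi.zero_apply] at h
      linarith
    have h3 := extreme_rigid B {i | x i = 0} J j₀ hj₀ P hP u hu e (d none) he0 h1 h2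
    funext c
    rcases c with _ | i
    · rw [← h2 j₀ rfl, h3]
      simp
    · rw [he, h3]
      rfl
  obtain ⟨f, hf⟩ := exists_rows_det_ne_zero _ hH
  set G : Matrix C C ℤ := H.submatrix f id with hG
  have hGmap : (H.map (Int.cast : ℤ → ℝ)).submatrix f id = G.map (Int.castRingHom ℝ) := rfl
  rw [hGmap, ← RingHom.mapMatrix_apply, ← RingHom.map_det] at hf
  have hdet : G.det ≠ 0 := fun h => hf (by rw [h, map_zero])
  let v : C → ℝ := fun c => Option.elim c (∑ i, (B i j₀ : ℝ) * u i) fun i => u i.1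
  let b : C → ℤ := fun c => Option.elim (f c) 1 fun _ => 0
  have hGv : G.map (Int.castRingHom ℝ) *ᵥ v = Int.castRingHom ℝ ∘ b := by
    funext c
    change (H.map (Int.cast : ℤ → ℝ) *ᵥ v) (f c) = _
    simp only [Function.comp, b]
    rcases f c with _ | j
    · rw [hHnone]
      have h2 := hsub (fun _ => 1) u fun _ h => h
      simp only [one_mul] at h2
      simp only [v, Option.elim]
      rw [h2, hu1]
      simp
    · rw [hHsome]
      simp only [v, Option.elim]
      rw [hsub (fun i => (B i j.1 : ℝ)) u fun _ h => h, j.2]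
      simp
  let p : C → ℤ := G.adjugate *ᵥ b
  have hp : ∀ c, (G.det : ℝ) * v c = p c := by
    intro c
    have h1 : (G.map (Int.castRingHom ℝ)).adjugate *ᵥ (G.map (Int.castRingHom ℝ) *ᵥ v) =
        (G.map (Int.castRingHom ℝ)).det • v := by
      rw [Matrix.mulVec_mulVec, Matrix.adjugate_mul, Matrix.smul_mulVec, Matrix.one_mulVec]
    rw [hGv, ← RingHom.mapMatrix_apply, ← RingHom.map_adjugate, ← RingHom.map_det,
      RingHom.mapMatrix_apply] at h1
    have h2 := congrFun h1 c
    rw [← RingHom.map_mulVec] at h2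
    exact h2.symm
  let q : Fin n → ℚ := fun i => if h : u i ≠ 0 then (p (some ⟨i, h⟩) : ℚ) / (G.det : ℚ) else 0
  have hdetR : (G.det : ℝ) ≠ 0 := by exact_mod_cast hdet
  have hqu : ratStrat q = u := by
    funext i
    by_cases h : u i = 0
    · simp [ratStrat, q, h]
    · have := hp (some ⟨i, h⟩)
      simp only [ratStrat, q, dif_pos (show u i ≠ 0 from h)]
      rw [Rat.cast_div, Rat.cast_intCast, Rat.cast_intCast, ← this,
        mul_div_cancel_left₀ _ hdetR]
      rfl
  refine ⟨q, hqu ▸ ⟨hu0, hu1⟩, fun i hi => by rw [hqu]; exact huZ i hi, by rw [hqu]; exact huJ, ?_⟩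
  have hdvd : Cx q ∣ G.det.natAbs := by
    refine Finset.lcm_dvd fun i _ => ?_
    by_cases h : u i = 0
    · simp [q, h]
    · simp only [q, dif_pos (show u i ≠ 0 from h)]
      rw [← Int.natCast_dvd, ← Rat.divInt_eq_div]
      exact Rat.den_dvd _ _
  refine (Nat.le_of_dvd (Int.natAbs_pos.2 hdet) hdvd).trans ?_
  have hbound := natAbs_det_le G (fun c => Option.elim c 1 fun _ => μ) (by
    intro r c
    rw [hG, Matrix.submatrix_apply]
    rcases f r with _ | j <;> rcases c with _ | i <;> simp [H, hμ, hB])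
  refine hbound.trans ?_
  have hcard : Fintype.card {i // u i ≠ 0} ≤ n := by
    simpa only [Fintype.card_fin] using Fintype.card_subtype_le fun i : Fin n => u i ≠ 0
  simp only [C, Fintype.prod_option, Fintype.card_option, Option.elim, one_mul, Finset.prod_const,
    Finset.card_univ]
  gcongr

/-! ### The final estimate -/

lemma factorial_le_two_rpow {n : ℕ} (hn : 2 ≤ n) :
    ((n + 1).factorial : ℝ) ≤ (2 : ℝ) ^ (8 * (n : ℝ) * Real.log n) := by
  have h1 : (n + 1).factorial ≤ n ^ (4 * n) :=
    calc (n + 1).factorial ≤ (n + 1) ^ (n + 1) := Nat.factorial_le_pow _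
      _ ≤ (n ^ 2) ^ (n + 1) := Nat.pow_le_pow_left (by nlinarith) _
      _ ≤ (n ^ 2) ^ (2 * n) := Nat.pow_le_pow_right (by positivity) (by omega)
      _ = n ^ (4 * n) := by rw [← pow_mul]; congr 1; ring
  have hn0 : (0 : ℝ) < n := by positivity
  have hlog : 0 ≤ Real.log n := Real.log_nonneg (by exact_mod_cast (by omega : 1 ≤ n))
  calc ((n + 1).factorial : ℝ) ≤ ((n ^ (4 * n) : ℕ) : ℝ) := by exact_mod_cast h1
    _ = Real.exp (Real.log n * (4 * n)) := by
        push_cast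
        rw [← Real.rpow_natCast, Real.rpow_def_of_pos hn0]
        push_cast
        rfl
    _ ≤ Real.exp (Real.log 2 * (8 * (n : ℝ) * Real.log n)) := by
        rw [Real.exp_le_exp]
        have := Real.log_two_gt_d9
        have h3 : 0 ≤ (n : ℝ) * Real.log n := by positivity
        nlinarith
    _ = (2 : ℝ) ^ (8 * (n : ℝ) * Real.log n) := by rw [Real.rpow_def_of_pos two_pos]

lemma bound_of_nat {n μ : ℕ} (hn : 1 ≤ n) (hμ : 1 ≤ μ) (q : Fin n → ℚ)
    (hq : IsMixed (ratStrat q)) (h : Cx q ≤ (n + 1).factorial * μ ^ n) :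
    (Cx q : ℝ) ≤ (μ : ℝ) ^ n * (2 : ℝ) ^ (8 * (n : ℝ) * Real.log (n : ℝ)) := by
  rcases hn.eq_or_lt with rfl | hn
  · have h1 : q 0 = 1 := by
      have := hq.2
      simp only [Fin.sum_univ_one, ratStrat] at this
      exact_mod_cast this
    have : Cx q = 1 := by simp [Cx, h1]
    rw [this]
    simpa using hμ
  · have h1 : (Cx q : ℝ) ≤ ((n + 1).factorial : ℝ) * (μ : ℝ) ^ n := by exact_mod_cast h
    rw [mul_comm] at h1
    exact h1.trans (mul_le_mul_of_nonneg_left (factorial_le_two_rpow hn) (by positivity))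

lemma exists_rational_equilibrium {n : ℕ} (hn : 1 ≤ n) (A B : Matrix (Fin n) (Fin n) ℤ)
    (α β : ℕ) (hα : 1 ≤ α) (hβ : 1 ≤ β)
    (hA : ∀ i j, (A i j).natAbs ≤ α) (hB : ∀ i j, (B i j).natAbs ≤ β) :
    ∃ x y : Fin n → ℚ, IsNash A B (ratStrat x) (ratStrat y) ∧
      Cx x ≤ (n + 1).factorial * β ^ n ∧ Cx y ≤ (n + 1).factorial * α ^ n := by
  obtain ⟨x, y, hx, hy, hxA, hyB⟩ := exists_real_equilibrium hn A B
  have hsupp : ∀ z : Fin n → ℝ, IsMixed z → {i | z i ≠ 0}.Nonempty := by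
    intro z hz
    by_contra! h
    have h0 : ∀ i ∈ Finset.univ, z i = 0 := fun i _ => by
      by_contra hi
      exact (h ▸ hi : i ∈ (∅ : Set (Fin n)))
    have := hz.2
    rw [Finset.sum_eq_zero h0] at this
    exact zero_ne_one this
  obtain ⟨p, hp, hpx, hpB, hpC⟩ := exists_rational_vertex B β hβ hB x hx {j | y j ≠ 0}
    (hsupp y hy) (fun j hj => hyB j hj)
  obtain ⟨q, hq, hqy, hqA, hqC⟩ := exists_rational_vertex A.transpose α hα (fun i j => hA j i) y hy
    {i | x i ≠ 0} (hsupp x hx) (fun i hi => hxA i hi)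
  refine ⟨p, q, isNash_of_support hp hq (fun i hi => hqA i fun h => hi (hpx i h))
    (fun j hj => hpB j fun h => hj (hqy j h)), hpC, hqC⟩

/-- There is a constant `c > 0` such that for every `n ≥ 1` and all integer payoff
matrices `A B : ℤ^{n×n}`,
`C₁(A,B) ≤ max(1, max_{i,j} |B i j|)^n · 2^{c n log n}` and
`C₂(A,B) ≤ max(1, max_{i,j} |A i j|)^n · 2^{c n log n}`; in particular `(A,B)` has a
Nash equilibrium with rational entries whose complexities obey these bounds. -/
theorem statement0 :
    ∃ c : ℝ, 0 < c ∧ ∀ n : ℕ, 1 ≤ n → ∀ A B : Matrix (Fin n) (Fin n) ℤ,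
      (C1 A B : ℝ) ≤
          ((max 1 (Finset.univ.sup fun p : Fin n × Fin n => (B p.1 p.2).natAbs) : ℕ) : ℝ) ^ n *
            (2 : ℝ) ^ (c * (n : ℝ) * Real.log (n : ℝ)) ∧
      (C2 A B : ℝ) ≤
          ((max 1 (Finset.univ.sup fun p : Fin n × Fin n => (A p.1 p.2).natAbs) : ℕ) : ℝ) ^ n *
            (2 : ℝ) ^ (c * (n : ℝ) * Real.log (n : ℝ)) ∧
      ∃ x y : Fin n → ℚ, IsNash A B (ratStrat x) (ratStrat y) ∧
        (Cx x : ℝ) ≤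
          ((max 1 (Finset.univ.sup fun p : Fin n × Fin n => (B p.1 p.2).natAbs) : ℕ) : ℝ) ^ n *
            (2 : ℝ) ^ (c * (n : ℝ) * Real.log (n : ℝ)) ∧
        (Cx y : ℝ) ≤
          ((max 1 (Finset.univ.sup fun p : Fin n × Fin n => (A p.1 p.2).natAbs) : ℕ) : ℝ) ^ n *
            (2 : ℝ) ^ (c * (n : ℝ) * Real.log (n : ℝ)) := by
  refine ⟨8, by norm_num, fun n hn A B => ?_⟩
  have hle : ∀ (M : Matrix (Fin n) (Fin n) ℤ) i j, (M i j).natAbs ≤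
      max 1 (Finset.univ.sup fun p : Fin n × Fin n => (M p.1 p.2).natAbs) := fun M i j =>
    le_max_of_le_right (Finset.le_sup (f := fun p : Fin n × Fin n => (M p.1 p.2).natAbs)
      (Finset.mem_univ (i, j)))
  obtain ⟨x, y, hxy, hx, hy⟩ := exists_rational_equilibrium hn A B _ _ (le_max_left _ _)
    (le_max_left _ _) (hle A) (hle B)
  have hx' := bound_of_nat hn (le_max_left _ _) x hxy.1 hx
  have hy' := bound_of_nat hn (le_max_left _ _) y hxy.2.1 hy
  have h1 : C1 A B ≤ Cx x := Nat.sInf_le ⟨x, y, hxy, rfl⟩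
  have h2 : C2 A B ≤ Cx y := Nat.sInf_le ⟨x, y, hxy, rfl⟩
  exact ⟨le_trans (by exact_mod_cast h1) hx', le_trans (by exact_mod_cast h2) hy',
    x, y, hxy, hx', hy'⟩
end
end

section
/- Let A, B ∈ ℤ^{n×n} and let c₁, c₂ ≥ 1 be integers. The (c₁,c₂)-bounded-randomness game associated with (A,B) has a Nash equilibrium if and only if there exists a Nash equilibrium (x,y) of the unrestricted game (A,B) with rational entries such that C(x) ≤ c₁ and C(y) ≤ c₂. -/
/-!
Expected payoff is linear in each player's own strategy, so a strategy is a best response among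
all mixed strategies as soon as no pure strategy beats it (`payoff_le_of_pure`). Pure strategies
have complexity 1 (`Cx_pure_le`), hence are available to a player for every bound `c ≥ 1`.
Therefore an equilibrium of the bounded-randomness game is already an equilibrium of the
unrestricted game. Conversely, an unrestricted equilibrium that meets the complexity bounds
survives when the sets of deviations are shrunk. Player 2 is handled by transposing the matrix.
-/

noncomputable section

lemma isMixed_pure {n : ℕ} (i : Fin n) : IsMixed (ratStrat (Pi.single i 1 : Fin n → ℚ)) := by
  constructor
  · intro k
    by_cases h : k = i <;> simp [ratStrat, h]
  · simp only [ratStrat]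
    rw [← Rat.cast_sum, Finset.sum_pi_single']
    simp

lemma Cx_pure_le {n : ℕ} (i : Fin n) : Cx (Pi.single i 1 : Fin n → ℚ) ≤ 1 := by
  refine Nat.le_of_dvd one_pos (Finset.lcm_dvd fun k _ => ?_)
  by_cases h : k = i <;> simp [h]

lemma payoff_transpose {n : ℕ} (M : Matrix (Fin n) (Fin n) ℤ) (x y : Fin n → ℝ) :
    payoff M.transpose y x = payoff M x y := by
  unfold payoff
  rw [Finset.sum_comm]
  refine Finset.sum_congr rfl fun i _ => Finset.sum_congr rfl fun j _ => ?_
  rw [Matrix.transpose_apply]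
  ring

lemma payoff_pure {n : ℕ} (M : Matrix (Fin n) (Fin n) ℤ) (i : Fin n) (y : Fin n → ℝ) :
    payoff M (ratStrat (Pi.single i 1)) y = ∑ j, (M i j : ℝ) * y j := by
  unfold payoff
  rw [Finset.sum_eq_single i]
  · simp [ratStrat]
  · intro k _ hk
    simp [ratStrat, hk]
  · simp

/-- The payoff of a mixed strategy is a convex combination of the payoffs of the pure ones. -/
lemma payoff_le_of_pure {n : ℕ} (M : Matrix (Fin n) (Fin n) ℤ) (y : Fin n → ℝ) (v : ℝ)
    (h : ∀ i, payoff M (ratStrat (Pi.single i 1)) y ≤ v) (x : Fin n → ℝ) (hx : IsMixed x) :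
    payoff M x y ≤ v := by
  calc payoff M x y = ∑ i, x i * payoff M (ratStrat (Pi.single i 1)) y := by
        simp only [payoff_pure]
        simp only [Finset.mul_sum, payoff, mul_assoc]
    _ ≤ ∑ i, x i * v :=
        Finset.sum_le_sum fun i _ => mul_le_mul_of_nonneg_left (h i) (hx.1 i)
    _ = v := by rw [← Finset.sum_mul, hx.2, one_mul]

/-- The `(c₁,c₂)`-bounded-randomness game associated with `(A,B)` has a Nash
equilibrium iff the unrestricted game `(A,B)` has a Nash equilibrium with rational
entries `(x,y)` such that `C(x) ≤ c₁` and `C(y) ≤ c₂`. -/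
theorem statement1 {n : ℕ} (A B : Matrix (Fin n) (Fin n) ℤ) (c1 c2 : ℕ)
    (hc1 : 1 ≤ c1) (hc2 : 1 ≤ c2) :
    (∃ x y : Fin n → ℚ,
      IsMixed (ratStrat x) ∧ IsMixed (ratStrat y) ∧ Cx x ≤ c1 ∧ Cx y ≤ c2 ∧
      (∀ x' : Fin n → ℚ, IsMixed (ratStrat x') → Cx x' ≤ c1 →
        payoff A (ratStrat x') (ratStrat y) ≤ payoff A (ratStrat x) (ratStrat y)) ∧
      (∀ y' : Fin n → ℚ, IsMixed (ratStrat y') → Cx y' ≤ c2 →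
        payoff B (ratStrat x) (ratStrat y') ≤ payoff B (ratStrat x) (ratStrat y))) ↔
    (∃ x y : Fin n → ℚ,
      IsNash A B (ratStrat x) (ratStrat y) ∧ Cx x ≤ c1 ∧ Cx y ≤ c2) := by
  constructor
  · rintro ⟨x, y, hx, hy, hCx, hCy, hA, hB⟩
    refine ⟨x, y, ⟨hx, hy, ?_, fun y' hy' => ?_⟩, hCx, hCy⟩
    · exact payoff_le_of_pure A _ _ fun i =>
        hA _ (isMixed_pure i) ((Cx_pure_le i).trans hc1)
    · rw [← payoff_transpose B]
      refine payoff_le_of_pure B.transpose _ _ (fun j => ?_) y' hy'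
      rw [payoff_transpose]
      exact hB _ (isMixed_pure j) ((Cx_pure_le j).trans hc2)
  · rintro ⟨x, y, ⟨hx, hy, hA, hB⟩, hCx, hCy⟩
    exact ⟨x, y, hx, hy, hCx, hCy, fun x' hx' _ => hA _ hx', fun y' hy' _ => hB _ hy'⟩
end
end

section
/- For every k ≥ 1, det(B^k) = k. Moreover, if B' is obtained from B^k by changing a single 0-entry to 1, then det(B') = 1. -/
/-!
Let `n = k + 1`, let `J` be the all-ones matrix, and let `c` be the rotation `j ↦ j + 1` of
`Fin n`, whose sign is `(-1) ^ k`. The zeros of `B^k` are exactly the positions `(c j, j)`, so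
permuting the rows of `B^k` by `c` gives `J - 1`, and permuting those of `B^k` with the zero at
`(c j, j)` replaced by a one gives `J - 1 + E_jj`. The Weinstein–Aronszajn identity
`det (1 + U V) = det (1 + V U)` reduces the determinants of `1 - J` and `1 - J - E_jj` to those
of the `1 × 1` matrix `1 - n` and the `2 × 2` matrix `!![1 - n, -1; -1, 0]`. Hence the permuted
matrices have determinants `(-1) ^ n * (1 - n)` and `(-1) ^ n * (-1)`, and multiplying by the
sign `(-1) ^ k` of `c` gives `k` and `1`.
-/

noncomputable section

/-- The matrix `B^k ∈ {0,1}^{(k+1)×(k+1)}` with `(B^k)_{ij} = 0` iff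
`i ≡ j + 1 (mod k+1)` (0-based indices). -/
def Bk (k : ℕ) : Matrix (Fin (k + 1)) (Fin (k + 1)) ℤ :=
  Matrix.of fun (i j : Fin (k + 1)) =>
    if (i : ℕ) = ((j : ℕ) + 1) % (k + 1) then 0 else 1

theorem Bk_apply (k : ℕ) (i j : Fin (k + 1)) :
    Bk k i j = if i = finRotate (k + 1) j then 0 else 1 := by
  have h : ((finRotate (k + 1) j : Fin (k + 1)) : ℕ) = ((j : ℕ) + 1) % (k + 1) := by
    rw [finRotate_apply, Fin.val_add, Fin.val_one']
    simp
  simp only [Bk, Matrix.of_apply, Fin.ext_iff, h]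

/-- Rotating the rows multiplies the determinant by `(-1) ^ k`, and negating the matrix multiplies
it by `(-1) ^ (k + 1)`; together they change its sign. -/
theorem det_eq_neg_det_neg_rotate (k : ℕ) (M : Matrix (Fin (k + 1)) (Fin (k + 1)) ℤ) :
    M.det = -(-(M.submatrix (finRotate (k + 1)) id)).det := by
  rw [Matrix.det_neg, Matrix.det_permute, sign_finRotate, Fintype.card_fin]
  rcases neg_one_pow_eq_or ℤ k with h | h <;> simp [pow_succ, h]

/-- `det (1 - J) = 1 - n` for the all-ones matrix `J` of size `n = k + 1`. -/
theorem det_one_sub_ones (k : ℕ) :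
    (Matrix.of fun a b : Fin (k + 1) => if a = b then (0 : ℤ) else -1).det = -(k : ℤ) := by
  have h : (Matrix.of fun a b : Fin (k + 1) => if a = b then (0 : ℤ) else -1) =
      1 + (Matrix.of fun (_ : Fin (k + 1)) (_ : Fin 1) => (1 : ℤ)) *
        (Matrix.of fun (_ : Fin 1) (_ : Fin (k + 1)) => (-1 : ℤ)) := by
    ext a b
    by_cases hab : a = b <;> simp [Matrix.mul_apply, hab]
  rw [h, Matrix.det_one_add_mul_comm, Matrix.det_fin_one]
  simp [Matrix.mul_apply]

/-- `det (1 - J - E_jj) = -1` for the all-ones matrix `J`. -/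
theorem det_one_sub_ones_sub_single (k : ℕ) (j : Fin (k + 1)) :
    (Matrix.of fun a b : Fin (k + 1) =>
      if a = j ∧ b = j then (-1 : ℤ) else if a = b then 0 else -1).det = -1 := by
  have h : (Matrix.of fun a b : Fin (k + 1) =>
        if a = j ∧ b = j then (-1 : ℤ) else if a = b then 0 else -1) =
      1 + (Matrix.of fun (a : Fin (k + 1)) (s : Fin 2) =>
          if s = 0 then (1 : ℤ) else if a = j then 1 else 0) *
        (Matrix.of fun (s : Fin 2) (b : Fin (k + 1)) =>
          if s = 0 then (-1 : ℤ) else if b = j then -1 else 0) := by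
    ext a b
    simp only [Matrix.mul_apply, Matrix.one_apply, Matrix.add_apply, Matrix.of_apply,
      Fin.sum_univ_two]
    by_cases ha : a = j <;> by_cases hb : b = j <;> by_cases hab : a = b <;> simp_all
  rw [h, Matrix.det_one_add_mul_comm, Matrix.det_fin_two]
  simp [Matrix.mul_apply]

/-- `det B^k = k`, and replacing any single `0`-entry of `B^k` by a `1` yields a
matrix with determinant `1`. -/
theorem statement7 (k : ℕ) (hk : 1 ≤ k) :
    (Bk k).det = (k : ℤ) ∧
      ∀ i j, Bk k i j = 0 →
        (Matrix.of fun (i' j' : Fin (k + 1)) =>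
          if i' = i ∧ j' = j then 1 else Bk k i' j').det = 1 := by
  constructor
  · rw [det_eq_neg_det_neg_rotate, neg_eq_iff_eq_neg, ← det_one_sub_ones]
    congr 1
    ext a b
    by_cases hab : a = b <;> simp [Bk_apply, hab, -finRotate_apply]
  · intro i j hij
    obtain rfl : i = finRotate (k + 1) j := by
      by_contra hne
      simp [Bk_apply, hne, -finRotate_apply] at hij
    rw [det_eq_neg_det_neg_rotate, neg_eq_iff_eq_neg, ← det_one_sub_ones_sub_single k j]
    congr 1
    ext a b
    simp only [Matrix.neg_apply, Matrix.submatrix_apply, Matrix.of_apply, Bk_apply, id,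
      EmbeddingLike.apply_eq_iff_eq]
    split_ifs <;> simp
end
end

section
/- Let n ≥ 1, let p₁ < p₂ < … < pₙ be the first n prime numbers, and let N = Σ_{k=1}^n (p_k + 1) + 1. Let B' ∈ {0,1}^{(N−1)×(N−1)} be the block-diagonal matrix diag(B^{p₁}, …, B^{pₙ}), and let B ∈ {0,1}^{N×N} be the matrix whose rows 1..N−1, columns 2..N form the block B', whose entry (N,1) equals 1, and whose remaining entries are 0. Then the game (I_N, B) has a unique Nash equilibrium (x,y); it is fully mixed; y is the uniform distribution on [N], so C₂(I_N,B) = N; and C₁(I_N,B) = C(x) = (n+1)·∏_{k=1}^n p_k + Σ_{k=1}^n ∏_{l≠k} p_l. -/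
/-!
Since player 1's payoff matrix is the identity, in an equilibrium `(x, y)` the support of `x` lies
in the set where `y` is maximal, hence in the support of `y`. So every index in the support of `x`
is also a best reply of player 2 to `x`. The column of `bigB` at the cyclic predecessor of a row
`i` of block `k` earns the mass `S k` of the block minus `x i`; the first column earns the last
entry of `x`.

If `x` vanishes somewhere in a block, then a column whose missing row is positive is not a best
reply, and because the block columns are shifted by one this allows positive mass only on the
first row of the block. Therefore a positive entry at the first row of block `k + 1` (or at the
last row, for the last block) makes block `k` entirely positive, and following this around
cyclically, `x` is fully mixed (`full_support`). Then `y` is constant, and all columns have a common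
payoff `w`, so that the last entry of `x` is `w` and all entries in block `k` equal `w / p_k`.
Clearing denominators gives the numerators `num`, which sum to `den` and have gcd `1` because the
primes are distinct (`gcd_num`); for such numerators `Cx` is the common denominator (`Cx_div`).
-/

noncomputable section

open Classical in
/-- `nthPrime k` is the `(k+1)`-st prime (`nthPrime 0 = 2`). -/
noncomputable def nthPrime (k : ℕ) : ℕ := Nat.nth Nat.Prime k

/-- `offs k = Σ_{l < k} (p_l + 1)`: the offset of the `k`-th diagonal block. -/
noncomputable def offs (k : ℕ) : ℕ := ∑ l ∈ Finset.range k, (nthPrime l + 1)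

open Classical in
/-- Entry `(r, c)` (0-based) of the block-diagonal matrix
`diag(B^{p₁}, …, B^{pₙ})`, where `B^p ∈ {0,1}^{(p+1)×(p+1)}` has `(B^p)_{ij} = 0`
iff `i ≡ j + 1 (mod p+1)`. -/
noncomputable def blockEntry (n r c : ℕ) : ℤ :=
  if ∃ k, k < n ∧ offs k ≤ r ∧ r < offs (k + 1) ∧ offs k ≤ c ∧ c < offs (k + 1) ∧
      r - offs k ≠ (c - offs k + 1) % (nthPrime k + 1)
  then 1 else 0

/-- `NN n = Σ_{k<n} (p_k + 1) + 1`, the size of the big game. -/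
noncomputable def NN (n : ℕ) : ℕ := offs n + 1

/-- The `N × N` matrix `B` whose rows `1..N−1`, columns `2..N` form the block
diagonal matrix `diag(B^{p₁}, …, B^{pₙ})`, whose entry `(N,1)` is `1`, and whose
remaining entries are `0` (0-based indices here). -/
noncomputable def bigB (n : ℕ) : Matrix (Fin (NN n)) (Fin (NN n)) ℤ :=
  Matrix.of fun (i j : Fin (NN n)) =>
    if (i : ℕ) = offs n then (if (j : ℕ) = 0 then 1 else 0)
    else if (j : ℕ) = 0 then 0
    else blockEntry n (i : ℕ) ((j : ℕ) - 1)

/-! ### Primes, blocks and offsets -/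

lemma nthPrime_prime (k : ℕ) : (nthPrime k).Prime :=
  Nat.nth_mem_of_infinite Nat.infinite_setOfPred_prime k

lemma nthPrime_injective : Function.Injective nthPrime :=
  Nat.nth_injective Nat.infinite_setOfPred_prime

lemma offs_succ (k : ℕ) : offs (k + 1) = offs k + (nthPrime k + 1) := by
  simp [offs, Finset.sum_range_succ]

lemma offs_zero : offs 0 = 0 := by simp [offs]

lemma offs_strictMono : StrictMono offs :=
  strictMono_nat_of_lt_succ fun k => by rw [offs_succ]; omega

lemma exists_block {n i : ℕ} (h : i < offs n) :
    ∃ k < n, ∃ l ≤ nthPrime k, i = offs k + l := by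
  induction n with
  | zero => simp [offs_zero] at h
  | succ n ih =>
    by_cases h' : i < offs n
    · obtain ⟨k, hk, r⟩ := ih h'
      exact ⟨k, by omega, r⟩
    · rw [offs_succ] at h
      exact ⟨n, by omega, i - offs n, by omega, by omega⟩

lemma block_lt {n k l : ℕ} (hk : k < n) (hl : l ≤ nthPrime k) : offs k + l < offs n := by
  have := offs_strictMono.monotone (Nat.succ_le_of_lt hk)
  rw [Nat.succ_eq_add_one, offs_succ] at this
  omega

lemma block_unique {k k' l : ℕ} (hl : l ≤ nthPrime k) (h1 : offs k' ≤ offs k + l)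
    (h2 : offs k + l < offs (k' + 1)) : k' = k := by
  have h3 : offs k + l < offs (k + 1) := by rw [offs_succ]; omega
  have a := offs_strictMono.lt_iff_lt.1 (h1.trans_lt h3)
  have b := offs_strictMono.lt_iff_lt.1 ((Nat.le_add_right _ l).trans_lt h2)
  omega

lemma sum_blocks {M : Type*} [AddCommMonoid M] (f : ℕ → M) (n : ℕ) :
    ∑ i ∈ Finset.range (offs n), f i =
      ∑ k ∈ Finset.range n, ∑ l ∈ Finset.range (nthPrime k + 1), f (offs k + l) := by
  induction n with
  | zero => simp [offs_zero]
  | succ n ih => rw [offs_succ, Finset.sum_range_add, ih, Finset.sum_range_succ _ n]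

/-! ### Column payoffs -/

lemma NN_pos (n : ℕ) : 0 < NN n := Nat.succ_pos _

instance (n : ℕ) : NeZero (NN n) := ⟨(NN_pos n).ne'⟩

/-- The total mass that `X` puts on block `k`. -/
def blockSum (X : ℕ → ℝ) (k : ℕ) : ℝ :=
  ∑ l ∈ Finset.range (nthPrime k + 1), X (offs k + l)

lemma blockEntry_eq {n k k' l c : ℕ} (hk : k < n) (hl : l ≤ nthPrime k') (hc : c ≤ nthPrime k) :
    blockEntry n (offs k' + l) (offs k + c) =
      if k' = k ∧ l ≠ (c + 1) % (nthPrime k + 1) then 1 else 0 := by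
  unfold blockEntry
  congr 1
  apply propext
  constructor
  · rintro ⟨m, hm, h1, h2, h3, h4, h5⟩
    have e1 := block_unique hl h1 h2
    have e2 := block_unique hc h3 h4
    subst e1
    subst e2
    simpa using h5
  · rintro ⟨rfl, h⟩
    refine ⟨k', hk, by omega, by rw [offs_succ]; omega, by omega, by rw [offs_succ]; omega, ?_⟩
    simpa using h

lemma col_zero (n : ℕ) (X : ℕ → ℝ) :
    ∑ i : Fin (NN n), X i * (bigB n i 0 : ℝ) = X (offs n) := by
  have h : ∀ i : Fin (NN n), X i * (bigB n i 0 : ℝ) =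
      (fun i : ℕ => if i = offs n then X i else 0) i := by
    intro i
    simp only [bigB, Matrix.of_apply]
    split_ifs <;> simp_all
  rw [Finset.sum_congr rfl fun i _ => h i,
    Fin.sum_univ_eq_sum_range (fun i : ℕ => if i = offs n then X i else 0)]
  simp [NN]

/-- Against `X`, the column of `bigB` that carries column `c` of block `k` earns the mass of
the block, except for the one row where that column of the block vanishes. -/
lemma col_block {n k c : ℕ} (X : ℕ → ℝ) (hk : k < n) (hc : c ≤ nthPrime k) (j : Fin (NN n))
    (hj : (j : ℕ) = offs k + c + 1) :
    ∑ i : Fin (NN n), X i * (bigB n i j : ℝ) =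
      blockSum X k - X (offs k + (c + 1) % (nthPrime k + 1)) := by
  have h : ∀ i : Fin (NN n), X i * (bigB n i j : ℝ) =
      (fun i : ℕ => if i = offs n then 0 else X i * (blockEntry n i (offs k + c) : ℝ)) i := by
    intro i
    simp only [bigB, Matrix.of_apply, hj]
    split_ifs <;> simp_all
  rw [Finset.sum_congr rfl fun i _ => h i, Fin.sum_univ_eq_sum_range
    (fun i : ℕ => if i = offs n then 0 else X i * (blockEntry n i (offs k + c) : ℝ)),
    NN, Finset.sum_range_succ, sum_blocks, Finset.sum_eq_single k]
  · have hm : (c + 1) % (nthPrime k + 1) ∈ Finset.range (nthPrime k + 1) :=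
      Finset.mem_range.2 (Nat.mod_lt _ (by omega))
    rw [if_pos rfl, add_zero, blockSum, ← Finset.add_sum_erase _ _ hm,
      ← Finset.add_sum_erase _ _ hm, add_sub_cancel_left]
    have hm' := Finset.mem_range.1 hm
    rw [blockEntry_eq hk (by omega) hc]
    simp only [ne_eq, not_true_eq_false, and_false, if_false, Int.cast_zero, mul_zero, ite_self,
      zero_add]
    refine Finset.sum_congr rfl fun l hl => ?_
    obtain ⟨hl1, hl2⟩ := Finset.mem_erase.1 hl
    have hl3 : l ≤ nthPrime k := by have := Finset.mem_range.1 hl2; omega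
    rw [if_neg (block_lt hk hl3).ne, blockEntry_eq hk hl3 hc, if_pos ⟨rfl, hl1⟩]
    simp
  · intro k' hk' hne
    refine Finset.sum_eq_zero fun l hl => ?_
    have hl3 : l ≤ nthPrime k' := by have := Finset.mem_range.1 hl; omega
    rw [blockEntry_eq hk hl3 hc, if_neg (fun h : k' = k ∧ _ => hne h.1)]
    simp
  · intro h
    exact absurd (Finset.mem_range.2 hk) h

/-! ### Best replies -/

lemma mixed_single {n : ℕ} (i : Fin n) : IsMixed (Pi.single i 1 : Fin n → ℝ) := by
  refine ⟨fun j => ?_, by simp⟩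
  by_cases h : j = i
  · subst h; simp
  · simp [h]

/-- The best-reply condition: an optimal mixed strategy is supported on pure strategies of
maximal payoff. -/
lemma best_reply {n : ℕ} {x u : Fin n → ℝ} (hx : IsMixed x)
    (h : ∀ x', IsMixed x' → ∑ i, x' i * u i ≤ ∑ i, x i * u i) :
    ∃ v, (∀ i, u i ≤ v) ∧ ∀ i, 0 < x i → u i = v := by
  have h1 : ∀ i, u i ≤ ∑ i, x i * u i := fun i => by
    simpa [Pi.single_apply] using h _ (mixed_single i)
  refine ⟨∑ i, x i * u i, h1, fun i hi => ?_⟩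
  generalize hv : ∑ i, x i * u i = v at h1
  have h0 : ∑ i, x i * (v - u i) = 0 := by
    simp only [mul_sub, Finset.sum_sub_distrib, hv, ← Finset.sum_mul, hx.2]
    ring
  have := (Finset.sum_eq_zero_iff_of_nonneg
    (fun i _ => mul_nonneg (hx.1 i) (sub_nonneg.2 (h1 i)))).1 h0 i (Finset.mem_univ i)
  rcases mul_eq_zero.1 this with h | h <;> linarith

lemma payoff_row {n : ℕ} (M : Matrix (Fin n) (Fin n) ℤ) (x y : Fin n → ℝ) :
    payoff M x y = ∑ i, x i * ∑ j, (M i j : ℝ) * y j := by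
  simp only [payoff, Finset.mul_sum, mul_assoc]

lemma payoff_col {n : ℕ} (M : Matrix (Fin n) (Fin n) ℤ) (x y : Fin n → ℝ) :
    payoff M x y = ∑ j, y j * ∑ i, x i * (M i j : ℝ) := by
  rw [payoff, Finset.sum_comm]
  refine Finset.sum_congr rfl fun j _ => ?_
  rw [Finset.mul_sum]
  exact Finset.sum_congr rfl fun i _ => by ring

lemma one_row {n : ℕ} (y : Fin n → ℝ) (i : Fin n) :
    ∑ j, (((1 : Matrix (Fin n) (Fin n) ℤ) i j : ℤ) : ℝ) * y j = y i := by
  simp [Matrix.one_apply]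

/-! ### Full support -/

/-- The combinatorial core. A block in which `X` vanishes somewhere carries mass at most on its
first row; positivity at the first row of a block therefore propagates back to the preceding
block, and from the first block cyclically to the last row. -/
lemma full_support {n : ℕ} {X : ℕ → ℝ} {w : ℝ} (h0 : ∀ i, 0 ≤ X i)
    (hsum : ∑ i ∈ Finset.range (offs n + 1), X i = 1)
    (H2a : X (offs n) ≤ w)
    (H2b : ∀ k < n, ∀ l ≤ nthPrime k, blockSum X k - X (offs k + l) ≤ w)
    (H1a : 0 < X 0 → X (offs n) = w)
    (H1b : ∀ k < n, ∀ l ≤ nthPrime k, 1 ≤ l → 0 < X (offs k + l) →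
      blockSum X k - X (offs k + l) = w)
    (H1c : ∀ k < n, 0 < X (offs (k + 1)) → blockSum X k - X (offs k) = w) :
    ∀ i ≤ offs n, 0 < X i := by
  have hpos : ∃ i ≤ offs n, 0 < X i := by
    by_contra! hcon
    have := Finset.sum_nonpos (s := Finset.range (offs n + 1)) (f := X)
      fun i hi => hcon i (by have := Finset.mem_range.1 hi; omega)
    linarith
  have hle : ∀ k, ∀ l ≤ nthPrime k, X (offs k + l) ≤ blockSum X k := fun k l hl =>
    Finset.single_le_sum (f := fun l => X (offs k + l)) (fun _ _ => h0 _)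
      (Finset.mem_range.2 (by omega))
  have hw : 0 < w := by
    by_contra! hw
    obtain ⟨i, hi, hi'⟩ := hpos
    rcases hi.eq_or_lt with rfl | hi
    · linarith
    obtain ⟨k, hk, l, hl, rfl⟩ := exists_block hi
    have h2 := (nthPrime_prime k).two_le
    have a := H2b k hk 0 (by omega)
    have b := H2b k hk 1 (by omega)
    have hlk := hle k l hl
    -- The first two rows of the block alone would exceed the mass of the whole block.
    have c : X (offs k + 0) + X (offs k + 1) ≤ blockSum X k := by
      have := Finset.sum_le_sum_of_subset_of_nonneg (f := fun l => X (offs k + l))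
        (Finset.range_mono (show 2 ≤ nthPrime k + 1 by omega)) (fun _ _ _ => h0 _)
      simpa [Finset.sum_range_succ, blockSum] using this
    linarith
  -- A positive entry off the first row forces the whole block to be positive.
  have key : ∀ k < n, ∀ l ≤ nthPrime k, 1 ≤ l → 0 < X (offs k + l) →
      ∀ m ≤ nthPrime k, 0 < X (offs k + m) := by
    intro k hk l hl hl1 hp m hm
    have a := H1b k hk l hl hl1 hp
    have b := H2b k hk m hm
    linarith
  have step : ∀ k < n, 0 < X (offs (k + 1)) → ∀ m ≤ nthPrime k, 0 < X (offs k + m) := by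
    intro k hk hp
    have a := H1c k hk hp
    by_contra! hcon
    obtain ⟨m, hm, hm0⟩ := hcon
    have : ∀ l ∈ Finset.range (nthPrime k), X (offs k + (l + 1)) = 0 := by
      intro l hl
      have hl' := Finset.mem_range.1 hl
      by_contra hne
      have := key k hk (l + 1) (by omega) (by omega) (lt_of_le_of_ne (h0 _) (Ne.symm hne)) m hm
      linarith
    have hS : blockSum X k = X (offs k) := by
      rw [blockSum, Finset.sum_range_succ', Finset.sum_eq_zero this]
      simp
    linarith
  have down : ∀ d k, k + d ≤ n → 0 < X (offs (k + d)) → 0 < X (offs k) := by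
    intro d
    induction d with
    | zero => intro k _ h; exact h
    | succ d ih =>
      intro k hk h
      exact ih k (by omega) (step (k + d) (by omega) h 0 (by omega))
  have hlast : 0 < X (offs n) := by
    obtain ⟨k, hk, hk'⟩ : ∃ k ≤ n, 0 < X (offs k) := by
      obtain ⟨i, hi, hi'⟩ := hpos
      rcases hi.eq_or_lt with rfl | hi
      · exact ⟨n, le_rfl, hi'⟩
      obtain ⟨k, hk, l, hl, rfl⟩ := exists_block hi
      refine ⟨k, hk.le, ?_⟩
      rcases Nat.eq_zero_or_pos l with rfl | hl1
      · exact hi'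
      · exact key k hk l hl hl1 hi' 0 (by omega)
    have := down k 0 (by omega) (by simpa using hk')
    rw [offs_zero] at this
    rw [H1a this]
    exact hw
  intro i hi
  rcases hi.eq_or_lt with rfl | hi
  · exact hlast
  obtain ⟨k, hk, l, hl, rfl⟩ := exists_block hi
  refine step k hk ?_ l hl
  exact down (n - (k + 1)) (k + 1) (by omega) (by rwa [show k + 1 + (n - (k + 1)) = n by omega])

/-! ### The equilibrium strategies -/

/-- The block containing index `i`; the last index `offs n` is assigned the value `n`. -/
def blk (n i : ℕ) : ℕ := Nat.findGreatest (fun k => offs k ≤ i) n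

lemma blk_block {n k l : ℕ} (hk : k < n) (hl : l ≤ nthPrime k) : blk n (offs k + l) = k := by
  rw [blk, Nat.findGreatest_eq_iff]
  refine ⟨hk.le, fun _ => by omega, fun m hm _ => ?_⟩
  have := offs_strictMono.monotone (Nat.succ_le_of_lt hm)
  rw [Nat.succ_eq_add_one, offs_succ] at this
  omega

lemma blk_last (n : ℕ) : blk n (offs n) = n := by
  rw [blk, Nat.findGreatest_eq_iff]
  exact ⟨le_rfl, fun _ => le_rfl, fun m hm hm' => by omega⟩

/-- The numerator of the first player's equilibrium weight at index `i`: the product of the primes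
of the other blocks, hence the product of all the primes at the last index. -/
def num (n i : ℕ) : ℕ := ∏ l ∈ (Finset.range n).erase (blk n i), nthPrime l

/-- The common denominator of the first player's equilibrium weights. -/
def den (n : ℕ) : ℕ := (n + 1) * ∏ k ∈ Finset.range n, nthPrime k +
  ∑ k ∈ Finset.range n, ∏ l ∈ (Finset.range n).erase k, nthPrime l

lemma num_last (n : ℕ) : num n (offs n) = ∏ k ∈ Finset.range n, nthPrime k := by
  rw [num, blk_last, Finset.erase_eq_of_notMem (by simp)]

lemma num_block {n k l : ℕ} (hk : k < n) (hl : l ≤ nthPrime k) :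
    num n (offs k + l) = ∏ l ∈ (Finset.range n).erase k, nthPrime l := by
  rw [num, blk_block hk hl]

lemma mul_num_block {n k l : ℕ} (hk : k < n) (hl : l ≤ nthPrime k) :
    nthPrime k * num n (offs k + l) = num n (offs n) := by
  rw [num_block hk hl, num_last, Finset.mul_prod_erase _ _ (Finset.mem_range.2 hk)]

lemma num_pos (n i : ℕ) : 0 < num n i :=
  Finset.prod_pos fun l _ => (nthPrime_prime l).pos

lemma sum_num (n : ℕ) : ∑ i ∈ Finset.range (offs n + 1), num n i = den n := by
  have h : ∀ k ∈ Finset.range n, ∑ l ∈ Finset.range (nthPrime k + 1), num n (offs k + l) =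
      num n (offs n) + ∏ l ∈ (Finset.range n).erase k, nthPrime l := by
    intro k hk
    rw [Finset.sum_congr rfl fun l hl => num_block (Finset.mem_range.1 hk)
      (Nat.lt_succ_iff.1 (Finset.mem_range.1 hl)), Finset.sum_const, Finset.card_range,
      smul_eq_mul, Nat.succ_eq_add_one, add_mul, one_mul, Finset.mul_prod_erase _ _ hk, num_last]
  rw [Finset.sum_range_succ, sum_blocks, Finset.sum_congr rfl h, Finset.sum_add_distrib,
    num_last, Finset.sum_const, Finset.card_range, smul_eq_mul, den]
  ring

lemma den_pos (n : ℕ) : 0 < den n :=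
  Nat.add_pos_left (Nat.mul_pos (by omega)
    (Finset.prod_pos fun l _ => (nthPrime_prime l).pos)) _

lemma gcd_num (n : ℕ) : (Finset.univ.gcd fun i : Fin (NN n) => num n i) = 1 := by
  by_contra hne
  obtain ⟨q, hq, hqd⟩ := Nat.exists_prime_and_dvd hne
  have hd : ∀ i ≤ offs n, q ∣ num n i := fun i hi =>
    hqd.trans (Finset.gcd_dvd (f := fun i : Fin (NN n) => num n i)
      (Finset.mem_univ (⟨i, by simp only [NN]; omega⟩ : Fin (NN n))))
  have h1 := hd _ le_rfl
  rw [num_last, hq.prime.dvd_finsetProd_iff] at h1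
  obtain ⟨k, hk, hqk⟩ := h1
  have hk' := Finset.mem_range.1 hk
  have h2 := hd (offs k + 0) (block_lt hk' (Nat.zero_le _)).le
  rw [num_block hk' (Nat.zero_le _), hq.prime.dvd_finsetProd_iff] at h2
  obtain ⟨m, hm, hqm⟩ := h2
  have e1 := (Nat.prime_dvd_prime_iff_eq hq (nthPrime_prime k)).1 hqk
  have e2 := (Nat.prime_dvd_prime_iff_eq hq (nthPrime_prime m)).1 hqm
  exact (Finset.mem_erase.1 hm).1 (nthPrime_injective (e2.symm.trans e1))

/-- Weights with coprime numerators over a common denominator `D` have complexity `D`. -/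
lemma Cx_div {n : ℕ} (a : Fin n → ℕ) (D : ℕ) (hD : 0 < D) (ha : Finset.univ.gcd a = 1) :
    Cx (fun i => (a i : ℚ) / D) = D := by
  have hD' : (D : ℚ) ≠ 0 := by positivity
  apply Nat.dvd_antisymm
  · refine Finset.lcm_dvd fun i _ => ?_
    have := Rat.den_dvd (a i) D
    rw [Rat.divInt_eq_div] at this
    exact_mod_cast this
  · set L := Cx (fun i => (a i : ℚ) / D) with hL
    have h : ∀ i, D ∣ L * a i := by
      intro i
      obtain ⟨c, hc⟩ : ((a i : ℚ) / D).den ∣ L :=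
        Finset.dvd_lcm (f := fun i => ((a i : ℚ) / D).den) (Finset.mem_univ i)
      have e := Rat.mul_den_eq_num ((a i : ℚ) / D)
      have e2 : (L * a i : ℚ) = D * (c * ((a i : ℚ) / D).num) := by
        rw [hc, ← e]
        push_cast
        field_simp
      have e3 : (L * a i : ℤ) = D * (c * ((a i : ℚ) / D).num) := by exact_mod_cast e2
      have : (D : ℤ) ∣ (L * a i : ℕ) := ⟨_, by rw [← e3]; push_cast; rfl⟩
      exact_mod_cast this
    have := Finset.dvd_gcd (s := Finset.univ) (f := fun i => L * a i) fun i _ => h i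
    rwa [Finset.gcd_mul_left, ha, mul_one, normalize_eq] at this

/-- The first player's equilibrium strategy. -/
def xs (n : ℕ) : Fin (NN n) → ℚ := fun i => (num n i : ℚ) / den n

/-- The second player's equilibrium strategy, with the numerator `1` kept as a cast so that its
complexity is computed in the same way as for `xs`. -/
def ys (n : ℕ) : Fin (NN n) → ℚ := fun _ => ((1 : ℕ) : ℚ) / NN n

lemma Cx_xs (n : ℕ) : Cx (xs n) = den n := Cx_div _ _ (den_pos n) (gcd_num n)

lemma Cx_ys (n : ℕ) : Cx (ys n) = NN n := by
  refine Cx_div (fun _ => 1) _ (NN_pos n) ?_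
  exact Nat.dvd_one.1 (Finset.gcd_dvd (f := fun _ : Fin (NN n) => 1)
    (Finset.mem_univ ⟨0, NN_pos n⟩))

/-- A column of `bigB` is the first one or carries column `c` of some block `k`. -/
lemma index_cases {n : ℕ} (j : Fin (NN n)) :
    j = 0 ∨ ∃ k < n, ∃ c ≤ nthPrime k, (j : ℕ) = offs k + c + 1 := by
  rcases Nat.eq_zero_or_pos (j : ℕ) with h | h
  · exact Or.inl (Fin.ext h)
  · have hj := j.2
    simp only [NN] at hj
    obtain ⟨k, hk, c, hc, e⟩ := exists_block (n := n) (i := (j : ℕ) - 1) (by omega)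
    exact Or.inr ⟨k, hk, c, hc, by omega⟩

lemma nash_star (n : ℕ) :
    IsNash (1 : Matrix (Fin (NN n)) (Fin (NN n)) ℤ) (bigB n) (ratStrat (xs n))
      (ratStrat (ys n)) := by
  have hD : (0 : ℝ) < den n := by exact_mod_cast den_pos n
  have hN : (0 : ℝ) < NN n := by exact_mod_cast NN_pos n
  have hx : IsMixed (ratStrat (xs n)) := by
    refine ⟨fun i => ?_, ?_⟩
    · simp only [ratStrat, xs]; push_cast; positivity
    · simp only [ratStrat, xs]
      push_cast
      rw [← Finset.sum_div, Fin.sum_univ_eq_sum_range (fun i => (num n i : ℝ)), NN,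
        ← Nat.cast_sum, sum_num]
      exact div_self hD.ne'
  have hy : IsMixed (ratStrat (ys n)) := by
    refine ⟨fun i => ?_, ?_⟩
    · simp only [ratStrat, ys]; push_cast; positivity
    · simp only [ratStrat, ys]
      push_cast
      simp [hN.ne']
  have const : ∀ {x u : Fin (NN n) → ℝ} {v : ℝ}, IsMixed x → (∀ i, u i = v) →
      ∑ i, x i * u i = v := by
    intro x u v hx hu
    rw [Finset.sum_congr rfl fun i _ => by rw [hu i], ← Finset.sum_mul, hx.2, one_mul]
  refine ⟨hx, hy, fun x' hx' => le_of_eq ?_, fun y' hy' => le_of_eq ?_⟩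
  · have h : ∀ i, ∑ j, (((1 : Matrix (Fin (NN n)) (Fin (NN n)) ℤ) i j : ℤ) : ℝ) *
        ratStrat (ys n) j = 1 / NN n := by
      intro i
      rw [one_row]
      simp [ratStrat, ys]
    rw [payoff_row, payoff_row, const hx' h, const hx h]
  · have h : ∀ j, ∑ i, ratStrat (xs n) i * (bigB n i j : ℝ) = (num n (offs n) : ℝ) / den n := by
      intro j
      have e : ∀ i : Fin (NN n), ratStrat (xs n) i = (fun i : ℕ => (num n i : ℝ) / den n) i := by
        intro i
        simp [ratStrat, xs]
      simp only [e]
      rcases index_cases j with rfl | ⟨k, hk, c, hc, hj⟩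
      · exact col_zero n (fun i : ℕ => (num n i : ℝ) / den n)
      · rw [col_block (fun i : ℕ => (num n i : ℝ) / den n) hk hc j hj, blockSum]
        have hb : ∀ l ≤ nthPrime k, (num n (offs k + l) : ℝ) / den n =
            (num n (offs n) : ℝ) / den n / nthPrime k := by
          intro l hl
          have hp : (nthPrime k : ℝ) ≠ 0 := by exact_mod_cast (nthPrime_prime k).ne_zero
          rw [← mul_num_block hk hl]
          push_cast
          field_simp
        have hp : (nthPrime k : ℝ) ≠ 0 := by exact_mod_cast (nthPrime_prime k).ne_zero
        rw [hb _ (Nat.lt_succ_iff.1 (Nat.mod_lt _ (Nat.succ_pos _))),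
          Finset.sum_congr rfl fun l hl => hb l (Nat.lt_succ_iff.1 (Finset.mem_range.1 hl)),
          Finset.sum_const, Finset.card_range, nsmul_eq_mul]
        push_cast
        field_simp
        ring
    rw [payoff_col, payoff_col, const hy' h, const hy h]

/-- Every equilibrium is `(xs n, ys n)`: by full support all the best-reply conditions are
equalities, which form a linear system that determines both strategies. -/
lemma nash_unique {n : ℕ} {x y : Fin (NN n) → ℝ}
    (h : IsNash (1 : Matrix (Fin (NN n)) (Fin (NN n)) ℤ) (bigB n) x y) :
    x = ratStrat (xs n) ∧ y = ratStrat (ys n) := by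
  obtain ⟨hx, hy, hA, hB⟩ := h
  have hN : (0 : ℝ) < NN n := by exact_mod_cast NN_pos n
  simp only [payoff_row, one_row] at hA
  simp only [payoff_col] at hB
  obtain ⟨v, hv, hxv⟩ := best_reply hx hA
  obtain ⟨w, hw, hyw⟩ := best_reply hy hB
  have hvpos : 0 < v := by
    by_contra! hv0
    have := Finset.sum_nonpos fun i (_ : i ∈ Finset.univ) => (hv i).trans hv0
    rw [hy.2] at this
    linarith
  -- Extension by zero makes block arithmetic on indices possible.
  let X : ℕ → ℝ := fun i => if h : i < NN n then x ⟨i, h⟩ else 0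
  have hX : ∀ i : Fin (NN n), x i = X i := fun i => by simp [X]
  have h0 : ∀ i, 0 ≤ X i := fun i => by
    simp only [X]; split_ifs; exacts [hx.1 _, le_rfl]
  have hsum : ∑ i ∈ Finset.range (offs n + 1), X i = 1 := by
    rw [← hx.2, Finset.sum_congr rfl fun i _ => hX i, Fin.sum_univ_eq_sum_range X, NN]
  simp only [hX] at hw hyw hxv
  have br : ∀ j : Fin (NN n), 0 < X j → ∑ i : Fin (NN n), X i * (bigB n i j : ℝ) = w :=
    fun j hj => hyw j (by rw [hxv j hj]; exact hvpos)
  have modl : ∀ k l, l < nthPrime k → (l + 1) % (nthPrime k + 1) = l + 1 := fun k l hl =>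
    Nat.mod_eq_of_lt (by omega)
  have idx : ∀ k < n, ∀ c ≤ nthPrime k, offs k + c + 1 < NN n := fun k hk c hc => by
    have := block_lt hk hc
    simp only [NN]; omega
  have H2a : X (offs n) ≤ w := by rw [← col_zero n X]; exact hw 0
  have H2b : ∀ k < n, ∀ l ≤ nthPrime k, blockSum X k - X (offs k + l) ≤ w := by
    intro k hk l hl
    rcases l with _ | l
    · have := hw ⟨_, idx k hk (nthPrime k) le_rfl⟩
      rwa [col_block X hk le_rfl _ rfl, Nat.mod_self] at this
    · have := hw ⟨_, idx k hk l (by omega)⟩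
      rwa [col_block X hk (by omega) _ rfl, modl k l (by omega)] at this
  have H1a : 0 < X 0 → X (offs n) = w := fun hp => by rw [← col_zero n X]; exact br 0 hp
  have H1b : ∀ k < n, ∀ l ≤ nthPrime k, 1 ≤ l → 0 < X (offs k + l) →
      blockSum X k - X (offs k + l) = w := by
    intro k hk l hl hl1 hp
    obtain ⟨l, rfl⟩ := Nat.exists_eq_add_of_le' hl1
    have := br ⟨_, idx k hk l (by omega)⟩ hp
    rwa [col_block X hk (by omega) _ rfl, modl k l (by omega)] at this
  have H1c : ∀ k < n, 0 < X (offs (k + 1)) → blockSum X k - X (offs k) = w := by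
    intro k hk hp
    rw [offs_succ] at hp
    have := br ⟨_, idx k hk (nthPrime k) le_rfl⟩ hp
    rwa [col_block X hk le_rfl _ rfl, Nat.mod_self] at this
  have full := full_support h0 hsum H2a H2b H1a H1b H1c
  have full' : ∀ i : Fin (NN n), 0 < X i := fun i => full i (Nat.lt_succ_iff.1 i.2)
  constructor
  · have hlast : X (offs n) = w := H1a (full 0 (Nat.zero_le _))
    have hblock : ∀ k < n, ∀ l ≤ nthPrime k, nthPrime k * X (offs k + l) = w := by
      intro k hk
      have hc : ∀ l ≤ nthPrime k, X (offs k + l) = blockSum X k - w := by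
        intro l hl
        rcases Nat.eq_zero_or_pos l with rfl | hl1
        · have := H1c k hk (full _ (offs_strictMono.monotone hk))
          simp only [add_zero]
          linarith
        · have := H1b k hk l hl hl1 (full _ (block_lt hk hl).le)
          linarith
      have hS : blockSum X k = (nthPrime k + 1) * (blockSum X k - w) := by
        conv_lhs => rw [blockSum]
        rw [Finset.sum_congr rfl fun l hl => hc l (Nat.lt_succ_iff.1 (Finset.mem_range.1 hl)),
          Finset.sum_const, Finset.card_range, nsmul_eq_mul]
        push_cast
        rfl
      intro l hl
      rw [hc l hl]
      linarith
    -- `X` is proportional to `num`, with ratio `w` divided by the product of all the primes.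
    have hP : (0 : ℝ) < num n (offs n) := by exact_mod_cast num_pos n _
    have hprop : ∀ i ≤ offs n, X i = w / num n (offs n) * num n i := by
      intro i hi
      rcases hi.eq_or_lt with rfl | hi
      · rw [hlast]; field_simp
      obtain ⟨k, hk, l, hl, rfl⟩ := exists_block hi
      have hp : (0 : ℝ) < nthPrime k := by exact_mod_cast (nthPrime_prime k).pos
      have hq : (0 : ℝ) < num n (offs k + l) := by exact_mod_cast num_pos n _
      rw [← mul_num_block hk hl, ← hblock k hk l hl]
      push_cast
      field_simp
    have hD : (0 : ℝ) < den n := by exact_mod_cast den_pos n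
    have hr : w / num n (offs n) * den n = 1 := by
      rw [← hsum, Finset.sum_congr rfl fun i hi => hprop i
        (Nat.lt_succ_iff.1 (Finset.mem_range.1 hi)), ← Finset.mul_sum, ← sum_num]
      push_cast
      rfl
    funext i
    rw [hX, hprop i (Nat.lt_succ_iff.1 i.2), eq_div_of_mul_eq hD.ne' hr]
    simp only [ratStrat, xs]
    push_cast
    ring
  · have hyc : ∀ i, y i = v := fun i => hxv i (full' i)
    have := hy.2
    simp only [hyc, Finset.sum_const, Finset.card_univ, Fintype.card_fin, nsmul_eq_mul] at this
    funext i
    rw [hyc, eq_div_of_mul_eq hN.ne' ((mul_comm v _).trans this)]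
    simp [ratStrat, ys]

lemma ratStrat_injective {n : ℕ} : Function.Injective (ratStrat (n := n)) := by
  intro a b h
  funext i
  exact Rat.cast_injective (congrFun h i)

/-- The game `(I_N, B)` built from the first `n` primes has a unique Nash
equilibrium; it is fully mixed, `y` is uniform on `[N]`, `C₂ = N` and
`C₁ = (n+1)·∏ p_k + Σ_k ∏_{l≠k} p_l`. -/
theorem statement8 (n : ℕ) (hn : 1 ≤ n) :
    (∃! p : (Fin (NN n) → ℝ) × (Fin (NN n) → ℝ),
      IsNash (1 : Matrix (Fin (NN n)) (Fin (NN n)) ℤ) (bigB n) p.1 p.2) ∧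
    (∀ x y : Fin (NN n) → ℝ,
      IsNash (1 : Matrix (Fin (NN n)) (Fin (NN n)) ℤ) (bigB n) x y →
        (∀ i, 0 < x i) ∧ (∀ i, 0 < y i) ∧ y = fun _ => 1 / (NN n : ℝ)) ∧
    C2 (1 : Matrix (Fin (NN n)) (Fin (NN n)) ℤ) (bigB n) = NN n ∧
    C1 (1 : Matrix (Fin (NN n)) (Fin (NN n)) ℤ) (bigB n) =
      (n + 1) * ∏ k ∈ Finset.range n, nthPrime k +
        ∑ k ∈ Finset.range n, ∏ l ∈ (Finset.range n).erase k, nthPrime l := by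
  refine ⟨⟨(ratStrat (xs n), ratStrat (ys n)), nash_star n, fun p hp => ?_⟩, ?_, ?_, ?_⟩
  · exact Prod.ext (nash_unique hp).1 (nash_unique hp).2
  · intro x y h
    obtain ⟨rfl, rfl⟩ := nash_unique h
    have hN : (0 : ℝ) < NN n := by exact_mod_cast NN_pos n
    have hD : (0 : ℝ) < den n := by exact_mod_cast den_pos n
    refine ⟨fun i => ?_, fun i => ?_, ?_⟩
    · have hq : (0 : ℝ) < num n i := by exact_mod_cast num_pos n _
      simp only [ratStrat, xs]
      push_cast
      positivity
    · simp only [ratStrat, ys]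
      push_cast
      positivity
    · funext i
      simp [ratStrat, ys]
  · have : {q | ∃ x y : Fin (NN n) → ℚ, IsNash (1 : Matrix (Fin (NN n)) (Fin (NN n)) ℤ) (bigB n)
        (ratStrat x) (ratStrat y) ∧ Cx y = q} = {NN n} := by
      ext q
      constructor
      · rintro ⟨x, y, h, rfl⟩
        rw [ratStrat_injective (nash_unique h).2]
        exact Cx_ys n
      · rintro rfl
        exact ⟨_, _, nash_star n, Cx_ys n⟩
    rw [C2, this, csInf_singleton]
  · have : {q | ∃ x y : Fin (NN n) → ℚ, IsNash (1 : Matrix (Fin (NN n)) (Fin (NN n)) ℤ) (bigB n)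
        (ratStrat x) (ratStrat y) ∧ Cx x = q} = {den n} := by
      ext q
      constructor
      · rintro ⟨x, y, h, rfl⟩
        rw [ratStrat_injective (nash_unique h).1]
        exact Cx_xs n
      · rintro rfl
        exact ⟨_, _, nash_star n, Cx_xs n⟩
    rw [C1, this, csInf_singleton, den]
end
end

section
/- For every n ≥ 4, (−1)^n · b_n > 0; in particular b_n ≠ 0 for every n ≥ 4. -/
/-- The sequence `a` : `a₁ = a₂ = a₃ = 1`, `a₄ = 0`,
`aₙ = aₙ₋₂ − aₙ₋₃ + aₙ₋₄` for `n ≥ 5` (index 0 is a dummy value). -/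
def aseq : ℕ → ℤ
  | 0 => 1
  | 1 => 1
  | 2 => 1
  | 3 => 1
  | 4 => 0
  | n + 5 => aseq (n + 3) - aseq (n + 2) + aseq (n + 1)

/-- The sequence `b` : `b₁ = 0`, `b₂ = 1`, `b₃ = 0`, `b₄ = 1`,
`bₙ = bₙ₋₂ − bₙ₋₃ + bₙ₋₄` for `n ≥ 5` (index 0 is a dummy value). -/
def bseq : ℕ → ℤ
  | 0 => 0
  | 1 => 0
  | 2 => 1
  | 3 => 0
  | 4 => 1
  | n + 5 => bseq (n + 3) - bseq (n + 2) + bseq (n + 1)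

/-- With `cₙ = (−1)ⁿ bₙ` the recurrence becomes `cₙ = cₙ₋₂ + cₙ₋₃ + cₙ₋₄`, all of whose
coefficients are positive; so positivity propagates from `c₄, c₅, c₆, c₇ = 1, 1, 2, 2`. -/
theorem bseq_signed_pos (n : ℕ) : 0 < (-1 : ℤ) ^ (n + 4) * bseq (n + 4) := by
  induction n using Nat.strong_induction_on with
  | _ n ih =>
    match n, ih with
    | 0, _ => simp [bseq]
    | 1, _ => simp [bseq]
    | 2, _ => simp [bseq]
    | 3, _ => simp [bseq]
    | m + 4, ih =>
      have h0 := ih m (by omega)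
      have h1 := ih (m + 1) (by omega)
      have h2 := ih (m + 2) (by omega)
      have hrec : bseq (m + 4 + 4) = bseq (m + 2 + 4) - bseq (m + 1 + 4) + bseq (m + 4) := by
        rw [bseq]
      rw [hrec]
      simp only [pow_succ] at h0 h1 h2 ⊢
      linarith

/-- For every `n ≥ 4`, `(−1)ⁿ · bₙ > 0`; in particular `bₙ ≠ 0` for every `n ≥ 4`. -/
theorem statement10 :
    (∀ n : ℕ, 4 ≤ n → 0 < (-1 : ℤ) ^ n * bseq n) ∧
      ∀ n : ℕ, 4 ≤ n → bseq n ≠ 0 := by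
  have hpos : ∀ n : ℕ, 4 ≤ n → 0 < (-1 : ℤ) ^ n * bseq n := by
    intro n hn
    obtain ⟨k, rfl⟩ := Nat.exists_eq_add_of_le' hn
    exact bseq_signed_pos k
  exact ⟨hpos, fun n hn h => by simpa [h] using hpos n hn⟩
end

section
/- For integers 1 ≤ m < n, there exists no α ∈ ℝ with (a_n, b_n) = α·(a_m, b_m) if and only if (m,n) ∉ {(1,3), (4,6), (5,7)}. -/
namespace NestedSlopes

lemma aseq_rec (n : ℕ) : aseq (n + 4) = 2 - aseq (n + 3) - aseq (n + 1) := by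
  induction n with
  | zero => simp [aseq]
  | succ n ih =>
    have h : aseq (n + 1 + 4) = aseq (n + 3) - aseq (n + 2) + aseq (n + 1) := rfl
    rw [h, show n + 1 + 3 = n + 4 by ring, show n + 1 + 1 = n + 2 by ring, ih]
    ring

lemma bseq_rec (n : ℕ) : bseq (n + 4) = 1 - bseq (n + 3) - bseq (n + 1) := by
  induction n with
  | zero => simp [bseq]
  | succ n ih =>
    have h : bseq (n + 1 + 4) = bseq (n + 3) - bseq (n + 2) + bseq (n + 1) := rfl
    rw [h, show n + 1 + 3 = n + 4 by ring, show n + 1 + 1 = n + 2 by ring, ih]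
    ring

/-- The determinant of `(2, 1)` and `(aₙ, bₙ)`, up to the sign `(-1)ⁿ`. -/
def F (n : ℕ) : ℤ := (-1) ^ n * (2 * bseq n - aseq n)

/-- The determinant of `(aₙ, bₙ)` and `(aₙ₊₂, bₙ₊₂)`, up to the sign `(-1)ⁿ`. -/
def W (n : ℕ) : ℤ := (-1) ^ n * (aseq n * bseq (n + 2) - aseq (n + 2) * bseq n)

/-- The determinant of `(aₙ, bₙ)` and `(aₙ₊₁, bₙ₊₁)`, up to the sign `(-1)ⁿ⁺¹`. -/
def U (n : ℕ) : ℤ := (-1) ^ n * (aseq (n + 1) * bseq n - aseq n * bseq (n + 1))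

lemma F_rec (n : ℕ) : F (n + 4) = F (n + 3) + F (n + 1) := by
  simp only [F, aseq_rec, bseq_rec, pow_succ]
  ring

lemma W_rec (n : ℕ) : W (n + 4) = F (n + 3) - W (n + 2) - W (n + 1) := by
  have a4 := aseq_rec n
  have b4 := bseq_rec n
  have a5 := aseq_rec (n + 1)
  have b5 := bseq_rec (n + 1)
  have a6 := aseq_rec (n + 2)
  have b6 := bseq_rec (n + 2)
  simp only [add_assoc, Nat.reduceAdd] at a5 b5 a6 b6
  simp only [F, W, add_assoc, Nat.reduceAdd, a6, b6, a5, b5, a4, b4, pow_succ]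
  ring

lemma U_rec (n : ℕ) : U (n + 3) = F (n + 3) - W (n + 1) := by
  simp only [F, W, U, add_assoc, Nat.reduceAdd, aseq_rec, bseq_rec, pow_succ]
  ring

/-- `F (n+1) / F n` stays in `[10/7, 3/2]` and `W n / F n` stays in `[1/8, 2/3]` for `n ≥ 6`;
three consecutive indices are carried along because the recurrences have order three. -/
lemma invariant (n : ℕ) :
    0 < F (n + 6) ∧
    (10 * F (n + 6) ≤ 7 * F (n + 7) ∧ 2 * F (n + 7) ≤ 3 * F (n + 6)) ∧
    (10 * F (n + 7) ≤ 7 * F (n + 8) ∧ 2 * F (n + 8) ≤ 3 * F (n + 7)) ∧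
    (F (n + 6) ≤ 8 * W (n + 6) ∧ 3 * W (n + 6) ≤ 2 * F (n + 6)) ∧
    (F (n + 7) ≤ 8 * W (n + 7) ∧ 3 * W (n + 7) ≤ 2 * F (n + 7)) ∧
    (F (n + 8) ≤ 8 * W (n + 8) ∧ 3 * W (n + 8) ≤ 2 * F (n + 8)) := by
  induction n with
  | zero => simp [F, W, aseq, bseq]
  | succ n ih =>
    have hF := F_rec (n + 5)
    have hW := W_rec (n + 5)
    simp only [add_assoc, Nat.reduceAdd] at hF hW ⊢
    omega

lemma W_pos (n : ℕ) : 0 < W (n + 6) := by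
  have := invariant n
  omega

lemma U_pos (n : ℕ) : 0 < U (n + 6) := by
  match n with
  | 0 => simp [U, aseq, bseq]
  | 1 => simp [U, aseq, bseq]
  | n + 2 =>
    have h := invariant n
    have hU := U_rec (n + 5)
    simp only [add_assoc, Nat.reduceAdd] at hU ⊢
    omega

/-- `|bₙ|` for `n ≥ 4`; see `c_pos`. -/
def c (n : ℕ) : ℤ := (-1) ^ n * bseq n

/-- `aₙ` with the sign normalised so that `α n / c n` is the slope `aₙ / bₙ`. -/
def α (n : ℕ) : ℤ := (-1) ^ n * aseq n

lemma c_rec (n : ℕ) : c (n + 4) = (-1) ^ n + c (n + 3) + c (n + 1) := by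
  simp only [c, bseq_rec, pow_succ]
  ring

lemma c_pos (n : ℕ) : 0 < c (n + 4) := by
  suffices h : 0 < c (n + 4) ∧ 0 < c (n + 5) ∧ 0 < c (n + 6) from h.1
  induction n with
  | zero => simp [c, bseq]
  | succ n ih =>
    have h := c_rec (n + 3)
    simp only [add_assoc, Nat.reduceAdd] at h ⊢
    rcases neg_one_pow_eq_or ℤ (n + 3) with hs | hs <;> rw [hs] at h <;> omega

lemma det_trans {x₁ x₂ x₃ y₁ y₂ y₃ : ℤ} (h₁ : 0 < y₁) (h₂ : 0 < y₂) (h₃ : 0 < y₃)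
    (h : x₂ * y₁ < x₁ * y₂) (h' : x₃ * y₂ < x₂ * y₃) : x₃ * y₁ < x₁ * y₃ := by
  refine lt_of_mul_lt_mul_right ?_ h₂.le
  calc x₃ * y₁ * y₂ = x₃ * y₂ * y₁ := by ring
    _ < x₂ * y₃ * y₁ := mul_lt_mul_of_pos_right h' h₁
    _ = x₂ * y₁ * y₃ := by ring
    _ < x₁ * y₂ * y₃ := mul_lt_mul_of_pos_right h h₃
    _ = x₁ * y₃ * y₂ := by ring

lemma sq_sign (n : ℕ) : ((-1 : ℤ) ^ n) * (-1) ^ n = 1 := by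
  rw [← mul_pow]; simp

/-- From index `n ≥ 6`, all later slopes lie strictly below `aₙ / bₙ` if `n` is even, and strictly
above if `n` is odd. Steps of one and two are the positivity of `U` and `W`; longer steps
follow by chaining steps of two, which preserve parity. -/
lemma nested (k n : ℕ) :
    (-1) ^ n * α (n + 6 + (k + 1)) * c (n + 6) < (-1) ^ n * α (n + 6) * c (n + 6 + (k + 1)) := by
  induction k using Nat.twoStepInduction generalizing n with
  | zero =>
    have h := U_pos n
    have e : (-1) ^ n * α (n + 6) * c (n + 7) - (-1) ^ n * α (n + 7) * c (n + 6) = U (n + 6) := by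
      simp only [α, c, U, pow_add]
      linear_combination (aseq (n + 7) * bseq (n + 6) - aseq (n + 6) * bseq (n + 7))
        * (-1) ^ n * sq_sign n
    simp only [add_assoc, Nat.reduceAdd]
    linarith
  | one =>
    have h := W_pos n
    have e : (-1) ^ n * α (n + 6) * c (n + 8) - (-1) ^ n * α (n + 8) * c (n + 6) = W (n + 6) := by
      simp only [α, c, W, pow_add]
      linear_combination (aseq (n + 6) * bseq (n + 8) - aseq (n + 8) * bseq (n + 6))
        * (-1) ^ n * sq_sign n
    simp only [add_assoc, Nat.reduceAdd]
    linarith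
  | more k ih₁ ih₂ =>
    have h := W_pos n
    have e : (-1) ^ n * α (n + 6) * c (n + 8) - (-1) ^ n * α (n + 8) * c (n + 6) = W (n + 6) := by
      simp only [α, c, W, pow_add]
      linear_combination (aseq (n + 6) * bseq (n + 8) - aseq (n + 8) * bseq (n + 6))
        * (-1) ^ n * sq_sign n
    have h' := ih₁ (n + 2)
    rw [show n + 2 + 6 + (k + 1) = n + 6 + (k + 2 + 1) by ring, show n + 2 + 6 = n + 8 by ring,
      show (-1 : ℤ) ^ (n + 2) = (-1) ^ n by simp [pow_add]] at h'
    refine det_trans (y₂ := c (n + 8)) (c_pos (n + 2)) (c_pos (n + 4)) ?_ (by linarith) h'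
    rw [show n + 6 + (k + 2 + 1) = (n + k + 5) + 4 by ring]
    exact c_pos _

lemma det_eq (m n : ℕ) (h : aseq n * bseq m = aseq m * bseq n) : α n * c m = α m * c n := by
  simp only [α, c]
  linear_combination (-1) ^ n * (-1) ^ m * h

lemma det_ne_of_six_le (m n : ℕ) (hm : 6 ≤ m) (hmn : m < n) :
    aseq n * bseq m ≠ aseq m * bseq n := by
  intro h
  obtain ⟨m, rfl⟩ := Nat.exists_eq_add_of_le' hm
  obtain ⟨k, rfl⟩ := Nat.exists_eq_add_of_lt hmn
  have h1 := nested k m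
  have h2 := det_eq _ _ h
  rw [add_assoc] at h2
  simp only [mul_assoc, h2] at h1
  exact lt_irrefl _ h1

/-- The slopes `aₙ / bₙ` with `n ≥ 8` lie strictly between `r₇ = -1` and `r₆ = 0`. -/
lemma slope_bounds (n : ℕ) : α (n + 8) < 0 ∧ 0 < α (n + 8) + c (n + 8) := by
  have h6 := nested (n + 1) 0
  have h7 := nested n 1
  rw [show 0 + 6 + (n + 1 + 1) = n + 8 by ring] at h6
  rw [show 1 + 6 + (n + 1) = n + 8 by ring] at h7
  have e1 : α 6 = 0 := by simp [α, aseq]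
  have e2 : c 6 = 2 := by simp [c, bseq]
  have e3 : α 7 = -2 := by simp [α, aseq]
  have e4 : c 7 = 2 := by simp [c, bseq]
  norm_num [e1, e2, e3, e4] at h6 h7
  omega

lemma det_ne_of_le_five (m n : ℕ) (hm : 1 ≤ m) (hm' : m ≤ 5) (hmn : m < n)
    (hex : ¬ ((m = 1 ∧ n = 3) ∨ (m = 4 ∧ n = 6) ∨ (m = 5 ∧ n = 7))) :
    aseq n * bseq m ≠ aseq m * bseq n := by
  intro h
  rcases lt_or_ge n 8 with hn | hn
  · interval_cases m <;> interval_cases n <;> simp_all [aseq, bseq]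
  · obtain ⟨n, rfl⟩ := Nat.exists_eq_add_of_le' hn
    have h2 := det_eq _ _ h
    have hs := slope_bounds n
    have hc := c_pos (n + 4)
    simp only [add_assoc, Nat.reduceAdd] at hc
    interval_cases m <;> norm_num [show α 1 = -1 by simp [α, aseq], show c 1 = 0 by simp [c, bseq],
      show α 2 = 1 by simp [α, aseq], show c 2 = 1 by simp [c, bseq],
      show α 3 = -1 by simp [α, aseq], show c 3 = 0 by simp [c, bseq],
      show α 4 = 0 by simp [α, aseq], show c 4 = 1 by simp [c, bseq],
      show α 5 = -1 by simp [α, aseq], show c 5 = 1 by simp [c, bseq]] at h2 <;> omega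

end NestedSlopes

/-- For `1 ≤ m < n`, there is no `α ∈ ℝ` with `(aₙ, bₙ) = α·(aₘ, bₘ)` iff
`(m,n) ∉ {(1,3), (4,6), (5,7)}`. -/
theorem statement11 (m n : ℕ) (hm : 1 ≤ m) (hmn : m < n) :
    (¬ ∃ α : ℝ, (aseq n : ℝ) = α * (aseq m : ℝ) ∧ (bseq n : ℝ) = α * (bseq m : ℝ)) ↔
      (m, n) ∉ ({(1, 3), (4, 6), (5, 7)} : Set (ℕ × ℕ)) := by
  simp only [Set.mem_insert_iff, Set.mem_singleton_iff, Prod.mk.injEq]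
  refine not_congr ⟨?_, ?_⟩
  · rintro ⟨t, ha, hb⟩
    by_contra hex
    have h : aseq n * bseq m = aseq m * bseq n := by
      have : (aseq n : ℝ) * bseq m = aseq m * bseq n := by rw [ha, hb]; ring
      exact_mod_cast this
    rcases le_or_gt m 5 with h5 | h5
    · exact NestedSlopes.det_ne_of_le_five m n hm h5 hmn hex h
    · exact NestedSlopes.det_ne_of_six_le m n h5 hmn h
  · rintro (⟨rfl, rfl⟩ | ⟨rfl, rfl⟩ | ⟨rfl, rfl⟩)
    · exact ⟨1, by simp [aseq, bseq]⟩
    · exact ⟨2, by norm_num [aseq, bseq]⟩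
    · exact ⟨2, by norm_num [aseq, bseq]⟩
end

section
/- det B₁ = 1, det B₂ = 1, det B₃ = 2, and for every n ≥ 4, det B_n = det B_{n−1} + det B_{n−3}. Moreover, for every n ≥ 2, det β_n = (−1)^{n+1} · det B_{n−1}. -/
/-! Everything follows from Laplace expansion along the first column. For `Bₙ` the column has
ones in rows `1` and `3`; the corresponding minors are `det Bₙ₋₁` and, after successively stripping two first rows with
a single nonzero entry (`det_Bmat_minor`), `det Bₙ₋₃`. For `βₙ` the column has a single one in the
last row, with minor `det Bₙ₋₁` and sign `(-1)^(n-1)`. -/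

/-- The matrix `Bₙ ∈ {0,1}^{n×n}` with ones exactly on the main diagonal, the
diagonal above it, and the second diagonal below it. -/
def Bmat (n : ℕ) : Matrix (Fin n) (Fin n) ℤ :=
  Matrix.of fun i j =>
    if (j : ℕ) = (i : ℕ) ∨ (j : ℕ) = (i : ℕ) + 1 ∨ (i : ℕ) = (j : ℕ) + 2 then 1 else 0

/-- The matrix `βₙ ∈ {0,1}^{n×n}`: rows `1..n−1`, columns `2..n` form the block
`Bₙ₋₁`, entry `(n,1)` equals `1`, and all remaining entries are `0`
(here written with 0-based indices). -/
def betaMat (n : ℕ) : Matrix (Fin n) (Fin n) ℤ :=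
  Matrix.of fun i j =>
    if (i : ℕ) = n - 1 then (if (j : ℕ) = 0 then 1 else 0)
    else if (j : ℕ) = 0 then 0
    else if (j : ℕ) = (i : ℕ) + 1 ∨ (j : ℕ) = (i : ℕ) + 2 ∨ (i : ℕ) = (j : ℕ) + 1
      then 1 else 0

/-- The minor of `Bₖ₊₃` obtained by deleting row `3` and column `1`: its first two rows are
`(1, 0, 0, …)` and `(1, 1, 0, …)`, and the block below and to the right of them is `Bₖ`. -/
lemma det_Bmat_minor (k : ℕ) :
    ((Bmat (k + 3)).submatrix (Fin.succAbove 2) Fin.succ).det = (Bmat k).det := by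
  have hm : 2 % (k + 2 + 1) = 2 := Nat.mod_eq_of_lt (by omega)
  have h0 : (Fin.succAbove (2 : Fin (k + 3)) 0 : Fin (k + 3)) = 0 := by
    ext; simp [Fin.succAbove, Fin.lt_def, hm]
  have h1 : (Fin.succAbove (2 : Fin (k + 3)) 1 : Fin (k + 3)) = 1 := by
    ext; simp [Fin.succAbove, Fin.lt_def, hm]
  have h2 (i : Fin k) : (Fin.succAbove (2 : Fin (k + 3)) i.succ.succ : Fin (k + 3)) =
      i.succ.succ.succ := by
    ext; simp [Fin.succAbove, Fin.lt_def, hm]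
  rw [Matrix.det_succ_row_zero, Fin.sum_univ_succ, Finset.sum_eq_zero, add_zero]
  · rw [Matrix.det_succ_row_zero, Fin.sum_univ_succ, Finset.sum_eq_zero, add_zero]
    · have hsub : ((((Bmat (k + 3)).submatrix (Fin.succAbove 2) Fin.succ).submatrix Fin.succ
          (Fin.succAbove 0)).submatrix Fin.succ (Fin.succAbove 0)) = Bmat k := by
        ext i j
        simp [Bmat, h2, add_assoc]
      rw [hsub]
      simp [Bmat, h0, h1]
    · intro j _
      simp [Bmat, h1]
  · intro j _
    simp [Bmat, h0]

/-- Expansion of `det Bₖ₊₃` along the first column, whose only nonzero entries are in rows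
`1` and `3`. -/
lemma det_Bmat_add_three (k : ℕ) :
    (Bmat (k + 3)).det = (Bmat (k + 2)).det + (Bmat k).det := by
  rw [Matrix.det_succ_column_zero, Fin.sum_univ_succ, Fin.sum_univ_succ, Fin.sum_univ_succ,
    Finset.sum_eq_zero, add_zero]
  · have hsub : (Bmat (k + 3)).submatrix (Fin.succAbove 0) Fin.succ = Bmat (k + 2) := by
      ext i j
      simp [Bmat]
    have h2 : (Fin.succ (Fin.succ 0) : Fin (k + 3)) = 2 := rfl
    have hm : 2 % (k + 2 + 1) = 2 := Nat.mod_eq_of_lt (by omega)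
    rw [hsub, h2, det_Bmat_minor]
    simp [Bmat, hm]
  · intro i _
    simp [Bmat]

/-- Expansion of `det βₘ₊₁` along the first column, whose only nonzero entry is in the last
row. -/
lemma det_betaMat_succ (m : ℕ) :
    (betaMat (m + 1)).det = (-1) ^ m * (Bmat m).det := by
  rw [Matrix.det_succ_column_zero, Finset.sum_eq_single (Fin.last m)]
  · have hsub : (betaMat (m + 1)).submatrix (Fin.last m).succAbove Fin.succ = Bmat m := by
      ext i j
      have := i.isLt
      simp [Bmat, betaMat, this.ne]
    rw [hsub]
    simp [betaMat]
  · intro i _ hi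
    have : (i : ℕ) ≠ m := fun h => hi (Fin.ext h)
    simp [betaMat, this]
  · simp

/-- `det B₁ = 1`, `det B₂ = 1`, `det B₃ = 2`, `det Bₙ = det Bₙ₋₁ + det Bₙ₋₃` for
`n ≥ 4`, and `det βₙ = (−1)^{n+1} · det Bₙ₋₁` for `n ≥ 2`. -/
theorem statement12 :
    (Bmat 1).det = 1 ∧ (Bmat 2).det = 1 ∧ (Bmat 3).det = 2 ∧
      (∀ n : ℕ, 4 ≤ n → (Bmat n).det = (Bmat (n - 1)).det + (Bmat (n - 3)).det) ∧
      ∀ n : ℕ, 2 ≤ n → (betaMat n).det = (-1 : ℤ) ^ (n + 1) * (Bmat (n - 1)).det := by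
  refine ⟨?_, ?_, ?_, ?_, ?_⟩
  · simp [Bmat]
  · simp [Bmat, Matrix.det_fin_two]
  · simp [Bmat, Matrix.det_fin_three]
  · intro n hn
    obtain ⟨k, rfl⟩ := Nat.exists_eq_add_of_le' (show 3 ≤ n by omega)
    exact det_Bmat_add_three k
  · intro n hn
    obtain ⟨m, rfl⟩ := Nat.exists_eq_add_of_le' (show 1 ≤ n by omega)
    rw [det_betaMat_succ, Nat.add_sub_cancel]
    ring
end

section
/- For every n ≥ 1 with n ∉ {3, 6, 7}, the game (Iₙ, βₙ) has a unique Nash equilibrium (x,y); it is fully mixed, and y is the uniform distribution on [n]. -/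
/-!
Write `n = N + 1`. In an equilibrium `(x, y)` of `(I, β)`, player 1 only plays rows where `y` is
maximal, and player 2 only plays columns where the payoff `c = xᵀβ` attains its maximum `v`. Hence
`c ≤ v` and `x j > 0 → c j = v`: a linear complementarity problem in `x` alone.

Read `x` without its last entry `t` backwards, as a sequence `s` with `s 0 = s 1 = 0` and
`s k = x (N + 1 - k)` for `2 ≤ k ≤ N + 1`. Then column `N - m` (for `m < N`) pays
`s m + s (m + 2) + s (m + 3)` and column `0` pays `t`. The complementarity problem forces every
entry to be positive (`lcp_first_pos`, `lcp_pos`): if `q` is the first zero of `s` past index `1`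
and `q ≥ 7`, the equations at `q - 2`, `q - 3`, `q - 5` and the inequality at `q - 1` give `s (q - 5) ≤ 0`;
the values `q ≤ 6` are excluded one at a time, and this is where `N ∉ {2, 5, 6}` is needed. So `x`
is fully mixed, `y` is constant, and `s` solves the recurrence `s (m + 3) = v - s m - s (m + 2)`
with `s (N + 2) = 0`. The homogeneous recurrence has solutions `(-1) ^ k * cow k * s 2`, where
`cow k > 0` for `k ≥ 2`, so `x` is unique (`hom_zero`).

For existence, choose the initial value `a` so that the solution `seq a` of the recurrence with
`v = 1` vanishes at `N + 2`. If `seq a` had a nonpositive value before `N + 2`, it would, from there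
or a few terms later on, alternate strictly in sign (`alternating`), and so could not vanish at
`N + 2` (`seq_pos`); `N ∉ {2, 5, 6}` is used again for the first few indices.
-/

noncomputable section

/-! ### The complementarity problem -/

/-- The linear complementarity problem of the game `(I, β)` with `n = N + 1`, in terms of the
last entry `t` of player 1's strategy and the reversed sequence `s` of the other entries; `v` is
player 2's best payoff. -/
structure LCP (N : ℕ) (s : ℕ → ℝ) (t v : ℝ) : Prop where
  zero : s 0 = 0
  one : s 1 = 0
  high : ∀ k, N + 2 ≤ k → s k = 0
  nonneg : ∀ k, 0 ≤ s k
  tnonneg : 0 ≤ t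
  le : ∀ m, m < N → s m + s (m + 2) + s (m + 3) ≤ v
  eq : ∀ m, m < N → 0 < s (m + 1) → s m + s (m + 2) + s (m + 3) = v
  eq0 : 0 < N → 0 < t → s 0 + s 2 + s 3 = v
  tle : t ≤ v
  teq : 0 < s (N + 1) → t = v
  vpos : 0 < v

/-- The first row is played: otherwise, for the last positive index `q` of `s`, the column
matching `q` forces `s (q - 1) = v`, and the column paying `s (q - 1) + s q + ⋯` exceeds `v`. -/
lemma lcp_first_pos {N : ℕ} (hN : 1 ≤ N) {s : ℕ → ℝ} {t v : ℝ} (h : LCP N s t v)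
    (hne : 0 < t ∨ ∃ k, 0 < s k) : 0 < s (N + 1) := by
  by_contra hcon
  have hv := h.vpos
  have hex : ∃ k, 0 < s k := by
    rcases hne with ht | hk
    · have h0 := h.eq0 hN ht
      by_contra! hk
      have := hk 0
      have := hk 2
      have := hk 3
      linarith
    · exact hk
  have hb : ∀ k, 0 < s k → k ≤ N + 1 := by
    intro k hk
    by_contra! hlt
    have := h.high k (by omega)
    linarith
  classical
  obtain ⟨k, hk⟩ := hex
  obtain ⟨q, hq0, hqmax⟩ : ∃ q, 0 < s q ∧ ∀ j, q < j → s j = 0 := by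
    refine ⟨Nat.findGreatest (fun k => 0 < s k) (N + 1), ?_, ?_⟩
    · exact Nat.findGreatest_spec (P := fun k => 0 < s k) (hb k hk) hk
    · intro j hj
      refine le_antisymm ?_ (h.nonneg j)
      by_contra! hpos
      exact Nat.findGreatest_is_greatest (P := fun k => 0 < s k) hj (hb j hpos) hpos
  have hqN : q ≤ N := by
    have h1 := hb q hq0
    rcases Nat.lt_or_ge N q with h2 | h2
    · exact absurd (by rwa [show q = N + 1 by omega] at hq0) hcon
    · exact h2
  have hq2 : 2 ≤ q := by
    by_contra! hlt
    interval_cases q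
    · exact hq0.ne' h.zero
    · exact hq0.ne' h.one
  obtain ⟨m, rfl⟩ : ∃ m, q = m + 2 := ⟨q - 2, by omega⟩
  have e1 := h.eq (m + 1) (by omega) hq0
  have z1 := hqmax (m + 1 + 2) (by omega)
  have z2 := hqmax (m + 1 + 3) (by omega)
  rcases m with _ | m
  · have := h.one
    simp only [zero_add] at e1 z1 z2
    linarith
  · have e2 := h.le m (by omega)
    have n1 := h.nonneg m
    simp only [add_assoc, Nat.reduceAdd] at *
    linarith

/-- Every entry of a solution is positive. -/
lemma lcp_pos {N : ℕ} (hN : 1 ≤ N) (h2 : N ≠ 2) (h5 : N ≠ 5) (h6 : N ≠ 6)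
    {s : ℕ → ℝ} {t v : ℝ} (h : LCP N s t v) (hne : 0 < t ∨ ∃ k, 0 < s k) :
    t = v ∧ ∀ k, 2 ≤ k → k ≤ N + 1 → 0 < s k := by
  have hlast := lcp_first_pos hN h hne
  have htv := h.teq hlast
  have hv := h.vpos
  refine ⟨htv, ?_⟩
  intro k
  induction k using Nat.strong_induction_on with
  | _ q ih =>
  intro hq2 hqN
  by_contra hcon
  have hz : s q = 0 := le_antisymm (not_lt.mp hcon) (h.nonneg q)
  have hqN' : q ≤ N := by
    rcases Nat.lt_or_ge N q with h2 | h2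
    · rw [show q = N + 1 by omega] at hz
      exact absurd hz hlast.ne'
    · exact h2
  have s0 := h.zero
  have s1 := h.one
  have e0 := h.eq0 hN (htv ▸ hv)
  have nn := h.nonneg
  have hnot : ∀ j, s j = 0 → N + 1 ≠ j := by
    rintro j hj rfl
    exact hlast.ne' hj
  rcases Nat.lt_or_ge q 7 with hq7 | hq7
  · interval_cases q
    · have l1 := h.le 1 (by omega)
      simp only [Nat.reduceAdd] at l1
      have z4 : s 4 = 0 := le_antisymm (by linarith) (nn 4)
      have := hnot 4 z4
      have e2 := h.eq 2 (by omega) (by simp only [Nat.reduceAdd]; linarith)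
      have l3 := h.le 3 (by omega)
      simp only [Nat.reduceAdd] at e2 l3
      linarith [nn 6]
    · have p2 := ih 2 (by omega) (by omega) (by omega)
      have e1 := h.eq 1 (by omega) p2
      have l2 := h.le 2 (by omega)
      simp only [Nat.reduceAdd] at e1 l2
      linarith [nn 5]
    · have p2 := ih 2 (by omega) (by omega) (by omega)
      have e1 := h.eq 1 (by omega) p2
      simp only [Nat.reduceAdd] at e1
      linarith
    · have p2 := ih 2 (by omega) (by omega) (by omega)
      have p3 := ih 3 (by omega) (by omega) (by omega)
      have p4 := ih 4 (by omega) (by omega) (by omega)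
      have e1 := h.eq 1 (by omega) p2
      have e2 := h.eq 2 (by omega) p3
      have e3 := h.eq 3 (by omega) p4
      have l4 := h.le 4 (by omega)
      simp only [Nat.reduceAdd] at e1 e2 e3 l4
      have z7 : s 7 = 0 := le_antisymm (by linarith) (nn 7)
      have := hnot 7 z7
      have e5 := h.eq 5 (by omega) (by simp only [Nat.reduceAdd]; linarith)
      have l6 := h.le 6 (by omega)
      simp only [Nat.reduceAdd] at e5 l6
      linarith [nn 9]
    · have p2 := ih 2 (by omega) (by omega) (by omega)
      have p3 := ih 3 (by omega) (by omega) (by omega)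
      have p4 := ih 4 (by omega) (by omega) (by omega)
      have p5 := ih 5 (by omega) (by omega) (by omega)
      have e1 := h.eq 1 (by omega) p2
      have e2 := h.eq 2 (by omega) p3
      have e3 := h.eq 3 (by omega) p4
      have e4 := h.eq 4 (by omega) p5
      have l5 := h.le 5 (by omega)
      simp only [Nat.reduceAdd] at e1 e2 e3 e4 l5
      have z8 : s 8 = 0 := le_antisymm (by linarith) (nn 8)
      have := hnot 8 z8
      have e6 := h.eq 6 (by omega) (by simp only [Nat.reduceAdd]; linarith)
      have l7 := h.le 7 (by omega)
      simp only [Nat.reduceAdd] at e6 l7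
      linarith [nn 10]
  · obtain ⟨r, rfl⟩ : ∃ r, q = r + 5 := ⟨q - 5, by omega⟩
    have p0 := ih r (by omega) (by omega) (by omega)
    have e0 := h.eq r (by omega) (ih (r + 1) (by omega) (by omega) (by omega))
    have e2 := h.eq (r + 2) (by omega) (ih (r + 3) (by omega) (by omega) (by omega))
    have e3 := h.eq (r + 3) (by omega) (ih (r + 4) (by omega) (by omega) (by omega))
    have l4 := h.le (r + 4) (by omega)
    simp only [add_assoc, Nat.reduceAdd] at *
    linarith [nn (r + 7)]

/-! ### The linear recurrence -/

/-- Narayana's cows sequence `0, 0, 1, 1, 1, 2, 3, 4, 6, …`: up to sign, the fundamental solution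
of the homogeneous recurrence `d (m + 3) = -d m - d (m + 2)`. -/
def cow : ℕ → ℝ
  | 0 => 0
  | 1 => 0
  | 2 => 1
  | (m + 3) => cow (m + 2) + cow m

/-- The solution of `s (m + 3) = 1 - s m - s (m + 2)` with `s 0 = s 1 = 0` and `s 2 = a`. -/
def seq (a : ℝ) : ℕ → ℝ
  | 0 => 0
  | 1 => 0
  | 2 => a
  | (m + 3) => 1 - seq a m - seq a (m + 2)

lemma cow_nonneg (k : ℕ) : 0 ≤ cow k := by
  induction k using Nat.strong_induction_on with
  | _ k ih =>
  match k with
  | 0 => simp [cow]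
  | 1 => simp [cow]
  | 2 => simp [cow]
  | (m + 3) =>
    rw [cow]
    exact add_nonneg (ih _ (by omega)) (ih _ (by omega))

lemma cow_pos (k : ℕ) : 0 < cow (k + 2) := by
  induction k with
  | zero => simp [cow]
  | succ k ih =>
    rw [show k + 1 + 2 = k + 3 by omega, cow]
    linarith [cow_nonneg k]

/-- `seq a k` is affine in `a`, with slope `(-1) ^ k * cow k`. -/
lemma seq_affine (a : ℝ) (k : ℕ) : seq a k = seq 0 k + (-1) ^ k * cow k * a := by
  induction k using Nat.strong_induction_on with
  | _ k ih =>
  match k with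
  | 0 => simp [cow, seq]
  | 1 => simp [cow, seq]
  | 2 => simp [cow, seq]
  | (m + 3) =>
    rw [seq, seq, cow, ih m (by omega), ih (m + 2) (by omega)]
    ring

lemma exists_seq_zero (N : ℕ) : ∃ a, seq a (N + 2) = 0 := by
  have h := (cow_pos N).ne'
  refine ⟨-((-1) ^ (N + 2) * seq 0 (N + 2) / cow (N + 2)), ?_⟩
  rw [seq_affine]
  have h1 : ((-1 : ℝ) ^ (N + 2)) * (-1) ^ (N + 2) = 1 := by
    rw [← mul_pow]; simp
  field_simp
  linear_combination (-(seq 0 (N + 2))) * h1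

/-- A solution of the homogeneous boundary value problem vanishes. -/
lemma hom_zero {N : ℕ} {d : ℕ → ℝ} (h0 : d 0 = 0) (h1 : d 1 = 0)
    (hr : ∀ m, m < N → d m + d (m + 2) + d (m + 3) = 0) (hend : d (N + 2) = 0) :
    ∀ k, k ≤ N + 2 → d k = 0 := by
  have key : ∀ k, k ≤ N + 2 → d k = (-1) ^ k * cow k * d 2 := by
    intro k
    induction k using Nat.strong_induction_on with
    | _ k ih =>
    intro hk
    match k with
    | 0 => simp [cow, h0]
    | 1 => simp [cow, h1]
    | 2 => simp [cow]
    | (m + 3) =>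
      have := hr m (by omega)
      have i1 := ih m (by omega) (by omega)
      have i2 := ih (m + 2) (by omega) (by omega)
      rw [cow]
      rw [pow_add] at i2 ⊢
      linear_combination this - i1 - i2
  have hd2 : d 2 = 0 := by
    have := key (N + 2) le_rfl
    rw [hend] at this
    have hc := (cow_pos N).ne'
    have hp : ((-1 : ℝ) ^ (N + 2)) ≠ 0 := by simp
    rcases mul_eq_zero.mp this.symm with h | h
    · exact absurd h (mul_ne_zero hp hc)
    · exact h
  intro k hk
  rw [key k hk, hd2, mul_zero]

/-- The sign pattern `≤ 0, > 0, < 0` propagates under the recurrence, so that no later term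
vanishes. -/
lemma alternating {a : ℝ} {q : ℕ} (h0 : seq a q ≤ 0) (h1 : 0 < seq a (q + 1))
    (h2 : seq a (q + 2) < 0) : ∀ k, q < k → seq a k ≠ 0 := by
  have key : ∀ j, seq a (q + 2 * j) ≤ 0 ∧ 0 < seq a (q + 2 * j + 1) ∧
      seq a (q + 2 * j + 2) < 0 := by
    intro j
    induction j with
    | zero => exact ⟨h0, h1, h2⟩
    | succ j ih =>
      obtain ⟨i0, i1, i2⟩ := ih
      have e3 : seq a (q + 2 * j + 3) = 1 - seq a (q + 2 * j) - seq a (q + 2 * j + 2) := rfl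
      have e4 : seq a (q + 2 * j + 1 + 3) =
        1 - seq a (q + 2 * j + 1) - seq a (q + 2 * j + 1 + 2) := rfl
      rw [show q + 2 * (j + 1) = q + 2 * j + 2 by ring]
      simp only [add_assoc, Nat.reduceAdd] at *
      refine ⟨i2.le, ?_, ?_⟩ <;> linarith
  intro k hk
  obtain ⟨j, hj | hj⟩ : ∃ j, k = q + 2 * j + 1 ∨ k = q + 2 * j + 2 := by
    refine ⟨(k - q - 1) / 2, ?_⟩
    omega
  · rw [hj]; exact (key j).2.1.ne'
  · rw [hj]; exact (key j).2.2.ne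

lemma seq_pos {N : ℕ} (hN : 1 ≤ N) (h2 : N ≠ 2) (h5 : N ≠ 5) (h6 : N ≠ 6) {a : ℝ}
    (ha : seq a (N + 2) = 0) : ∀ k, 2 ≤ k → k ≤ N + 1 → 0 < seq a k := by
  have e0 : seq a 0 = 0 := rfl
  have e1 : seq a 1 = 0 := rfl
  have e2 : seq a 2 = a := rfl
  have rec' : ∀ m, seq a (m + 3) = 1 - seq a m - seq a (m + 2) := fun m => rfl
  have e3 : seq a 3 = 1 - a := by rw [rec' 0, e0, e2]; ring
  have e4 : seq a 4 = a := by rw [rec' 1, e1, e3]; ring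
  have e5 : seq a 5 = 1 - 2 * a := by rw [rec' 2, e2, e4]; ring
  have e6 : seq a 6 = 3 * a - 1 := by rw [rec' 3, e3, e5]; ring
  have e7 : seq a 7 = 2 - 4 * a := by rw [rec' 4, e4, e6]; ring
  have e8 : seq a 8 = 6 * a - 2 := by rw [rec' 5, e5, e7]; ring
  have e9 : seq a 9 = 4 - 9 * a := by rw [rec' 6, e6, e8]; ring
  have e10 : seq a 10 = 13 * a - 5 := by rw [rec' 7, e7, e9]; ring
  intro q
  induction q using Nat.strong_induction_on with
  | _ q ih =>
  intro hq2 hqN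
  by_contra! hcon
  -- For small `q` the sign pattern of `alternating` starts at or slightly after `q`.
  rcases Nat.lt_or_ge q 7 with hq7 | hq7
  · interval_cases q
    · rcases Nat.lt_or_ge N 3 with hN3 | hN3
      · obtain rfl : N = 1 := by omega
        simp only [Nat.reduceAdd] at ha
        linarith
      · exact alternating (a := a) (q := 4) (by linarith)
          (by simp only [Nat.reduceAdd]; linarith) (by simp only [Nat.reduceAdd]; linarith)
          (N + 2) (by omega) ha
    · exact alternating (a := a) (q := 3) (by linarith)
        (by simp only [Nat.reduceAdd]; linarith) (by simp only [Nat.reduceAdd]; linarith)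
        (N + 2) (by omega) ha
    · have := ih 2 (by omega) (by omega) (by omega)
      linarith
    · rcases Nat.lt_or_ge N 6 with hN6 | hN6
      · obtain rfl : N = 4 := by omega
        simp only [Nat.reduceAdd] at ha
        linarith
      · exact alternating (a := a) (q := 7) (by linarith)
          (by simp only [Nat.reduceAdd]; linarith) (by simp only [Nat.reduceAdd]; linarith)
          (N + 2) (by omega) ha
    · exact alternating (a := a) (q := 8) (by linarith)
        (by simp only [Nat.reduceAdd]; linarith) (by simp only [Nat.reduceAdd]; linarith)
        (N + 2) (by omega) ha
  · obtain ⟨r, rfl⟩ : ∃ r, q = r + 5 := ⟨q - 5, by omega⟩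
    have p0 := ih r (by omega) (by omega) (by omega)
    have p1 := ih (r + 1) (by omega) (by omega) (by omega)
    have p3 := ih (r + 3) (by omega) (by omega) (by omega)
    have r0 := rec' r
    have r1 := rec' (r + 1)
    have r2 := rec' (r + 2)
    have r3 := rec' (r + 3)
    have r4 := rec' (r + 4)
    refine alternating (a := a) (q := r + 5) hcon ?_ ?_ (N + 2) (by omega) ha <;>
    · simp only [add_assoc, Nat.reduceAdd] at *
      linarith

/-! ### Best responses -/

/-- Player 2's payoff from column `j` against the strategy `x`. -/
def colPay {n : ℕ} (B : Matrix (Fin n) (Fin n) ℤ) (x : Fin n → ℝ) (j : Fin n) : ℝ :=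
  ∑ i, x i * (B i j : ℝ)

lemma payoff_eq_colPay {n : ℕ} (B : Matrix (Fin n) (Fin n) ℤ) (x y : Fin n → ℝ) :
    payoff B x y = ∑ j, colPay B x j * y j := by
  unfold payoff colPay
  rw [Finset.sum_comm]
  exact Finset.sum_congr rfl fun j _ => (Finset.sum_mul ..).symm

lemma colPay_one {n : ℕ} (x : Fin n → ℝ) :
    colPay (1 : Matrix (Fin n) (Fin n) ℤ) x = x := by
  funext j
  unfold colPay
  simp [Matrix.one_apply]

lemma isMixed_single {n : ℕ} (i : Fin n) : IsMixed (Pi.single i (1 : ℝ)) := by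
  constructor
  · intro j
    by_cases h : j = i
    · subst h; simp
    · simp [h]
  · simp

/-- A mixed strategy `y` maximizing the linear function `c` is supported on the maximizers of
`c`. -/
lemma best_response {n : ℕ} {c y : Fin n → ℝ} (hy : IsMixed y)
    (h : ∀ y', IsMixed y' → ∑ j, c j * y' j ≤ ∑ j, c j * y j) :
    (∀ j, c j ≤ ∑ j, c j * y j) ∧ ∀ j, 0 < y j → c j = ∑ j, c j * y j := by
  have hle : ∀ j, c j ≤ ∑ j, c j * y j := by
    intro j
    simpa [Pi.single_apply] using h _ (isMixed_single j)
  refine ⟨hle, ?_⟩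
  set w := ∑ j, c j * y j with hw
  have hsum : ∑ j, (w - c j) * y j = 0 := by
    simp only [sub_mul, Finset.sum_sub_distrib, ← Finset.mul_sum, hy.2]
    rw [← hw]; ring
  have hz := (Finset.sum_eq_zero_iff_of_nonneg
    (fun j _ => mul_nonneg (sub_nonneg.mpr (hle j)) (hy.1 j))).mp hsum
  intro j hj
  have := hz j (Finset.mem_univ j)
  rcases mul_eq_zero.mp this with h | h
  · linarith
  · exact absurd h hj.ne'

/-- In an equilibrium of `(I, B)`, player 1 plays only rows where `y` is maximal; such a row,
read as a column, lies in the support of `y`, so it is also a best response of player 2. -/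
lemma nash_one {n : ℕ} {B : Matrix (Fin n) (Fin n) ℤ} {x y : Fin n → ℝ}
    (h : IsNash (1 : Matrix (Fin n) (Fin n) ℤ) B x y) :
    ∃ u v : ℝ, (∀ j, 0 < x j → y j = u) ∧ 0 < u ∧ (∀ j, colPay B x j ≤ v) ∧
      ∀ j, 0 < x j → colPay B x j = v := by
  obtain ⟨hx, hy, h1, h2⟩ := h
  simp only [payoff_eq_colPay, colPay_one] at h1 h2
  have b1 := best_response (c := y) hx (by
    intro x' hx'
    simpa only [mul_comm] using h1 x' hx')
  have b2 := best_response hy h2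
  set u := ∑ j, y j * x j
  set v := ∑ j, colPay B x j * y j
  have hu : 0 < u := by
    by_contra! hu
    have : ∑ j, y j ≤ 0 := Finset.sum_nonpos fun j _ => (b1.1 j).trans hu
    linarith [hy.2]
  refine ⟨u, v, b1.2, hu, b2.1, fun j hj => b2.2 j ?_⟩
  rw [b1.2 j hj]; exact hu

/-- If `x` makes player 2 indifferent, then `x` with the uniform strategy is an equilibrium. -/
lemma nash_of_const {N : ℕ} {B : Matrix (Fin (N + 1)) (Fin (N + 1)) ℤ} {x : Fin (N + 1) → ℝ}
    {w : ℝ} (hx : IsMixed x) (hc : ∀ j, colPay B x j = w) :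
    IsNash (1 : Matrix (Fin (N + 1)) (Fin (N + 1)) ℤ) B x
      (fun _ => 1 / ((N + 1 : ℕ) : ℝ)) := by
  have hpos : (0 : ℝ) < ((N + 1 : ℕ) : ℝ) := by positivity
  have hy : IsMixed (fun _ : Fin (N + 1) => 1 / ((N + 1 : ℕ) : ℝ)) := by
    refine ⟨fun _ => by positivity, ?_⟩
    rw [Finset.sum_const, Finset.card_univ, Fintype.card_fin, nsmul_eq_mul]
    field_simp
  refine ⟨hx, hy, ?_, ?_⟩
  · intro x' hx'
    simp only [payoff_eq_colPay, colPay_one, ← Finset.sum_mul, hx.2, hx'.2, le_refl]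
  · intro y' hy'
    simp only [payoff_eq_colPay, hc, ← Finset.mul_sum, hy.2, hy'.2, le_refl]

/-! ### The columns of `β` -/

/-- The reversed sequence of all entries of `x` but the last, shifted by two:
`rev x k = x (N + 1 - k)` for `2 ≤ k ≤ N + 1`, and `0` otherwise. -/
def rev {N : ℕ} (x : Fin (N + 1) → ℝ) (k : ℕ) : ℝ :=
  ∑ i : Fin (N + 1), if 2 ≤ k ∧ (i : ℕ) + k = N + 1 then x i else 0

lemma rev_low {N : ℕ} (x : Fin (N + 1) → ℝ) {k : ℕ} (hk : k < 2) : rev x k = 0 := by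
  refine Finset.sum_eq_zero fun i _ => if_neg (by omega)

lemma rev_high {N : ℕ} (x : Fin (N + 1) → ℝ) {k : ℕ} (hk : N + 2 ≤ k) : rev x k = 0 := by
  refine Finset.sum_eq_zero fun i _ => if_neg (by omega)

lemma rev_eq {N : ℕ} (x : Fin (N + 1) → ℝ) {k : ℕ} (hk : 2 ≤ k) (i : Fin (N + 1))
    (hi : (i : ℕ) + k = N + 1) : rev x k = x i := by
  unfold rev
  rw [Finset.sum_eq_single i]
  · rw [if_pos ⟨hk, hi⟩]
  · intro j _ hj
    refine if_neg fun h => hj (Fin.ext (by omega))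
  · simp

lemma colPay_zero {N : ℕ} (x : Fin (N + 1) → ℝ) :
    colPay (betaMat (N + 1)) x 0 = x (Fin.last N) := by
  unfold colPay
  rw [Finset.sum_eq_single (Fin.last N)]
  · simp [betaMat]
  · intro j _ hj
    have : (j : ℕ) ≠ N := fun h => hj (Fin.ext h)
    simp [betaMat, this]
  · simp

lemma colPay_succ {N : ℕ} (x : Fin (N + 1) → ℝ) {m : ℕ} (hm : m < N) (j : Fin (N + 1))
    (hj : (j : ℕ) + m = N) :
    colPay (betaMat (N + 1)) x j = rev x m + rev x (m + 2) + rev x (m + 3) := by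
  unfold colPay rev
  rw [← Finset.sum_add_distrib, ← Finset.sum_add_distrib]
  refine Finset.sum_congr rfl fun i _ => ?_
  have hi := i.isLt
  simp only [betaMat, Matrix.of_apply]
  split_ifs <;> first | omega | simp

/-- A strategy of player 1 whose support lies among player 2's best columns solves the
complementarity problem. The maximum `v` is positive since every entry
of `x` contributes to some column. -/
lemma lcp_of_colPay {N : ℕ} (hN : 1 ≤ N) {x : Fin (N + 1) → ℝ} (hx : IsMixed x) {v : ℝ}
    (hle : ∀ j, colPay (betaMat (N + 1)) x j ≤ v)
    (heq : ∀ j, 0 < x j → colPay (betaMat (N + 1)) x j = v) :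
    LCP N (rev x) (x (Fin.last N)) v := by
  have nn : ∀ k, 0 ≤ rev x k := by
    intro k
    refine Finset.sum_nonneg fun i _ => ?_
    split_ifs
    · exact hx.1 i
    · exact le_rfl
  have hle' : ∀ m, m < N → rev x m + rev x (m + 2) + rev x (m + 3) ≤ v := by
    intro m hm
    rw [← colPay_succ x hm ⟨N - m, by omega⟩ (by simp only; omega)]
    exact hle _
  have htle : x (Fin.last N) ≤ v := by
    rw [← colPay_zero x]; exact hle 0
  refine ⟨rev_low x (by omega), rev_low x (by omega), fun k hk => rev_high x hk, nn,
    hx.1 _, hle', ?_, ?_, htle, ?_, ?_⟩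
  · intro m hm hpos
    have h1 : 1 ≤ m := by
      by_contra! h
      rw [rev_low x (by omega)] at hpos
      exact lt_irrefl _ hpos
    rw [rev_eq x (by omega) ⟨N - m, by omega⟩ (by simp only; omega)] at hpos
    rw [← colPay_succ x hm ⟨N - m, by omega⟩ (by simp only; omega)]
    exact heq _ hpos
  · intro _ ht
    rw [← heq _ ht]
    exact (colPay_succ x (m := 0) hN (Fin.last N) (by simp)).symm
  · intro hpos
    rw [rev_eq x (by omega) 0 (by simp)] at hpos
    rw [← heq 0 hpos, colPay_zero]
  · by_contra! hv
    have : ∑ i, x i ≤ 0 := by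
      refine Finset.sum_nonpos fun i _ => ?_
      by_cases hi : i = Fin.last N
      · rw [hi]; linarith
      · have hiN : (i : ℕ) < N := by
          have := i.isLt
          have : (i : ℕ) ≠ N := fun h => hi (Fin.ext h)
          omega
        have := hle' (N - 1 - i) (by omega)
        rw [rev_eq x (k := N - 1 - i + 2) (by omega) i (by omega)] at this
        linarith [nn (N - 1 - i), nn (N - 1 - i + 3)]
    linarith [hx.2]

/-- In an equilibrium `x` is fully mixed, `y` is uniform, and the reversed sequence of `x` solves
the recurrence. -/
lemma nash_full {N : ℕ} (hN : 1 ≤ N) (h2 : N ≠ 2) (h5 : N ≠ 5) (h6 : N ≠ 6)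
    {x y : Fin (N + 1) → ℝ}
    (h : IsNash (1 : Matrix (Fin (N + 1)) (Fin (N + 1)) ℤ) (betaMat (N + 1)) x y) :
    (∀ i, 0 < x i) ∧ y = (fun _ => 1 / ((N + 1 : ℕ) : ℝ)) ∧
      ∀ m, m < N → rev x m + rev x (m + 2) + rev x (m + 3) = x (Fin.last N) := by
  obtain ⟨u, v, hy, hu, hle, heq⟩ := nash_one h
  have hx := h.1
  have L := lcp_of_colPay hN hx hle heq
  have hne : 0 < x (Fin.last N) ∨ ∃ k, 0 < rev x k := by
    by_contra! hcon
    obtain ⟨i, -, hi⟩ : ∃ i ∈ Finset.univ, 0 < x i := by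
      refine Finset.exists_lt_of_sum_lt (f := fun _ => (0 : ℝ)) ?_
      rw [hx.2]; simp
    by_cases hl : i = Fin.last N
    · rw [hl] at hi; linarith [hcon.1]
    · have hiN : (i : ℕ) ≠ N := fun h => hl (Fin.ext h)
      have := hcon.2 (N + 1 - i)
      rw [rev_eq x (by omega) i (by omega)] at this
      linarith
  obtain ⟨htv, hpos⟩ := lcp_pos hN h2 h5 h6 L hne
  have hxp : ∀ i, 0 < x i := by
    intro i
    by_cases hl : i = Fin.last N
    · rw [hl, htv]; exact L.vpos
    · have hiN : (i : ℕ) ≠ N := fun h => hl (Fin.ext h)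
      rw [← rev_eq x (k := N + 1 - i) (by omega) i (by omega)]
      exact hpos _ (by omega) (by omega)
  refine ⟨hxp, ?_, ?_⟩
  · have hs := h.2.1.2
    simp only [fun j => hy j (hxp j), Finset.sum_const, Finset.card_univ, Fintype.card_fin,
      nsmul_eq_mul] at hs
    funext j
    rw [hy j (hxp j), eq_div_iff (by positivity)]
    linarith
  · intro m hm
    rw [htv, ← colPay_succ x hm ⟨N - m, by omega⟩ (by simp only; omega)]
    exact heq _ (hxp _)

/-- Two strategies whose reversed sequences solve the recurrence are proportional, hence equal. -/
lemma strategy_unique {N : ℕ} {x x' : Fin (N + 1) → ℝ} (hx : IsMixed x) (hx' : IsMixed x')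
    (hp : 0 < x (Fin.last N))
    (hr : ∀ m, m < N → rev x m + rev x (m + 2) + rev x (m + 3) = x (Fin.last N))
    (hr' : ∀ m, m < N → rev x' m + rev x' (m + 2) + rev x' (m + 3) = x' (Fin.last N)) :
    x = x' := by
  set v := x (Fin.last N)
  set v' := x' (Fin.last N)
  have hd := hom_zero (N := N) (d := fun k => v' * rev x k - v * rev x' k)
    (by simp [rev_low]) (by simp [rev_low])
    (by
      intro m hm
      have e1 := hr m hm
      have e2 := hr' m hm
      linear_combination v' * e1 - v * e2)
    (by simp [rev_high])
  have hprop : ∀ i, v' * x i = v * x' i := by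
    intro i
    by_cases hl : i = Fin.last N
    · rw [hl]; exact mul_comm _ _
    · have hiN : (i : ℕ) ≠ N := fun h => hl (Fin.ext h)
      have := hd (N + 1 - i) (by omega)
      simp only [rev_eq x (k := N + 1 - i) (by omega) i (by omega),
        rev_eq x' (k := N + 1 - i) (by omega) i (by omega)] at this
      linarith
  have hvv : v' = v := by
    have : ∑ i, v' * x i = ∑ i, v * x' i := Finset.sum_congr rfl fun i _ => hprop i
    simpa only [← Finset.mul_sum, hx.2, hx'.2, mul_one] using this
  funext i
  have := hprop i
  rw [hvv] at this
  exact mul_left_cancel₀ hp.ne' this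

lemma exists_nash {N : ℕ} (hN : 1 ≤ N) (h2 : N ≠ 2) (h5 : N ≠ 5) (h6 : N ≠ 6) :
    ∃ x y : Fin (N + 1) → ℝ,
      IsNash (1 : Matrix (Fin (N + 1)) (Fin (N + 1)) ℤ) (betaMat (N + 1)) x y := by
  obtain ⟨a, ha⟩ := exists_seq_zero N
  have hpos := seq_pos hN h2 h5 h6 ha
  set T : ℝ := 1 + ∑ i : Fin N, seq a (N + 1 - i) with hT
  have hTpos : 0 < T := by
    have : 0 ≤ ∑ i : Fin N, seq a (N + 1 - i) :=
      Finset.sum_nonneg fun i _ => (hpos _ (by omega) (by omega)).le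
    linarith
  let x : Fin (N + 1) → ℝ := Fin.snoc (fun i : Fin N => seq a (N + 1 - i) / T) (1 / T)
  have hlast : x (Fin.last N) = 1 / T := Fin.snoc_last ..
  have hcast : ∀ i : Fin N, x i.castSucc = seq a (N + 1 - i) / T := fun i =>
    Fin.snoc_castSucc ..
  have hx : IsMixed x := by
    constructor
    · intro i
      refine Fin.lastCases ?_ (fun i => ?_) i
      · rw [hlast]; positivity
      · rw [hcast]
        exact div_nonneg (hpos _ (by omega) (by omega)).le hTpos.le
    · rw [Fin.sum_univ_castSucc, hlast]
      simp only [hcast]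
      rw [← Finset.sum_div, ← add_div, add_comm, ← hT, div_self hTpos.ne']
  have hrev : ∀ k, k ≤ N + 2 → rev x k = seq a k / T := by
    intro k hk
    rcases Nat.lt_or_ge k 2 with h | h
    · rw [rev_low x h]
      interval_cases k <;> simp [seq]
    · rcases Nat.lt_or_ge k (N + 2) with h' | h'
      · rw [rev_eq x h (Fin.castSucc ⟨N + 1 - k, by omega⟩)
          (by simp only [Fin.val_castSucc]; omega), hcast]
        congr 2
        simp only
        omega
      · rw [rev_high x h', show k = N + 2 by omega, ha, zero_div]
  refine ⟨x, _, nash_of_const (w := 1 / T) hx ?_⟩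
  intro j
  rcases Nat.eq_zero_or_pos (j : ℕ) with hj | hj
  · rw [show j = 0 from Fin.ext hj, colPay_zero, hlast]
  · have hjN := j.isLt
    rw [colPay_succ x (m := N - j) (by omega) j (by omega), hrev _ (by omega),
      hrev _ (by omega), hrev _ (by omega), seq]
    ring

/-- For every `n ≥ 1` with `n ∉ {3,6,7}`, the game `(Iₙ, βₙ)` has a unique Nash
equilibrium; it is fully mixed and player 2's strategy is uniform on `[n]`. -/
theorem statement13 (n : ℕ) (hn : 1 ≤ n) (h3 : n ≠ 3) (h6 : n ≠ 6) (h7 : n ≠ 7) :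
    (∃! p : (Fin n → ℝ) × (Fin n → ℝ),
      IsNash (1 : Matrix (Fin n) (Fin n) ℤ) (betaMat n) p.1 p.2) ∧
    ∀ x y : Fin n → ℝ, IsNash (1 : Matrix (Fin n) (Fin n) ℤ) (betaMat n) x y →
      (∀ i, 0 < x i) ∧ (∀ i, 0 < y i) ∧ y = fun _ => 1 / (n : ℝ) := by
  obtain ⟨N, rfl⟩ : ∃ N, n = N + 1 := ⟨n - 1, by omega⟩
  rcases Nat.eq_zero_or_pos N with rfl | hN
  ·
    -- With a single action each, the only mixed strategy is the constant `1`.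
    have hmix : ∀ x : Fin (0 + 1) → ℝ, IsMixed x → x = fun _ => 1 := by
      intro x hx
      have hs : ∑ i : Fin 1, x i = 1 := hx.2
      funext i
      rw [Fin.sum_univ_one] at hs
      rw [show i = 0 from Subsingleton.elim (α := Fin 1) i 0]
      exact hs
    have hone : IsMixed (fun _ : Fin (0 + 1) => (1 : ℝ)) := ⟨fun _ => zero_le_one, by simp⟩
    refine ⟨⟨(fun _ => 1, fun _ => 1), ⟨hone, hone, ?_, ?_⟩, ?_⟩, ?_⟩
    · intro x' hx'
      rw [hmix x' hx']
    · intro y' hy'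
      rw [hmix y' hy']
    · rintro ⟨x, y⟩ h
      exact Prod.ext (hmix x h.1) (hmix y h.2.1)
    · intro x y h
      rw [hmix x h.1, hmix y h.2.1]
      simp
  · have full := fun x y => nash_full (x := x) (y := y) hN (by omega) (by omega) (by omega)
    obtain ⟨x₀, y₀, h₀⟩ := exists_nash hN (by omega) (by omega) (by omega)
    obtain ⟨-, hy₀, hr₀⟩ := full x₀ y₀ h₀
    refine ⟨⟨(x₀, y₀), h₀, ?_⟩, ?_⟩
    · rintro ⟨x, y⟩ h
      obtain ⟨hx, hy, hr⟩ := full x y h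
      exact Prod.ext (strategy_unique h.1 h₀.1 (hx _) hr hr₀) (hy.trans hy₀.symm)
    · intro x y h
      obtain ⟨hx, hy, -⟩ := full x y h
      refine ⟨hx, fun i => ?_, hy⟩
      rw [hy]
      positivity
end
end

section
/- Let A, B ∈ ℤ^{2×2} be such that the game (A,B) has no pure Nash equilibrium, and assume A₁₁ > A₂₁. Then B₁₂ > B₁₁, B₂₁ > B₂₂, A₂₂ > A₁₂, and C₁(A,B) = (B₁₂ − B₁₁ + B₂₁ − B₂₂) / gcd(B₁₂ − B₁₁, B₂₁ − B₂₂) and C₂(A,B) = (A₁₁ − A₂₁ + A₂₂ − A₁₂) / gcd(A₁₁ − A₂₁, A₂₂ − A₁₂). -/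
/-!
Write `a = A₀₀ - A₁₀`, `c = A₁₁ - A₀₁`, `b = B₀₁ - B₀₀`, `d = B₁₀ - B₁₁`. Given `a > 0`, the failure
of the pure profiles `(0,0)`, `(0,1)`, `(1,1)` to be equilibria forces, in this order, `b > 0`, `c > 0`
and `d > 0`.

For mixed `x`, `x'`, `y`, `y'` the gains from deviating are
`(x'₀ - x₀) * E` with `E = y₀ (a + c) - c` for player 1, and
`(y'₀ - y₀) * F` with `F = d - x₀ (b + d)` for player 2.
Testing against the two pure deviations of each player shows that a nonzero `E` or `F` sends the
players around the best-response cycle, a contradiction; so `E = F = 0` at every equilibrium, and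
conversely `E = F = 0` makes every deviation gain vanish (`isNash_iff`). Hence the equilibrium is
unique: `x = (d, b) / (b + d)` and `y = (c, a) / (a + c)`. Dividing by the gcd gives fractions in
lowest terms, from which the complexities are read off (`Cx_eq`).
-/

noncomputable section

/-- The pure (deterministic) mixed strategy concentrated on `i`. -/
def pureStrat {n : ℕ} (i : Fin n) : Fin n → ℝ := fun k => if k = i then 1 else 0

lemma isMixed_two {x : Fin 2 → ℝ} : IsMixed x ↔ 0 ≤ x 0 ∧ 0 ≤ x 1 ∧ x 0 + x 1 = 1 := by
  simp [IsMixed, Fin.forall_fin_two, Fin.sum_univ_two, and_assoc]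

lemma isMixed_pure_s18 (i : Fin 2) : IsMixed (pureStrat i) := by
  rw [isMixed_two]
  fin_cases i <;> simp [pureStrat]

/-- The gain of player 1 from deviating from `x` to `x'`. -/
lemma payoff_sub_left (M : Matrix (Fin 2) (Fin 2) ℤ) {x x' y : Fin 2 → ℝ}
    (hx : IsMixed x) (hx' : IsMixed x') :
    payoff M x' y - payoff M x y =
      (x' 0 - x 0) * (y 0 * (M 0 0 - M 1 0 : ℝ) - y 1 * (M 1 1 - M 0 1 : ℝ)) := by
  rw [isMixed_two] at hx hx'
  have h1 : x 1 = 1 - x 0 := by linarith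
  have h2 : x' 1 = 1 - x' 0 := by linarith
  simp only [payoff, Fin.sum_univ_two, h1, h2]
  ring

/-- The gain of player 2 from deviating from `y` to `y'`. -/
lemma payoff_sub_right (M : Matrix (Fin 2) (Fin 2) ℤ) {x y y' : Fin 2 → ℝ}
    (hy : IsMixed y) (hy' : IsMixed y') :
    payoff M x y' - payoff M x y =
      (y' 0 - y 0) * (x 1 * (M 1 0 - M 1 1 : ℝ) - x 0 * (M 0 1 - M 0 0 : ℝ)) := by
  rw [isMixed_two] at hy hy'
  have h1 : y 1 = 1 - y 0 := by linarith
  have h2 : y' 1 = 1 - y' 0 := by linarith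
  simp only [payoff, Fin.sum_univ_two, h1, h2]
  ring

/-- A pure profile without profitable pure deviations is an equilibrium; in `Fin 2`, `1 - i` is the
strategy other than `i`. -/
lemma isNash_pure (A B : Matrix (Fin 2) (Fin 2) ℤ) (i j : Fin 2)
    (hA : A (1 - i) j ≤ A i j) (hB : B i (1 - j) ≤ B i j) :
    IsNash A B (pureStrat i) (pureStrat j) := by
  refine ⟨isMixed_pure_s18 i, isMixed_pure_s18 j, fun x' hx' => ?_, fun y' hy' => ?_⟩
  · rw [← sub_nonpos, payoff_sub_left A (isMixed_pure_s18 i) hx']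
    rw [isMixed_two] at hx'
    obtain ⟨h0, h1, h2⟩ := hx'
    have hA' : (A (1 - i) j : ℝ) ≤ A i j := by exact_mod_cast hA
    fin_cases i <;> fin_cases j <;> simp [pureStrat, -Int.cast_le] at hA' ⊢ <;> nlinarith
  · rw [← sub_nonpos, payoff_sub_right B (isMixed_pure_s18 j) hy']
    rw [isMixed_two] at hy'
    obtain ⟨h0, h1, h2⟩ := hy'
    have hB' : (B i (1 - j) : ℝ) ≤ B i j := by exact_mod_cast hB
    fin_cases i <;> fin_cases j <;> simp [pureStrat, -Int.cast_le] at hB' ⊢ <;> nlinarith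

/-- In a cyclic `2 × 2` game the equilibria are exactly the mixed profiles that make both players
indifferent between their two pure strategies. -/
lemma isNash_iff (A B : Matrix (Fin 2) (Fin 2) ℤ) (hA : A 1 0 < A 0 0) (hB : B 0 0 < B 0 1)
    (hB' : B 1 1 < B 1 0) (hA' : A 0 1 < A 1 1) (x y : Fin 2 → ℝ) :
    IsNash A B x y ↔ IsMixed x ∧ IsMixed y ∧
      y 0 * (A 0 0 - A 1 0 : ℝ) = y 1 * (A 1 1 - A 0 1 : ℝ) ∧
      x 1 * (B 1 0 - B 1 1 : ℝ) = x 0 * (B 0 1 - B 0 0 : ℝ) := by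
  constructor
  · rintro ⟨hx, hy, h1, h2⟩
    refine ⟨hx, hy, ?_⟩
    have e0 := payoff_sub_left A (y := y) hx (isMixed_pure_s18 0)
    have e1 := payoff_sub_left A (y := y) hx (isMixed_pure_s18 1)
    have f0 := payoff_sub_right B (x := x) hy (isMixed_pure_s18 0)
    have f1 := payoff_sub_right B (x := x) hy (isMixed_pure_s18 1)
    have h10 := h1 _ (isMixed_pure_s18 0)
    have h11 := h1 _ (isMixed_pure_s18 1)
    have h20 := h2 _ (isMixed_pure_s18 0)
    have h21 := h2 _ (isMixed_pure_s18 1)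
    rw [isMixed_two] at hx hy
    obtain ⟨x0, x1, xs⟩ := hx
    obtain ⟨y0, y1, ys⟩ := hy
    have ha : (0 : ℝ) < A 0 0 - A 1 0 := by rw [sub_pos]; exact_mod_cast hA
    have hb : (0 : ℝ) < B 0 1 - B 0 0 := by rw [sub_pos]; exact_mod_cast hB
    have hc : (0 : ℝ) < A 1 1 - A 0 1 := by rw [sub_pos]; exact_mod_cast hA'
    have hd : (0 : ℝ) < B 1 0 - B 1 1 := by rw [sub_pos]; exact_mod_cast hB'
    generalize (A 0 0 - A 1 0 : ℝ) = a at *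
    generalize (B 0 1 - B 0 0 : ℝ) = b at *
    generalize (A 1 1 - A 0 1 : ℝ) = c at *
    generalize (B 1 0 - B 1 1 : ℝ) = d at *
    have hx1 : x 1 = 1 - x 0 := by linarith
    have hy1 : y 1 = 1 - y 0 := by linarith
    simp only [pureStrat, if_true, Fin.isValue, zero_ne_one, if_false] at e0 e1 f0 f1
    rw [hx1] at f0 f1 ⊢
    rw [hy1] at e0 e1 ⊢
    have E0 : (1 - x 0) * (y 0 * a - (1 - y 0) * c) ≤ 0 := by linarith
    have E1 : 0 ≤ x 0 * (y 0 * a - (1 - y 0) * c) := by linarith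
    have F0 : (1 - y 0) * ((1 - x 0) * d - x 0 * b) ≤ 0 := by linarith
    have F1 : 0 ≤ y 0 * ((1 - x 0) * d - x 0 * b) := by linarith
    -- A strict preference of player 1 makes `x` pure, hence player 2's preference strict and `y`
    -- pure, which reverses player 1's preference.
    have hE : y 0 * a - (1 - y 0) * c = 0 := by
      rcases lt_trichotomy (y 0 * a - (1 - y 0) * c) 0 with h | h | h
      · have hp : x 0 = 0 := by nlinarith
        rw [hp] at F0
        have hq : y 0 = 1 := by nlinarith
        rw [hq] at h
        linarith
      · exact h
      · have hp : x 0 = 1 := by nlinarith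
        rw [hp] at F1
        have hq : y 0 = 0 := by nlinarith
        rw [hq] at h
        linarith
    have hF : (1 - x 0) * d - x 0 * b = 0 := by
      rcases lt_trichotomy ((1 - x 0) * d - x 0 * b) 0 with h | h | h
      · have hq : y 0 = 0 := by nlinarith
        rw [hq] at hE
        linarith
      · exact h
      · have hq : y 0 = 1 := by nlinarith
        rw [hq] at hE
        linarith
    exact ⟨by linarith, by linarith⟩
  · rintro ⟨hx, hy, hE, hF⟩
    refine ⟨hx, hy, fun x' hx' => ?_, fun y' hy' => ?_⟩
    · rw [← sub_nonpos, payoff_sub_left A hx hx', hE]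
      simp
    · rw [← sub_nonpos, payoff_sub_right B hy hy', hF]
      simp

/-- The strategy `(v, u) / (u + v)`, for positive integers `u` and `v`. -/
def balanced (u v : ℤ) : Fin 2 → ℚ := ![v / (u + v), u / (u + v)]

lemma balanced_spec {u v : ℤ} (hu : 0 < u) (hv : 0 < v) :
    IsMixed (ratStrat (balanced u v)) ∧
      ratStrat (balanced u v) 0 * u = ratStrat (balanced u v) 1 * v := by
  have hu' : (0 : ℝ) < u := by exact_mod_cast hu
  have hv' : (0 : ℝ) < v := by exact_mod_cast hv
  rw [isMixed_two]
  simp only [ratStrat, balanced, Matrix.cons_val_zero, Matrix.cons_val_one]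
  push_cast
  refine ⟨⟨by positivity, by positivity, ?_⟩, ?_⟩ <;> field_simp
  ring

lemma eq_balanced {u v : ℤ} (hu : 0 < u) (hv : 0 < v) {x : Fin 2 → ℚ}
    (hx : IsMixed (ratStrat x)) (h : ratStrat x 0 * u = ratStrat x 1 * v) :
    x = balanced u v := by
  have hs := (isMixed_two.1 hx).2.2
  simp only [ratStrat] at hs h
  have hs' : x 0 + x 1 = 1 := by exact_mod_cast hs
  have h' : x 0 * u = x 1 * v := by exact_mod_cast h
  have hpos : (u + v : ℚ) ≠ 0 := by
    have : (0 : ℚ) < u + v := by exact_mod_cast add_pos hu hv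
    exact this.ne'
  funext i
  fin_cases i
  · change x 0 = v / (u + v)
    rw [eq_div_iff hpos]
    linear_combination h' + v * hs'
  · change x 1 = u / (u + v)
    rw [eq_div_iff hpos]
    linear_combination -h' + u * hs'

lemma Cx_eq {u v : ℤ} (hu : 0 < u) (hv : 0 < v) :
    (Cx (balanced u v) : ℤ) = (u + v) / (Int.gcd u v : ℤ) := by
  have hg : 0 < Int.gcd u v := Int.gcd_pos_of_ne_zero_left _ hu.ne'
  obtain ⟨u', v', hco, hu', hv'⟩ := Int.exists_gcd_one hg
  set g : ℤ := (Int.gcd u v : ℤ) with hgdef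
  have hg' : 0 < g := Int.natCast_pos.2 hg
  have pu : 0 < u' := by
    rw [hu'] at hu
    exact pos_of_mul_pos_left hu hg'.le
  have pv : 0 < v' := by
    rw [hv'] at hv
    exact pos_of_mul_pos_left hv hg'.le
  have hgQ : (g : ℚ) ≠ 0 := by exact_mod_cast hg'.ne'
  have hsQ : (u' + v' : ℚ) ≠ 0 := by
    have : (0 : ℚ) < u' + v' := by exact_mod_cast add_pos pu pv
    exact this.ne'
  have hcop : IsCoprime u' v' := Int.isCoprime_iff_gcd_eq_one.2 hco
  have e0 : (v / (u + v) : ℚ) = (v' : ℚ) / ((u' + v' : ℤ) : ℚ) := by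
    rw [hu', hv']; push_cast; field_simp
  have e1 : (u / (u + v) : ℚ) = (u' : ℚ) / ((u' + v' : ℤ) : ℚ) := by
    rw [hu', hv']; push_cast; field_simp
  have d0 : ((v / (u + v) : ℚ).den : ℤ) = u' + v' := by
    rw [e0]
    refine Rat.den_div_eq_of_coprime (add_pos pu pv) ?_
    rw [← Int.isCoprime_iff_nat_coprime]
    exact (by simpa using hcop.symm.add_mul_left_right 1 : IsCoprime v' (u' + v'))
  have d1 : ((u / (u + v) : ℚ).den : ℤ) = u' + v' := by
    rw [e1]
    refine Rat.den_div_eq_of_coprime (add_pos pu pv) ?_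
    rw [← Int.isCoprime_iff_nat_coprime]
    exact (by simpa [add_comm] using hcop.add_mul_left_right 1 : IsCoprime u' (u' + v'))
  have hden : (u / (u + v) : ℚ).den = (v / (u + v) : ℚ).den := by
    exact_mod_cast d1.trans d0.symm
  have hC : Cx (balanced u v) = (v / (u + v) : ℚ).den := by
    simp [Cx, balanced, Fin.univ_succ, hden]
  rw [hC, d0, show u + v = (u' + v') * g by rw [add_mul, ← hu', ← hv'],
    Int.mul_ediv_cancel _ hg'.ne']

/-- For a `2×2` game `(A,B)` with no pure Nash equilibrium and `A₁₁ > A₂₁`: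
`B₁₂ > B₁₁`, `B₂₁ > B₂₂`, `A₂₂ > A₁₂`, and
`C₁(A,B) = (B₁₂ − B₁₁ + B₂₁ − B₂₂) / gcd(B₁₂ − B₁₁, B₂₁ − B₂₂)`,
`C₂(A,B) = (A₁₁ − A₂₁ + A₂₂ − A₁₂) / gcd(A₁₁ − A₂₁, A₂₂ − A₁₂)`
(matrix indices are 0-based in this formalization). -/
theorem statement18 (A B : Matrix (Fin 2) (Fin 2) ℤ)
    (hpure : ¬ ∃ i j : Fin 2, IsNash A B (pureStrat i) (pureStrat j))
    (hA : A 1 0 < A 0 0) :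
    B 0 0 < B 0 1 ∧ B 1 1 < B 1 0 ∧ A 0 1 < A 1 1 ∧
      (C1 A B : ℤ) = (B 0 1 - B 0 0 + B 1 0 - B 1 1) /
        (Int.gcd (B 0 1 - B 0 0) (B 1 0 - B 1 1) : ℤ) ∧
      (C2 A B : ℤ) = (A 0 0 - A 1 0 + A 1 1 - A 0 1) /
        (Int.gcd (A 0 0 - A 1 0) (A 1 1 - A 0 1) : ℤ) := by
  have hb : B 0 0 < B 0 1 := by
    by_contra! h
    exact hpure ⟨0, 0, isNash_pure A B 0 0 hA.le h⟩
  have hc : A 0 1 < A 1 1 := by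
    by_contra! h
    exact hpure ⟨0, 1, isNash_pure A B 0 1 h hb.le⟩
  have hd : B 1 1 < B 1 0 := by
    by_contra! h
    exact hpure ⟨1, 1, isNash_pure A B 1 1 hc.le h⟩
  have key : ∀ x y : Fin 2 → ℚ, IsNash A B (ratStrat x) (ratStrat y) ↔
      x = balanced (B 0 1 - B 0 0) (B 1 0 - B 1 1) ∧
      y = balanced (A 0 0 - A 1 0) (A 1 1 - A 0 1) := by
    intro x y
    rw [isNash_iff A B hA hb hd hc]
    constructor
    · rintro ⟨hx, hy, h1, h2⟩
      refine ⟨eq_balanced (sub_pos.2 hb) (sub_pos.2 hd) hx ?_,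
        eq_balanced (sub_pos.2 hA) (sub_pos.2 hc) hy ?_⟩
      · push_cast; exact h2.symm
      · push_cast; exact h1
    · rintro ⟨rfl, rfl⟩
      have hx := balanced_spec (sub_pos.2 hb) (sub_pos.2 hd)
      have hy := balanced_spec (sub_pos.2 hA) (sub_pos.2 hc)
      refine ⟨hx.1, hy.1, ?_, ?_⟩
      · simpa only [Int.cast_sub] using hy.2
      · simpa only [Int.cast_sub] using hx.2.symm
  have h1 : C1 A B = Cx (balanced (B 0 1 - B 0 0) (B 1 0 - B 1 1)) := by
    simp only [C1, key]
    refine (congrArg sInf ?_).trans (csInf_singleton _)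
    ext q
    simp [eq_comm]
  have h2 : C2 A B = Cx (balanced (A 0 0 - A 1 0) (A 1 1 - A 0 1)) := by
    simp only [C2, key]
    refine (congrArg sInf ?_).trans (csInf_singleton _)
    ext q
    simp [eq_comm]
  refine ⟨hb, hd, hc, ?_, ?_⟩
  · rw [h1, Cx_eq (sub_pos.2 hb) (sub_pos.2 hd), ← add_sub_assoc]
  · rw [h2, Cx_eq (sub_pos.2 hA) (sub_pos.2 hc), ← add_sub_assoc]
end
end
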